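/- Let d ≥ 3, α ∈ (0,1) with α > p_c. Then lim_{M → ∞} π_α(E_M) = 1, where E_M is the event that the restriction of ξ to B(M) has a unique open cluster of ℓ∞-diameter at least M, and this cluster intersects every face of B(M). -/

import Mathlib

open MeasureTheory

/-!
STATEMENT 10: Let `d ≥ 3` and `α ∈ (0,1)` with `α > p_c`. Then
`lim_{M → ∞} π_α(E_M) = 1`, where `E_M` is the event that `ξ` restricted to `B(M)` has
a unique open cluster of `ℓ∞`-diameter at least `M`, and this cluster intersects every
face of `B(M)`.

Configurations are modelled as `(Fin d → ℤ) → Bool` (`true` = `1` = open). Since this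
version of Mathlib has no infinite product measure, the product Bernoulli(`p`) measure
`π_p` on `{0,1}^(ℤ^d)` is characterized by its (defining) values on cylinder events;
this characterization determines the measure uniquely. The critical parameter `p_c` is
the supremum of those `p ∈ [0,1]` for which (any) such product measure gives
probability `0` to the percolation event.
-/

/-- The `ℓ∞` norm of a point of `ℤ^d`, as a natural number. -/
def normInf {d : ℕ} (x : Fin d → ℤ) : ℕ := Finset.univ.sup fun i => (x i).natAbs

/-- The `ℓ¹` norm of a point of `ℤ^d`, as a natural number. -/
def norm1 {d : ℕ} (x : Fin d → ℤ) : ℕ := ∑ i, (x i).natAbs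

/-- The `ℓ∞`-ball `B(x, r)` in `ℤ^d`. -/
def box {d : ℕ} (x : Fin d → ℤ) (r : ℕ) : Set (Fin d → ℤ) := {y | normInf (y - x) ≤ r}

/-- `x` and `y` are connected by a nearest-neighbor path of open sites staying in `S`. -/
def openConnIn (d : ℕ) (S : Set (Fin d → ℤ)) (ξ : (Fin d → ℤ) → Bool)
    (x y : Fin d → ℤ) : Prop :=
  ∃ (n : ℕ) (γ : ℕ → (Fin d → ℤ)), γ 0 = x ∧ γ n = y ∧
    (∀ i ≤ n, γ i ∈ S ∧ ξ (γ i) = true) ∧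
    ∀ i < n, norm1 (γ (i + 1) - γ i) = 1

/-- `C` is an open cluster of `ξ` restricted to `S`: a connected component (for
nearest-neighbor adjacency within `S`) of the set of open sites of `S`. -/
def IsOpenClusterIn (d : ℕ) (S : Set (Fin d → ℤ)) (ξ : (Fin d → ℤ) → Bool)
    (C : Set (Fin d → ℤ)) : Prop :=
  ∃ x ∈ S, ξ x = true ∧ C = {y | openConnIn d S ξ x y}

/-- The set `C` has `ℓ∞`-diameter at least `M`. -/
def DiamGE {d : ℕ} (M : ℕ) (C : Set (Fin d → ℤ)) : Prop :=
  ∃ u ∈ C, ∃ v ∈ C, M ≤ normInf (u - v)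

/-- `C` intersects every face of the box `B(z, M)`. -/
def HitsAllFaces {d : ℕ} (z : Fin d → ℤ) (M : ℕ) (C : Set (Fin d → ℤ)) : Prop :=
  ∀ j : Fin d, ∀ ε : ℤ, (ε = 1 ∨ ε = -1) → ∃ w ∈ C, w j - z j = ε * M

/-- The event `E_M` (for the box `B(z, M)`): `ξ` restricted to `B(z, M)` has a unique
open cluster of diameter `≥ M`, and moreover this cluster intersects all the faces of
`B(z, M)`. -/
def SpecialEvent (d : ℕ) (z : Fin d → ℤ) (M : ℕ) (ξ : (Fin d → ℤ) → Bool) : Prop :=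
  ∃ C : Set (Fin d → ℤ),
    IsOpenClusterIn d (box z M) ξ C ∧ DiamGE M C ∧ HitsAllFaces z M C ∧
    ∀ C' : Set (Fin d → ℤ),
      IsOpenClusterIn d (box z M) ξ C' → DiamGE M C' → C' = C

/-- `Perc`: the set of configurations containing an infinite nearest-neighbor path
(with pairwise distinct vertices) of open sites. -/
def Perc (d : ℕ) : Set ((Fin d → ℤ) → Bool) :=
  {ξ | ∃ γ : ℕ → (Fin d → ℤ), Function.Injective γ ∧
    (∀ i, norm1 (γ (i + 1) - γ i) = 1) ∧ ∀ i, ξ (γ i) = true}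

/-- `μ` is the product Bernoulli(`p`) measure `π_p` on `{0,1}^(ℤ^d)`: it is a
probability measure whose cylinder probabilities are the i.i.d. Bernoulli(`p`) ones.
(These conditions determine `μ` uniquely.) -/
def IsBernoulliProduct (d : ℕ) (p : ℝ) (μ : Measure ((Fin d → ℤ) → Bool)) : Prop :=
  IsProbabilityMeasure μ ∧
  ∀ (F : Finset (Fin d → ℤ)) (e : (Fin d → ℤ) → Bool),
    μ {ξ | ∀ x ∈ F, ξ x = e x} =
      ∏ x ∈ F, (if e x then ENNReal.ofReal p else ENNReal.ofReal (1 - p))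

/-- The critical probability `p_c` of Bernoulli site percolation on `ℤ^d`:
`p_c = sup {p : π_p(Perc) = 0}`. -/
noncomputable def pcrit (d : ℕ) : ℝ :=
  sSup {p : ℝ | p ∈ Set.Icc (0 : ℝ) 1 ∧
    ∀ μ : Measure ((Fin d → ℤ) → Bool), IsBernoulliProduct d p μ → μ (Perc d) = 0}

/-!
Fix `p ∈ (p_c, α)`. Following Grimmett and Marstrand, percolation at `p` makes a large open seed
likely to be joined to further seeds on each part of the boundary of a big box. The exploration of
an open cluster spoils the sites around the explored region, so the configuration of density `α`
is obtained as the union of independent layers, the bottom one of density `p`, and a site that has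
been looked at before is looked at in a fresh layer. Boundedly many layers suffice, because each
site takes part in boundedly many renormalization steps. The steps dominate a coarse site
percolation of density close to one, in which the vertices of a planar square are joined with
probability bounded below; so any two sites of equal height in a slab of thickness `k₀` are joined
with probability at least `c`.

Independence of disjoint slabs finishes the proof. Stacked slabs produce, outside an event of
exponentially small probability, an open crossing of `B(M)` between opposite corners of some slab,
and two disjoint clusters climbing through `M` levels have a chance `α * c` to merge in each slab of
`k₀ + 1` levels. By a union bound no two clusters of large diameter stay separate.
-/

namespace Percolation

/-! ### Bernoulli product measures -/

/-- The event `A` is determined by the coordinates in `s`. -/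
def DeterminedBy {ι : Type*} {X : ι → Type*} (A : Set (∀ i, X i)) (s : Set ι) : Prop :=
  DependsOn (· ∈ A) s

namespace DeterminedBy

variable {ι : Type*} {X : ι → Type*} {A B : Set (∀ i, X i)} {s t : Set ι}

lemma of_imp (h : ∀ ⦃ξ ξ' : ∀ i, X i⦄, (∀ i ∈ s, ξ i = ξ' i) → ξ ∈ A → ξ' ∈ A) :
    DeterminedBy A s :=
  fun _ _ hξ => propext ⟨h hξ, h fun i hi => (hξ i hi).symm⟩

lemma mem_iff (h : DeterminedBy A s) {ξ ξ' : ∀ i, X i} (hξ : ∀ i ∈ s, ξ i = ξ' i) :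
    ξ ∈ A ↔ ξ' ∈ A :=
  iff_of_eq (h hξ)

lemma mono (h : DeterminedBy A s) (hst : s ⊆ t) : DeterminedBy A t := DependsOn.mono hst h

lemma compl (h : DeterminedBy A s) : DeterminedBy Aᶜ s :=
  of_imp fun _ _ hξ hA hA' => hA ((h.mem_iff hξ).2 hA')

lemma inter (hA : DeterminedBy A s) (hB : DeterminedBy B s) : DeterminedBy (A ∩ B) s :=
  of_imp fun _ _ hξ => And.imp (hA.mem_iff hξ).1 (hB.mem_iff hξ).1

lemma coord (i : ι) (b : X i) : DeterminedBy {ξ : ∀ i, X i | ξ i = b} {i} :=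
  of_imp fun _ _ hξ h => (hξ i rfl).symm.trans h

lemma iInter {κ : Sort*} {C : κ → Set (∀ i, X i)} (h : ∀ k, DeterminedBy (C k) s) :
    DeterminedBy (⋂ k, C k) s :=
  of_imp fun _ _ hξ hA => Set.mem_iInter.2 fun k => ((h k).mem_iff hξ).1 (Set.mem_iInter.1 hA k)

lemma preimage_image_restrict {F : Finset ι} (h : DeterminedBy A F) :
    F.restrict ⁻¹' (F.restrict '' A) = A := by
  refine Set.Subset.antisymm ?_ (Set.subset_preimage_image _ _)
  rintro ξ ⟨ξ', hξ', e⟩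
  exact (h.mem_iff fun i hi => congrFun e ⟨i, hi⟩).1 hξ'

section Measurable

variable [∀ i, MeasurableSpace (X i)] [∀ i, Finite (X i)] [∀ i, MeasurableSingletonClass (X i)]

lemma measurableSet_iSup_comap (h : DeterminedBy A s) (hs : s.Finite) :
    MeasurableSet[⨆ i ∈ s, MeasurableSpace.comap (fun ξ : ∀ i, X i => ξ i) inferInstance] A := by
  lift s to Finset ι using hs
  rw [← h.preimage_image_restrict]
  refine (@measurable_pi_iff _ _ _ (_) _ _).2 (fun i => ?_)
    (Set.toFinite (s.restrict '' A)).measurableSet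
  exact Measurable.mono (comap_measurable _)
    (le_iSup₂_of_le (f := fun i _ => MeasurableSpace.comap (fun ξ : ∀ i, X i => ξ i) _)
      i.1 i.2 le_rfl) le_rfl

lemma measurableSet (h : DeterminedBy A s) (hs : s.Finite) : MeasurableSet A :=
  iSup₂_le (fun i _ => (measurable_pi_apply i).comap_le) _ (h.measurableSet_iSup_comap hs)

lemma measureReal_infinitePi_inter {μ : ∀ i, Measure (X i)} [∀ i, IsProbabilityMeasure (μ i)]
    (hA : DeterminedBy A s) (hB : DeterminedBy B t) (hs : s.Finite) (ht : t.Finite)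
    (hst : Disjoint s t) :
    (Measure.infinitePi μ).real (A ∩ B) =
      (Measure.infinitePi μ).real A * (Measure.infinitePi μ).real B := by
  lift s to Finset ι using hs
  lift t to Finset ι using ht
  have hindep : ProbabilityTheory.IndepFun s.restrict t.restrict (Measure.infinitePi μ) :=
    (ProbabilityTheory.iIndepFun_infinitePi (X := fun _ x => x) fun _ => measurable_id
      ).indepFun_finset s t (Finset.disjoint_coe.1 hst) fun i => measurable_pi_apply i
  have := hindep.measure_inter_preimage_eq_mul _ _
    (Set.toFinite (s.restrict '' A)).measurableSet (Set.toFinite (t.restrict '' B)).measurableSet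
  rw [hA.preimage_image_restrict, hB.preimage_image_restrict] at this
  simp [Measure.real, this]

end Measurable

end DeterminedBy

lemma infinitePi_map_comp {ι κ : Type*} {X : ι → Type*} [∀ i, MeasurableSpace (X i)]
    (μ : ∀ i, Measure (X i)) [∀ i, IsProbabilityMeasure (μ i)] {f : κ → ι}
    (hf : Function.Injective f) :
    (Measure.infinitePi μ).map (fun ξ k => ξ (f k)) = Measure.infinitePi fun k => μ (f k) := by
  classical
  refine Measure.eq_infinitePi _ fun s t ht => ?_
  rw [Measure.map_apply (by fun_prop) (MeasurableSet.pi s.countable_toSet fun k _ => ht k)]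
  let T : ∀ i, Set (X i) := fun i => {x | ∀ k (h : f k = i), h ▸ x ∈ t k}
  have hT : ∀ k, T (f k) = t k := fun k => by
    ext x
    refine ⟨fun h => h k rfl, fun h l hl => ?_⟩
    obtain rfl := hf hl
    exact h
  have hpre : (fun (ξ : ∀ i, X i) k => ξ (f k)) ⁻¹' (s : Set κ).pi t =
      (s.image f : Set ι).pi T := by
    ext ξ
    simp [Set.mem_pi, hT]
  rw [hpre, Measure.infinitePi_pi μ, Finset.prod_image hf.injOn]
  · simp only [hT]
  · simpa [hT] using fun k _ => ht k

/-- The law of independent Boolean variables `ξ i`, each equal to `true` with probability `w i`. -/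
noncomputable def bernoulliProd {ι : Type*} (w : ι → unitInterval) : Measure (ι → Bool) :=
  Measure.infinitePi fun i => ProbabilityTheory.bernoulliMeasure true false (w i)

local notation "ℙ[" w "]" => Measure.real (bernoulliProd w)

instance {ι : Type*} (w : ι → unitInterval) : IsProbabilityMeasure (bernoulliProd w) := by
  unfold bernoulliProd; infer_instance

lemma bernoulliMeasure_singleton (p : unitInterval) (b : Bool) :
    ProbabilityTheory.bernoulliMeasure true false p {b} =
      if b then ENNReal.ofReal p else ENNReal.ofReal (1 - p) := by
  cases b <;>
    simp [ENNReal.ofReal_eq_coe_nnreal p.2.1, ENNReal.ofReal_eq_coe_nnreal (sub_nonneg.2 p.2.2)] <;>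
    rfl

lemma eq_bernoulliProd_of_cylinder {ι : Type*} {w : ι → unitInterval} {μ : Measure (ι → Bool)}
    [IsProbabilityMeasure μ]
    (h : ∀ (F : Finset ι) (e : ι → Bool), μ {ξ | ∀ x ∈ F, ξ x = e x} =
      ∏ x ∈ F, if e x then ENNReal.ofReal (w x) else ENNReal.ofReal (1 - w x)) :
    μ = bernoulliProd w := by
  classical
  refine IsProjectiveLimit.unique (fun F => Measure.ext_of_singleton fun f => ?_)
    (Measure.isProjectiveLimit_infinitePi _)
  have hcyl : (F.restrict ⁻¹' {f} : Set (ι → Bool)) =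
      {ξ | ∀ x ∈ F, ξ x = if hx : x ∈ F then f ⟨x, hx⟩ else true} := by
    ext ξ
    simp only [Set.mem_preimage, Set.mem_singleton_iff, Set.mem_ofPred_eq, funext_iff,
      Finset.restrict, Subtype.forall]
    exact forall₂_congr fun x hx => by rw [dif_pos hx]
  rw [Measure.map_apply (Finset.measurable_restrict F) (measurableSet_singleton _),
    Measure.pi_singleton, hcyl, h, ← Finset.prod_coe_sort]
  exact Finset.prod_congr rfl fun x _ => by simp [bernoulliMeasure_singleton]

section Real

variable {ι κ : Type*} {w : ι → unitInterval} {A B : Set (ι → Bool)} {s t : Set ι}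

lemma prob_inter_of_disjoint (hA : DeterminedBy A s) (hB : DeterminedBy B t) (hs : s.Finite)
    (ht : t.Finite) (hst : Disjoint s t) : ℙ[w] (A ∩ B) = ℙ[w] A * ℙ[w] B :=
  hA.measureReal_infinitePi_inter hB hs ht hst

lemma prob_preimage_comp (w : ι → unitInterval) {f : κ → ι} (hf : Function.Injective f)
    {A : Set (κ → Bool)} (hA : MeasurableSet A) :
    ℙ[w] {ξ | (fun k => ξ (f k)) ∈ A} = ℙ[fun k => w (f k)] A := by
  have hmap : (bernoulliProd w).map (fun ξ k => ξ (f k)) = bernoulliProd fun k => w (f k) :=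
    infinitePi_map_comp _ hf
  rw [← hmap, map_measureReal_apply (by fun_prop) hA]
  rfl

lemma prob_cylinder (w : ι → unitInterval) (F : Finset ι) (e : ι → Bool) :
    ℙ[w] {ξ | ∀ x ∈ F, ξ x = e x} = ∏ x ∈ F, if e x then (w x : ℝ) else 1 - w x := by
  have : {ξ : ι → Bool | ∀ x ∈ F, ξ x = e x} = Set.pi F fun x => {e x} := by
    ext; simp [Set.mem_pi]
  rw [this, Measure.real, bernoulliProd,
    Measure.infinitePi_pi _ fun _ _ => measurableSet_singleton _, ENNReal.toReal_prod]
  refine Finset.prod_congr rfl fun x _ => ?_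
  rw [bernoulliMeasure_singleton]
  split_ifs
  · exact ENNReal.toReal_ofReal (w x).2.1
  · exact ENNReal.toReal_ofReal (sub_nonneg.2 (w x).2.2)

lemma prob_coord (w : ι → unitInterval) (i : ι) (b : Bool) :
    ℙ[w] {ξ | ξ i = b} = if b then (w i : ℝ) else 1 - w i := by
  simpa using prob_cylinder w {i} fun _ => b

lemma one_le_prob_add_prob_compl (A : Set (ι → Bool)) : 1 ≤ ℙ[w] A + ℙ[w] Aᶜ := by
  have := measureReal_union_le (μ := bernoulliProd w) A Aᶜ
  rwa [Set.union_compl_self, probReal_univ] at this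

/-- The events `A` and `B` are determined by two disjoint finite sets of coordinates. -/
def DisjointlyDetermined (A B : Set (ι → Bool)) : Prop :=
  ∃ s t : Set ι, s.Finite ∧ t.Finite ∧ Disjoint s t ∧ DeterminedBy A s ∧ DeterminedBy B t

namespace DisjointlyDetermined

lemma measurableSet_left (h : DisjointlyDetermined A B) : MeasurableSet A := by
  obtain ⟨s, -, hs, -, -, hA, -⟩ := h
  exact hA.measurableSet hs

lemma measurableSet_right (h : DisjointlyDetermined A B) : MeasurableSet B := by
  obtain ⟨-, t, -, ht, -, -, hB⟩ := h
  exact hB.measurableSet ht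

lemma prob_inter (h : DisjointlyDetermined A B) : ℙ[w] (A ∩ B) = ℙ[w] A * ℙ[w] B := by
  obtain ⟨s, t, hs, ht, hst, hA, hB⟩ := h
  exact prob_inter_of_disjoint hA hB hs ht hst

lemma univ_right (h : DisjointlyDetermined A B) : DisjointlyDetermined A Set.univ := by
  obtain ⟨s, t, hs, ht, hst, hA, -⟩ := h
  exact ⟨s, t, hs, ht, hst, hA, .of_imp fun _ _ _ _ => trivial⟩

end DisjointlyDetermined

lemma prob_biInter_of_pairwiseDisjoint (I : Finset κ) {A : κ → Set (ι → Bool)} {s : κ → Set ι}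
    (hs : ∀ k ∈ I, (s k).Finite) (hA : ∀ k ∈ I, DeterminedBy (A k) (s k))
    (hd : (I : Set κ).PairwiseDisjoint s) :
    ℙ[w] (⋂ k ∈ I, A k) = ∏ k ∈ I, ℙ[w] (A k) := by
  classical
  induction I using Finset.induction_on with
  | empty => simp
  | insert a I ha ih =>
    simp only [Finset.forall_mem_insert] at hs hA
    rw [Finset.coe_insert] at hd
    rw [Finset.prod_insert ha, Finset.set_biInter_insert,
      ← ih hs.2 hA.2 (hd.subset (Set.subset_insert _ _))]
    exact prob_inter_of_disjoint hA.1
      (.iInter fun k => .iInter fun hk => (hA.2 k hk).mono (Set.subset_biUnion_of_mem (u := s) hk))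
      hs.1 (I.finite_toSet.biUnion hs.2) (Set.disjoint_iUnion₂_right.2 fun k hk =>
        hd (Set.mem_insert _ _) (Set.mem_insert_of_mem _ hk) (by rintro rfl; exact ha hk))

section Conditioning

/- In the next lemmas, `C (F ξ)` is independent of the value of `F`, so that `ρ` bounds the
conditional probability of `C (F ξ)` given `F`. -/

variable {F : (ι → Bool) → κ} {C : κ → Set (ι → Bool)} {G : κ → Prop} {ρ : ℝ}

lemma setOf_and_mem_eq_biUnion (F : (ι → Bool) → κ) (C : κ → Set (ι → Bool)) (G : κ → Prop) :
    {ξ | G (F ξ) ∧ ξ ∈ C (F ξ)} = ⋃ k ∈ {k ∈ Set.range F | G k}, {ξ | F ξ = k} ∩ C k := by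
  ext ξ
  simp only [Set.mem_iUnion₂, Set.mem_inter_iff, Set.mem_ofPred_eq]
  exact ⟨fun h => ⟨F ξ, ⟨⟨ξ, rfl⟩, h.1⟩, rfl, h.2⟩, by rintro ⟨_, ⟨-, hG⟩, rfl, hC⟩; exact ⟨hG, hC⟩⟩

lemma measurableSet_setOf_and_mem (hF : (Set.range F).Finite)
    (h : ∀ ξ, G (F ξ) → DisjointlyDetermined {ξ' | F ξ' = F ξ} (C (F ξ))) :
    MeasurableSet {ξ | G (F ξ) ∧ ξ ∈ C (F ξ)} := by
  rw [setOf_and_mem_eq_biUnion]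
  refine (hF.subset (Set.sep_subset _ _)).measurableSet_biUnion ?_
  rintro _ ⟨⟨ξ, rfl⟩, hG⟩
  exact (h ξ hG).measurableSet_left.inter (h ξ hG).measurableSet_right

open Classical in
lemma prob_and_mem_eq_sum (hF : (Set.range F).Finite)
    (h : ∀ ξ, G (F ξ) → DisjointlyDetermined {ξ' | F ξ' = F ξ} (C (F ξ))) :
    ℙ[w] {ξ | G (F ξ) ∧ ξ ∈ C (F ξ)} =
      ∑ k ∈ hF.toFinset with G k, ℙ[w] {ξ | F ξ = k} * ℙ[w] (C k) := by
  have hunion : {ξ | G (F ξ) ∧ ξ ∈ C (F ξ)} =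
      ⋃ k ∈ hF.toFinset.filter G, {ξ | F ξ = k} ∩ C k := by
    simp only [setOf_and_mem_eq_biUnion, Finset.mem_filter, Set.Finite.mem_toFinset,
      Set.mem_ofPred_eq]
  have hmem : ∀ k ∈ hF.toFinset.filter G, DisjointlyDetermined {ξ | F ξ = k} (C k) := by
    simp only [Finset.mem_filter, Set.Finite.mem_toFinset]
    rintro _ ⟨⟨ξ, rfl⟩, hG⟩
    exact h ξ hG
  rw [hunion, measureReal_biUnion_finset]
  · exact Finset.sum_congr rfl fun k hk => (hmem k hk).prob_inter
  · exact fun k _ l _ hkl => Set.disjoint_left.2 fun ξ hk hl => hkl (hk.1.symm.trans hl.1)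
  · exact fun k hk => (hmem k hk).measurableSet_left.inter (hmem k hk).measurableSet_right

open Classical in
lemma prob_setOf_eq_sum (hF : (Set.range F).Finite)
    (h : ∀ ξ, G (F ξ) → DisjointlyDetermined {ξ' | F ξ' = F ξ} (C (F ξ))) :
    ℙ[w] {ξ | G (F ξ)} = ∑ k ∈ hF.toFinset with G k, ℙ[w] {ξ | F ξ = k} := by
  simpa using prob_and_mem_eq_sum (w := w) (C := fun _ => Set.univ) hF
    fun ξ hξ => (h ξ hξ).univ_right

lemma mul_prob_le_prob_and_mem (hF : (Set.range F).Finite)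
    (h : ∀ ξ, G (F ξ) → DisjointlyDetermined {ξ' | F ξ' = F ξ} (C (F ξ)))
    (hρ : ∀ ξ, G (F ξ) → ρ ≤ ℙ[w] (C (F ξ))) :
    ρ * ℙ[w] {ξ | G (F ξ)} ≤ ℙ[w] {ξ | G (F ξ) ∧ ξ ∈ C (F ξ)} := by
  rw [prob_and_mem_eq_sum hF h, prob_setOf_eq_sum hF h, Finset.mul_sum]
  refine Finset.sum_le_sum fun k hk => ?_
  obtain ⟨⟨ξ, rfl⟩, hG⟩ : k ∈ Set.range F ∧ G k := by simpa using hk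
  rw [mul_comm]
  exact mul_le_mul_of_nonneg_left (hρ ξ hG) measureReal_nonneg

lemma prob_and_mem_le_mul_prob (hF : (Set.range F).Finite)
    (h : ∀ ξ, G (F ξ) → DisjointlyDetermined {ξ' | F ξ' = F ξ} (C (F ξ)))
    (hρ : ∀ ξ, G (F ξ) → ℙ[w] (C (F ξ)) ≤ ρ) :
    ℙ[w] {ξ | G (F ξ) ∧ ξ ∈ C (F ξ)} ≤ ρ * ℙ[w] {ξ | G (F ξ)} := by
  rw [prob_and_mem_eq_sum hF h, prob_setOf_eq_sum hF h, Finset.mul_sum]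
  refine Finset.sum_le_sum fun k hk => ?_
  obtain ⟨⟨ξ, rfl⟩, hG⟩ : k ∈ Set.range F ∧ G k := by simpa using hk
  rw [mul_comm ρ]
  exact mul_le_mul_of_nonneg_left (hρ ξ hG) measureReal_nonneg

end Conditioning

section Cylinder

variable {V : Set κ} {f : κ → ι} {b : Bool} {q : ℝ}

lemma determinedBy_cylinder_image (V : Set κ) (f : κ → ι) (b : Bool) :
    DeterminedBy {ξ : ι → Bool | ∀ y ∈ V, ξ (f y) = b} (f '' V) :=
  .of_imp fun _ _ h hξ y hy => (h _ ⟨y, hy, rfl⟩).symm.trans (hξ y hy)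

lemma prob_cylinder_image (hV : V.Finite) (hf : Set.InjOn f V) (b : Bool) :
    ℙ[w] {ξ | ∀ y ∈ V, ξ (f y) = b} = ∏ y ∈ hV.toFinset, ℙ[w] {ξ | ξ (f y) = b} := by
  classical
  have himage : {ξ : ι → Bool | ∀ y ∈ V, ξ (f y) = b} =
      {ξ | ∀ x ∈ hV.toFinset.image f, ξ x = b} := by
    ext ξ; simp
  rw [himage, prob_cylinder w _ fun _ => b, Finset.prod_image (by rwa [hV.coe_toFinset])]
  exact Finset.prod_congr rfl fun y _ => (prob_coord w (f y) b).symm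

lemma pow_ncard_le_prob_cylinder_image (hV : V.Finite) (hf : Set.InjOn f V) (hq : 0 ≤ q)
    (h : ∀ y ∈ V, q ≤ ℙ[w] {ξ | ξ (f y) = b}) :
    q ^ V.ncard ≤ ℙ[w] {ξ | ∀ y ∈ V, ξ (f y) = b} := by
  rw [prob_cylinder_image hV hf, Set.ncard_eq_toFinset_card V hV, ← Finset.prod_const]
  exact Finset.prod_le_prod (fun _ _ => hq) fun y hy => h y (hV.mem_toFinset.1 hy)

lemma prob_cylinder_image_le_pow_ncard (hV : V.Finite) (hf : Set.InjOn f V)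
    (h : ∀ y ∈ V, ℙ[w] {ξ | ξ (f y) = b} ≤ q) :
    ℙ[w] {ξ | ∀ y ∈ V, ξ (f y) = b} ≤ q ^ V.ncard := by
  rw [prob_cylinder_image hV hf, Set.ncard_eq_toFinset_card V hV, ← Finset.prod_const]
  exact Finset.prod_le_prod (fun _ _ => measureReal_nonneg) fun y hy => h y (hV.mem_toFinset.1 hy)

end Cylinder

/-! ### Harris' inequality -/

/-- The event that `A` holds once the coordinate `i` has been set to `b`. -/
def slice [DecidableEq ι] (A : Set (ι → Bool)) (i : ι) (b : Bool) : Set (ι → Bool) :=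
  (Function.update · i b) ⁻¹' A

lemma DeterminedBy.slice [DecidableEq ι] (h : DeterminedBy A s) (i : ι) (b : Bool) :
    DeterminedBy (slice A i b) (s \ {i}) :=
  .of_imp fun ξ ξ' hξ => (h.mem_iff fun j hj => by
    by_cases hji : j = i
    · subst hji; simp
    · simp [hji, hξ j ⟨hj, hji⟩]).1

lemma slice_inter_coord [DecidableEq ι] (A : Set (ι → Bool)) (i : ι) (b : Bool) :
    A ∩ {ξ | ξ i = b} = slice A i b ∩ {ξ | ξ i = b} := by
  ext ξ
  refine and_congr_left fun hi => ?_
  rw [slice, Set.mem_preimage, ← show ξ i = b from hi, Function.update_eq_self]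

lemma prob_eq_slice [DecidableEq ι] (h : DeterminedBy A s) (hs : s.Finite) (i : ι) :
    ℙ[w] A = w i * ℙ[w] (slice A i true) + (1 - w i) * ℙ[w] (slice A i false) := by
  have hslice : ∀ b, ℙ[w] (A ∩ {ξ | ξ i = b}) =
      ℙ[w] (slice A i b) * if b then (w i : ℝ) else 1 - w i := fun b => by
    rw [slice_inter_coord, prob_inter_of_disjoint (h.slice i b) (.coord i b)
      (hs.subset Set.sdiff_subset) (Set.finite_singleton i) Set.disjoint_sdiff_left, prob_coord]
  have hfalse : A \ {ξ | ξ i = true} = A ∩ {ξ | ξ i = false} := by ext; simp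
  rw [← measureReal_inter_add_sdiff (s := A)
    ((DeterminedBy.coord i true).measurableSet (Set.finite_singleton i)), hfalse, hslice, hslice]
  simp only [if_true, Bool.false_eq_true, if_false]
  ring

lemma isUpperSet_slice [DecidableEq ι] (hA : IsUpperSet A) (i : ι) (b : Bool) :
    IsUpperSet (slice A i b) :=
  fun _ _ h => hA (update_le_update_iff.2 ⟨le_rfl, fun j _ => h j⟩)

lemma slice_false_subset [DecidableEq ι] (hA : IsUpperSet A) (i : ι) :
    slice A i false ⊆ slice A i true :=
  fun _ => hA (update_le_update_iff.2 ⟨Bool.false_le true, fun _ _ => le_rfl⟩)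

lemma prob_mul_le_prob_inter_of_isUpperSet (iA : IsUpperSet A) (iB : IsUpperSet B)
    (hA : DeterminedBy A s) (hB : DeterminedBy B s) (hs : s.Finite) :
    ℙ[w] A * ℙ[w] B ≤ ℙ[w] (A ∩ B) := by
  classical
  induction s, hs using Set.Finite.induction_on generalizing A B with
  | empty =>
    rcases A.eq_empty_or_nonempty with rfl | ⟨ξ, hξ⟩
    · simp
    · have : A = Set.univ := Set.eq_univ_of_forall fun ξ' => (hA.mem_iff (by simp)).1 hξ
      simp [this]
  | @insert i s _ hs ih =>
    have hsub : insert i s \ {i} ⊆ s := by simp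
    have hmul b := ih (isUpperSet_slice iA i b) (isUpperSet_slice iB i b)
      ((hA.slice i b).mono hsub) ((hB.slice i b).mono hsub)
    have hA01 : ℙ[w] (slice A i false) ≤ ℙ[w] (slice A i true) :=
      measureReal_mono (slice_false_subset iA i)
    have hB01 : ℙ[w] (slice B i false) ≤ ℙ[w] (slice B i true) :=
      measureReal_mono (slice_false_subset iB i)
    have hw0 : (0 : ℝ) ≤ w i := (w i).2.1
    have hw1 : (0 : ℝ) ≤ 1 - w i := sub_nonneg.2 (w i).2.2
    have htrue := mul_le_mul_of_nonneg_left (hmul true) hw0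
    have hfalse := mul_le_mul_of_nonneg_left (hmul false) hw1
    have hcov := mul_nonneg (mul_nonneg hw0 hw1)
      (mul_nonneg (sub_nonneg.2 hA01) (sub_nonneg.2 hB01))
    have hfin := hs.insert i
    rw [prob_eq_slice hA hfin i, prob_eq_slice hB hfin i, prob_eq_slice (hA.inter hB) hfin i]
    change _ ≤ w i * ℙ[w] (slice A i true ∩ slice B i true) +
      (1 - w i) * ℙ[w] (slice A i false ∩ slice B i false)
    nlinarith

lemma prob_mul_le_prob_inter_of_isLowerSet (iA : IsLowerSet A) (iB : IsLowerSet B)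
    (hA : DeterminedBy A s) (hB : DeterminedBy B s) (hs : s.Finite) :
    ℙ[w] A * ℙ[w] B ≤ ℙ[w] (A ∩ B) := by
  have hmul := prob_mul_le_prob_inter_of_isUpperSet (w := w) iA.compl iB.compl hA.compl hB.compl hs
  have hmA := hA.measurableSet hs
  have hmB := hB.measurableSet hs
  have hunion := measureReal_union_add_inter (μ := bernoulliProd w) (s := A) hmB
  rw [← Set.compl_union, probReal_compl_eq_one_sub hmA, probReal_compl_eq_one_sub hmB,
    probReal_compl_eq_one_sub (hmA.union hmB)] at hmul
  nlinarith

lemma prod_prob_le_prob_biInter_of_isLowerSet (I : Finset κ) {A : κ → Set (ι → Bool)}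
    (iA : ∀ k, IsLowerSet (A k)) (hA : ∀ k, DeterminedBy (A k) s) (hs : s.Finite) :
    ∏ k ∈ I, ℙ[w] (A k) ≤ ℙ[w] (⋂ k ∈ I, A k) := by
  classical
  induction I using Finset.induction_on with
  | empty => simp
  | insert k I hk ih =>
    rw [Finset.prod_insert hk, Finset.set_biInter_insert]
    exact (mul_le_mul_of_nonneg_left ih measureReal_nonneg).trans
      (prob_mul_le_prob_inter_of_isLowerSet (iA k) (isLowerSet_iInter₂ fun k _ => iA k)
        (hA k) (.iInter fun k => .iInter fun _ => hA k) hs)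

end Real

/-! ### Connections by paths -/

/-- `y` is reached from `x` by steps along `adj`, every visited vertex after `x` being in `P`. -/
def Conn {V : Type*} (adj : V → V → Prop) (P : Set V) (x y : V) : Prop :=
  Relation.ReflTransGen (fun a b => adj a b ∧ b ∈ P) x y

namespace Conn

variable {V : Type*} {adj : V → V → Prop} {P Q C : Set V} {x y z : V}

lemma refl : Conn adj P x x := Relation.ReflTransGen.refl

lemma trans (h : Conn adj P x y) (h' : Conn adj P y z) : Conn adj P x z :=
  Relation.ReflTransGen.trans h h'

lemma tail (h : Conn adj P x y) (hyz : adj y z) (hz : z ∈ P) : Conn adj P x z :=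
  Relation.ReflTransGen.tail h ⟨hyz, hz⟩

lemma single (hxy : adj x y) (hy : y ∈ P) : Conn adj P x y := refl.tail hxy hy

lemma mono (h : Conn adj P x y) (hPQ : P ⊆ Q) : Conn adj Q x y :=
  Relation.ReflTransGen.mono (fun _ _ step => ⟨step.1, hPQ step.2⟩) _ _ h

lemma map {W : Type*} {adj' : W → W → Prop} {Q : Set W} (f : V → W)
    (hf : ∀ a b, adj a b → adj' (f a) (f b)) (hPQ : Set.MapsTo f P Q) (h : Conn adj P x y) :
    Conn adj' Q (f x) (f y) :=
  Relation.ReflTransGen.lift f (fun _ _ step => ⟨hf _ _ step.1, hPQ step.2⟩) _ _ h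

lemma eq_or_mem (h : Conn adj P x y) : y = x ∨ y ∈ P := by
  cases h with
  | refl => exact .inl rfl
  | tail _ h => exact .inr h.2

lemma mem (h : Conn adj P x y) (hx : x ∈ P) : y ∈ P :=
  h.eq_or_mem.elim (fun e => e ▸ hx) id

lemma symm [Std.Symm adj] (hx : x ∈ P) (h : Conn adj P x y) : Conn adj P y x := by
  induction h with
  | refl => exact refl
  | tail h step ih => exact (single (Std.Symm.symm _ _ step.1) (Conn.mem h hx)).trans ih

lemma exists_last_exit (hx : x ∈ C) (h : Conn adj P x y) :
    ∃ z ∈ C, (z = x ∨ z ∈ P) ∧ Conn adj (P \ C) z y := by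
  induction h with
  | refl => exact ⟨x, hx, .inl rfl, refl⟩
  | @tail _ c _ step ih =>
    by_cases hc : c ∈ C
    · exact ⟨c, hc, .inr step.2, refl⟩
    · obtain ⟨z, hz, hz', hzb⟩ := ih
      exact ⟨z, hz, hz', hzb.tail step.1 ⟨step.2, hc⟩⟩

lemma mem_or_exists_first_exit (hx : x ∈ C) (h : Conn adj P x y) :
    (y ∈ C ∧ Conn adj (P ∩ C) x y) ∨
      ∃ u ∈ C, ∃ v, v ∉ C ∧ Conn adj (P ∩ C) x u ∧ adj u v ∧ v ∈ P := by
  induction h with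
  | refl => exact .inl ⟨hx, refl⟩
  | @tail b c _ step ih =>
    rcases ih with ⟨hb, hxb⟩ | hexit
    · by_cases hc : c ∈ C
      · exact .inl ⟨hc, hxb.tail step.1 ⟨step.2, hc⟩⟩
      · exact .inr ⟨b, hb, c, hc, hxb, step⟩
    · exact .inr hexit

lemma exists_first_exit (hx : x ∈ C) (hy : y ∉ C) (h : Conn adj P x y) :
    ∃ u ∈ C, ∃ v, v ∉ C ∧ Conn adj (P ∩ C) x u ∧ adj u v ∧ v ∈ P :=
  (mem_or_exists_first_exit hx h).resolve_left fun h => hy h.1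

end Conn

/-! ### The cubic lattice -/

/-- Nearest-neighbour adjacency on the cubic lattice. -/
def Adj {d : ℕ} (x y : Fin d → ℤ) : Prop := norm1 (y - x) = 1

section Lattice

variable {d : ℕ} {x y : Fin d → ℤ}

lemma Adj.symm (h : Adj x y) : Adj y x := by
  rw [Adj, ← h, norm1, norm1]
  exact Finset.sum_congr rfl fun i _ => by rw [← neg_sub y x, Pi.neg_apply, Int.natAbs_neg]

instance : Std.Symm (Adj (d := d)) := ⟨fun _ _ => Adj.symm⟩

lemma adj_add_single (x : Fin d → ℤ) (i : Fin d) {ε : ℤ} (hε : ε = 1 ∨ ε = -1) :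
    Adj x (x + Pi.single i ε) := by
  rw [Adj, norm1, Finset.sum_eq_single i]
  · simp only [add_sub_cancel_left, Pi.single_eq_same]
    omega
  · intro j _ hj
    simp [hj]
  · simp

lemma Adj.exists_eq_add_single (h : Adj x y) :
    ∃ i, ∃ ε : ℤ, (ε = 1 ∨ ε = -1) ∧ y = x + Pi.single i ε := by
  have hsum : ∑ i, ((y - x) i).natAbs = 1 := h
  obtain ⟨i, -, hi⟩ := Finset.exists_ne_zero_of_sum_ne_zero (hsum.trans_ne one_ne_zero)
  rw [← Finset.add_sum_erase _ _ (Finset.mem_univ i)] at hsum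
  have hrest : ∑ j ∈ Finset.univ.erase i, ((y - x) j).natAbs = 0 := by omega
  refine ⟨i, (y - x) i, by omega, funext fun j => ?_⟩
  by_cases hj : j = i
  · subst hj
    simp
  · have : (y - x) j = 0 :=
      Int.natAbs_eq_zero.1 (Finset.sum_eq_zero_iff.1 hrest j (by simp [hj]))
    simpa [hj, sub_eq_zero] using this

lemma Adj.abs_sub_le (h : Adj x y) (k : Fin d) : |y k - x k| ≤ 1 := by
  obtain ⟨i, ε, hε, rfl⟩ := h.exists_eq_add_single
  by_cases hk : k = i
  · subst hk
    rcases hε with rfl | rfl <;> simp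
  · simp [hk]

lemma Adj.add_right (h : Adj x y) (c : Fin d → ℤ) : Adj (x + c) (y + c) := by
  unfold Adj at *
  simpa using h

lemma exists_adj_mem_uIcc_norm1_lt (hxy : x ≠ y) :
    ∃ z, Adj x z ∧ z ∈ Set.uIcc x y ∧ norm1 (y - z) < norm1 (y - x) := by
  obtain ⟨i, hi⟩ := Function.ne_iff.1 hxy
  obtain ⟨ε, hε, hbetween⟩ : ∃ ε : ℤ, (ε = 1 ∨ ε = -1) ∧
      (x i ≤ x i + ε ∧ x i + ε ≤ y i ∨ y i ≤ x i + ε ∧ x i + ε ≤ x i) := by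
    rcases lt_or_gt_of_ne hi with h | h
    · exact ⟨1, .inl rfl, by omega⟩
    · exact ⟨-1, .inr rfl, by omega⟩
  have hz j (hj : j ≠ i) : (x + Pi.single i ε : Fin d → ℤ) j = x j := by simp [hj]
  have hzi : (x + Pi.single i ε : Fin d → ℤ) i = x i + ε := by simp
  refine ⟨_, adj_add_single x i hε, ⟨fun j => ?_, fun j => ?_⟩, Finset.sum_lt_sum (fun j _ => ?_)
    ⟨i, Finset.mem_univ i, ?_⟩⟩
  on_goal 4 => simp only [Pi.sub_apply, hzi]; omega
  all_goals
    simp only [Pi.inf_apply, Pi.sup_apply, Pi.sub_apply]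
    by_cases hj : j = i
    · subst hj
      omega
    · simp [hz j hj]

lemma conn_Icc {a b x y : Fin d → ℤ} (hx : x ∈ Set.Icc a b) (hy : y ∈ Set.Icc a b) :
    Conn Adj (Set.Icc a b) x y := by
  induction hn : norm1 (y - x) using Nat.strong_induction_on generalizing x with
  | _ n ih =>
    by_cases hxy : x = y
    · exact hxy ▸ Conn.refl
    · obtain ⟨z, hxz, hz, hlt⟩ := exists_adj_mem_uIcc_norm1_lt hxy
      have hz : z ∈ Set.Icc a b := Set.uIcc_subset_Icc hx hy hz
      exact (Conn.single hxz hz).trans (ih _ (hn ▸ hlt) hz rfl)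

/-- The `ℓ∞` ball with integer radius around `c`, as an interval. -/
def cube (c : Fin d → ℤ) (r : ℤ) : Set (Fin d → ℤ) :=
  Set.Icc (fun i => c i - r) (fun i => c i + r)

lemma mem_cube {c x : Fin d → ℤ} {r : ℤ} : x ∈ cube c r ↔ ∀ i, |x i - c i| ≤ r := by
  simp only [cube, Set.mem_Icc, Pi.le_def, ← forall_and, abs_le]
  exact forall_congr' fun i => by omega

lemma finite_cube (c : Fin d → ℤ) (r : ℤ) : (cube c r).Finite := Set.finite_Icc _ _

lemma self_mem_cube (c : Fin d → ℤ) {r : ℤ} (hr : 0 ≤ r) : c ∈ cube c r :=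
  mem_cube.2 fun i => by simpa using hr

lemma cube_mono (c : Fin d → ℤ) {m n : ℤ} (h : m ≤ n) : cube c m ⊆ cube c n :=
  fun _ hx => mem_cube.2 fun i => (mem_cube.1 hx i).trans h

lemma exists_mem_cube (x : Fin d → ℤ) : ∃ m : ℕ, x ∈ cube (0 : Fin d → ℤ) m :=
  ⟨norm1 x, mem_cube.2 fun i => by
    have : (x i).natAbs ≤ norm1 x :=
      Finset.single_le_sum (f := fun i => (x i).natAbs) (fun _ _ => Nat.zero_le _)
        (Finset.mem_univ i)
    rw [Pi.zero_apply, sub_zero, Int.abs_eq_natAbs]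
    exact_mod_cast this⟩

end Lattice

/-! ### Percolation and the zero-one law -/

lemma bernoulliProd_eq_zero_or_one_of_tail {ι : Type*} (w : ι → unitInterval)
    {A : Set (ι → Bool)} (hA : ∀ F : Set ι, F.Finite →
      MeasurableSet[⨆ i ∈ Fᶜ, MeasurableSpace.comap (fun ξ : ι → Bool => ξ i) inferInstance] A) :
    bernoulliProd w A = 0 ∨ bernoulliProd w A = 1 := by
  refine ProbabilityTheory.measure_zero_or_one_of_measurableSet_limsup (f := Filter.cofinite)
    (s := fun i => MeasurableSpace.comap (fun ξ : ι → Bool => ξ i) inferInstance)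
    (p := Set.Finite) (ns := fun F : Finset ι => (F : Set ι))
    (fun i => (measurable_pi_apply i).comap_le)
    (ProbabilityTheory.iIndepFun_infinitePi (X := fun _ x => x) fun _ => measurable_id).iIndep
    (fun F hF => hF.compl_mem_cofinite) ?_ Finset.finite_toSet
    (fun i => ⟨{i}, by simp⟩) ?_
  · exact (directed_of_isDirected_le fun _ _ h => Finset.coe_subset.2 h)
  · rw [Filter.hasBasis_cofinite.limsup_eq_iInf_iSup]
    exact MeasurableSpace.measurableSet_iInf.2 fun F => MeasurableSpace.measurableSet_iInf.2 (hA F)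

section Percolation

variable {d : ℕ}

/-- The set of open sites of a configuration. -/
def openSites {V : Type*} (ξ : V → Bool) : Set V := {x | ξ x = true}

/-- The event that `cube 0 m` is connected to the inner boundary of `cube 0 n` through open sites of
the annulus between them. -/
def annulusEvent (d m n : ℕ) : Set ((Fin d → ℤ) → Bool) :=
  {ξ | ∃ a ∈ cube (0 : Fin d → ℤ) m, ∃ u ∈ cube (0 : Fin d → ℤ) n,
    (∃ v, v ∉ cube (0 : Fin d → ℤ) n ∧ Adj u v) ∧
    Conn Adj ((openSites ξ \ cube 0 m) ∩ cube 0 n) a u}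

lemma openSites_inter_congr {V : Type*} {ξ ξ' : V → Bool} {S : Set V}
    (h : ∀ x ∈ S, ξ x = ξ' x) : openSites ξ ∩ S = openSites ξ' ∩ S :=
  Set.ext fun x => and_congr_left fun hx => by simp only [openSites, Set.mem_ofPred_eq, h x hx]

lemma determinedBy_annulusEvent (m n : ℕ) :
    DeterminedBy (annulusEvent d m n) (cube 0 n \ cube 0 m) := by
  refine .of_imp fun ξ ξ' h hξ => ?_
  have : (openSites ξ \ cube 0 m) ∩ cube 0 n = (openSites ξ' \ cube 0 m) ∩ cube 0 n := by
    simp only [Set.sdiff_inter_right_comm, Set.inter_sdiff_assoc, openSites_inter_congr h]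
  simpa only [annulusEvent, Set.mem_ofPred_eq, this] using hξ

lemma annulusEvent_mono_left {m m' n : ℕ} (h : m ≤ m') :
    annulusEvent d m n ⊆ annulusEvent d m' n := by
  rintro ξ ⟨a, ha, u, hu, hv, hau⟩
  have ha' : a ∈ cube (0 : Fin d → ℤ) m' := cube_mono 0 (by exact_mod_cast h) ha
  obtain ⟨z, hz, -, hzu⟩ := hau.exists_last_exit ha'
  exact ⟨z, hz, u, hu, hv, hzu.mono fun x hx => ⟨⟨hx.1.1.1, hx.2⟩, hx.1.2⟩⟩

/-- The event that the open sites outside some finite box reach from that box to infinity. It is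
manifestly insensitive to finite changes of the configuration. -/
def infiniteClusterEvent (d : ℕ) : Set ((Fin d → ℤ) → Bool) :=
  ⋃ m : ℕ, ⋂ k : ℕ, annulusEvent d m (m + k)

lemma perc_subset_infiniteClusterEvent : Perc d ⊆ infiniteClusterEvent d := by
  rintro ξ ⟨γ, hinj, hadj, hopen⟩
  obtain ⟨m, hm⟩ := exists_mem_cube (γ 0)
  refine Set.mem_iUnion.2 ⟨m, Set.mem_iInter.2 fun k => ?_⟩
  obtain ⟨l, hl⟩ : ∃ l, γ l ∉ cube (0 : Fin d → ℤ) (m + k : ℕ) := by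
    by_contra! hc
    exact Set.infinite_range_of_injective hinj
      ((finite_cube _ _).subset (Set.range_subset_iff.2 hc))
  have hconn (l : ℕ) : Conn Adj (openSites ξ) (γ 0) (γ l) := by
    induction l with
    | zero => exact Conn.refl
    | succ l ih => exact ih.tail (hadj l) (hopen _)
  obtain ⟨z, hz, -, hzl⟩ := (hconn l).exists_last_exit hm
  have hz' : z ∈ cube 0 ((m + k : ℕ) : ℤ) := cube_mono 0 (by simp) hz
  obtain ⟨u, hu, v, hv, hzu, huv, -⟩ := hzl.exists_first_exit hz' hl
  exact ⟨z, hz, u, hu, ⟨v, hv, huv⟩, hzu⟩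

lemma monotone_iInter_annulusEvent :
    Monotone fun m : ℕ => ⋂ k : ℕ, annulusEvent d m (m + k) := by
  intro m m' h ξ hξ
  refine Set.mem_iInter.2 fun k => annulusEvent_mono_left h ?_
  have := Set.mem_iInter.1 hξ (m' - m + k)
  rwa [show m + (m' - m + k) = m' + k by omega] at this

lemma bernoulliProd_infiniteClusterEvent_eq_one (w : (Fin d → ℤ) → unitInterval)
    (h : bernoulliProd w (Perc d) ≠ 0) : bernoulliProd w (infiniteClusterEvent d) = 1 := by
  refine (bernoulliProd_eq_zero_or_one_of_tail w fun F hF => ?_).resolve_left fun h0 =>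
    h (measure_mono_null perc_subset_infiniteClusterEvent h0)
  obtain ⟨m₀, hm₀⟩ : ∃ m₀ : ℕ, F ⊆ cube (0 : Fin d → ℤ) m₀ := by
    choose f hf using exists_mem_cube (d := d)
    exact ⟨hF.toFinset.sup f, fun x hx =>
      cube_mono 0 (by exact_mod_cast Finset.le_sup (hF.mem_toFinset.2 hx)) (hf x)⟩
  rw [infiniteClusterEvent, ← monotone_iInter_annulusEvent.iUnion_nat_add m₀]
  refine MeasurableSet.iUnion fun m => MeasurableSet.iInter fun k => ?_
  have hdisj : cube (0 : Fin d → ℤ) (m + m₀ + k : ℕ) \ cube 0 (m + m₀ : ℕ) ⊆ Fᶜ :=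
    fun x hx hxF => hx.2 (cube_mono 0 (by simp) (hm₀ hxF))
  exact biSup_mono
    (f := fun x => MeasurableSpace.comap (fun ξ : (Fin d → ℤ) → Bool => ξ x) inferInstance) hdisj _
    ((determinedBy_annulusEvent _ _).measurableSet_iSup_comap
      ((finite_cube _ _).subset Set.sdiff_subset))

open Filter Topology in
lemma exists_le_prob_annulusEvent (w : (Fin d → ℤ) → unitInterval)
    (h : bernoulliProd w (Perc d) ≠ 0) {η : ℝ} (hη : 0 < η) :
    ∃ m : ℕ, ∀ n ≥ m, 1 - η ≤ ℙ[w] (annulusEvent d m n) := by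
  have hlim : Tendsto (fun m : ℕ => bernoulliProd w (⋂ k : ℕ, annulusEvent d m (m + k))) atTop
      (𝓝 1) := bernoulliProd_infiniteClusterEvent_eq_one w h ▸
    tendsto_measure_iUnion_atTop monotone_iInter_annulusEvent
  have hlim' : Tendsto (fun m : ℕ => ℙ[w] (⋂ k : ℕ, annulusEvent d m (m + k))) atTop (𝓝 1) :=
    (ENNReal.tendsto_toReal ENNReal.one_ne_top).comp hlim
  obtain ⟨m, hm⟩ := (hlim'.eventually (lt_mem_nhds (sub_lt_self 1 hη))).exists
  refine ⟨m, fun n hn => hm.le.trans (measureReal_mono ?_)⟩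
  obtain ⟨k, rfl⟩ := Nat.exists_eq_add_of_le hn
  exact Set.iInter_subset _ k

end Percolation

/-! ### Many boundary points are reached -/

lemma tendsto_sub_succ_of_antitone {a : ℕ → ℝ} (m : ℕ) (hanti : ∀ n ≥ m, a (n + 1) ≤ a n)
    (hnonneg : ∀ n, 0 ≤ a n) :
    Filter.Tendsto (fun n => a n - a (n + 1)) Filter.atTop (nhds 0) := by
  have hanti' : Antitone fun n => a (n + m) :=
    antitone_nat_of_succ_le fun n => by
      simpa only [add_right_comm] using hanti (n + m) (Nat.le_add_left m n)
  have hlim := (Filter.tendsto_add_atTop_iff_nat (f := a) m).1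
    (tendsto_atTop_ciInf hanti' ⟨0, by rintro _ ⟨n, rfl⟩; exact hnonneg _⟩)
  simpa using hlim.sub ((Filter.tendsto_add_atTop_iff_nat 1).2 hlim)

section Boundary

variable {d : ℕ}

/-- The points of the inner boundary of `cube 0 n` joined to `cube 0 m` inside `cube 0 n`. -/
def hitSet (m n : ℕ) (ξ : (Fin d → ℤ) → Bool) : Set (Fin d → ℤ) :=
  {x | x ∈ cube 0 (n : ℤ) ∧ (∃ k, |x k| = n) ∧
    ∃ b ∈ cube (0 : Fin d → ℤ) m, Conn Adj (openSites ξ ∩ cube 0 n) b x}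

lemma exists_abs_eq_of_adj {u v : Fin d → ℤ} {n : ℕ} (hu : u ∈ cube (0 : Fin d → ℤ) n)
    (hv : v ∉ cube (0 : Fin d → ℤ) n) (h : Adj u v) : ∃ k, |u k| = n := by
  simp only [mem_cube, not_forall, not_le, Pi.zero_apply, sub_zero] at hu hv
  obtain ⟨k, hk⟩ := hv
  refine ⟨k, (hu k).antisymm ?_⟩
  have := h.abs_sub_le k
  have := abs_sub_abs_le_abs_sub (v k) (u k)
  omega

lemma hitSet_subset (m n : ℕ) (ξ : (Fin d → ℤ) → Bool) : hitSet m n ξ ⊆ cube 0 n :=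
  fun _ h => h.1

lemma finite_hitSet (m n : ℕ) (ξ : (Fin d → ℤ) → Bool) : (hitSet m n ξ).Finite :=
  (finite_cube _ _).subset (hitSet_subset m n ξ)

lemma finite_range_hitSet (m n : ℕ) : (Set.range (hitSet (d := d) m n)).Finite :=
  (finite_cube 0 n).finite_subsets.subset (Set.range_subset_iff.2 (hitSet_subset m n))

lemma determinedBy_hitSet (m n : ℕ) (P : Set (Fin d → ℤ) → Prop) :
    DeterminedBy {ξ | P (hitSet m n ξ)} (cube (0 : Fin d → ℤ) n) :=
  .of_imp fun ξ ξ' h hξ => by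
    have : hitSet m n ξ = hitSet m n ξ' := by simp only [hitSet, openSites_inter_congr h]
    exact (congrArg P this).mp hξ

lemma hitSet_mono (m n : ℕ) : Monotone (hitSet (d := d) m n) :=
  fun _ _ h _ ⟨hx, hface, b, hb, hbx⟩ =>
    ⟨hx, hface, b, hb, hbx.mono fun y hy => ⟨h y hy.1, hy.2⟩⟩

lemma hitSet_nonempty_of_mem_annulusEvent {m n : ℕ} {ξ : (Fin d → ℤ) → Bool}
    (h : ξ ∈ annulusEvent d m n) : (hitSet m n ξ).Nonempty := by
  obtain ⟨a, ha, u, hu, ⟨v, hv, huv⟩, hau⟩ := h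
  exact ⟨u, hu, exists_abs_eq_of_adj hu hv huv, a, ha, hau.mono fun x hx => ⟨hx.1.1, hx.2⟩⟩

lemma exists_exit_of_hitSet_succ_nonempty {m n : ℕ} (hmn : m ≤ n) {ξ : (Fin d → ℤ) → Bool}
    (h : (hitSet m (n + 1) ξ).Nonempty) :
    ∃ u ∈ hitSet m n ξ, ∃ v ∉ cube (0 : Fin d → ℤ) n, Adj u v ∧ ξ v = true := by
  obtain ⟨x, -, ⟨k, hk⟩, b, hb, hbx⟩ := h
  have hxn : x ∉ cube (0 : Fin d → ℤ) n := fun hx => by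
    have := mem_cube.1 hx k
    simp only [Pi.zero_apply, sub_zero, hk] at this
    omega
  have hb' : b ∈ cube (0 : Fin d → ℤ) n := cube_mono 0 (by exact_mod_cast hmn) hb
  obtain ⟨u, hu, v, hv, hbu, huv, hopen⟩ := hbx.exists_first_exit hb' hxn
  exact ⟨u, ⟨hu, exists_abs_eq_of_adj hu hv huv, b, hb, hbu.mono fun y hy => ⟨hy.1.1, hy.2⟩⟩,
    v, hv, huv, hopen.1⟩

lemma setOf_hitSet_succ_nonempty_subset {m n : ℕ} (hmn : m ≤ n) :
    {ξ : (Fin d → ℤ) → Bool | (hitSet m (n + 1) ξ).Nonempty} ⊆ {ξ | (hitSet m n ξ).Nonempty} :=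
  fun _ hξ => (exists_exit_of_hitSet_succ_nonempty hmn hξ).imp fun _ h => h.1

/-- The neighbours of a lattice point. -/
noncomputable def neighbors (x : Fin d → ℤ) : Finset (Fin d → ℤ) :=
  Finset.univ.image fun i : Fin d × Bool => x + Pi.single i.1 (if i.2 then 1 else -1)

lemma mem_neighbors {x y : Fin d → ℤ} (h : Adj x y) : y ∈ neighbors x := by
  obtain ⟨i, ε, rfl | rfl, rfl⟩ := h.exists_eq_add_single
  · exact Finset.mem_image.2 ⟨(i, true), by simp, by simp⟩
  · exact Finset.mem_image.2 ⟨(i, false), by simp, by simp⟩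

lemma card_neighbors_le (x : Fin d → ℤ) : (neighbors x).card ≤ d * 2 :=
  Finset.card_image_le.trans (by simp)

/-- The neighbours outside `cube 0 n` of the points of `W`. -/
def outerNeighbors (n : ℕ) (W : Set (Fin d → ℤ)) : Set (Fin d → ℤ) :=
  {v | v ∉ cube (0 : Fin d → ℤ) n ∧ ∃ u ∈ W, Adj u v}

lemma outerNeighbors_subset (n : ℕ) (W : Set (Fin d → ℤ)) :
    outerNeighbors n W ⊆ ⋃ u ∈ W, neighbors u :=
  fun _ ⟨_, _, hu, huv⟩ => Set.mem_biUnion hu (mem_neighbors huv)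

lemma finite_outerNeighbors (n : ℕ) {W : Set (Fin d → ℤ)} (hW : W.Finite) :
    (outerNeighbors n W).Finite :=
  (hW.biUnion fun _ _ => Finset.finite_toSet _).subset (outerNeighbors_subset n W)

lemma ncard_outerNeighbors_le (n : ℕ) {W : Set (Fin d → ℤ)} (hW : W.Finite) :
    (outerNeighbors n W).ncard ≤ W.ncard * (d * 2) := by
  classical
  lift W to Finset (Fin d → ℤ) using hW
  have hsub : outerNeighbors n (W : Set (Fin d → ℤ)) ⊆ (W.biUnion neighbors : Set (Fin d → ℤ)) := by
    simpa using outerNeighbors_subset n (W : Set (Fin d → ℤ))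
  refine (Set.ncard_le_ncard hsub (Finset.finite_toSet _)).trans ?_
  rw [Set.ncard_coe_finset, Set.ncard_coe_finset]
  exact Finset.card_biUnion_le_card_mul _ _ _ fun x _ => card_neighbors_le x

lemma not_nonempty_hitSet_succ_of_closed {m n : ℕ} (hmn : m ≤ n) {ξ : (Fin d → ℤ) → Bool}
    (hclosed : ∀ x ∈ outerNeighbors n (hitSet m n ξ), ξ x = false) :
    ¬ (hitSet m (n + 1) ξ).Nonempty := by
  intro hne
  obtain ⟨u, hu, v, hv, huv, hopen⟩ := exists_exit_of_hitSet_succ_nonempty hmn hne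
  simp [hclosed v ⟨hv, u, hu, huv⟩] at hopen

/-- If the hits of `cube 0 n` are few, then all their outer neighbours may be closed at a bounded
cost, and then `cube 0 (n + 1)` is not hit at all. -/
lemma pow_mul_prob_few_hits_le (p : unitInterval) {m n : ℕ} (hmn : m ≤ n) (K : ℕ) :
    (1 - p : ℝ) ^ (K * (d * 2)) * ℙ[fun _ => p] {ξ : (Fin d → ℤ) → Bool |
      (hitSet m n ξ).Nonempty ∧ (hitSet m n ξ).ncard ≤ K} ≤
    ℙ[fun _ => p] {ξ : (Fin d → ℤ) → Bool | (hitSet m n ξ).Nonempty} -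
      ℙ[fun _ => p] {ξ : (Fin d → ℤ) → Bool | (hitSet m (n + 1) ξ).Nonempty} := by
  let C (W : Set (Fin d → ℤ)) : Set ((Fin d → ℤ) → Bool) :=
    {ξ | ∀ x ∈ outerNeighbors n W, ξ x = false}
  have hq : (0 : ℝ) ≤ 1 - p := sub_nonneg.2 p.2.2
  rw [← measureReal_sdiff (setOf_hitSet_succ_nonempty_subset hmn)
    ((determinedBy_hitSet m (n + 1) Set.Nonempty).measurableSet (finite_cube _ _))]
  refine (mul_prob_le_prob_and_mem (F := hitSet m n) (C := C)
    (G := fun W => W.Nonempty ∧ W.ncard ≤ K) (finite_range_hitSet m n) (fun ξ _ => ?_)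
    fun ξ hξ => ?_).trans (measureReal_mono fun ξ hξ =>
      ⟨hξ.1.1, not_nonempty_hitSet_succ_of_closed hmn hξ.2⟩)
  · refine ⟨_, _, finite_cube _ _, (finite_outerNeighbors n (finite_hitSet m n ξ)).image _, ?_,
      determinedBy_hitSet m n (· = hitSet m n ξ), determinedBy_cylinder_image _ id _⟩
    rw [Set.image_id]
    exact Set.disjoint_right.2 fun x hx => hx.1
  · have hcard := (ncard_outerNeighbors_le n (finite_hitSet m n ξ)).trans
      (Nat.mul_le_mul_right _ hξ.2)
    exact (pow_le_pow_of_le_one hq (sub_le_self _ p.2.1) hcard).trans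
      (pow_ncard_le_prob_cylinder_image (finite_outerNeighbors n (finite_hitSet m n ξ))
        (Set.injOn_id _) hq fun y _ => by simp [prob_coord])

lemma tendsto_prob_few_hits (p : unitInterval) (hp : (p : ℝ) < 1) (m K : ℕ) :
    Filter.Tendsto (fun n : ℕ => ℙ[fun _ => p] {ξ : (Fin d → ℤ) → Bool |
      (hitSet m n ξ).Nonempty ∧ (hitSet m n ξ).ncard ≤ K}) Filter.atTop (nhds 0) := by
  have hpow : 0 < (1 - p : ℝ) ^ (K * (d * 2)) := pow_pos (sub_pos.2 hp) _
  have hdiff := (tendsto_sub_succ_of_antitone (a := fun n =>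
    ℙ[fun _ => p] {ξ : (Fin d → ℤ) → Bool | (hitSet m n ξ).Nonempty}) m
      (fun n hn => measureReal_mono (setOf_hitSet_succ_nonempty_subset hn))
      fun _ => measureReal_nonneg).div_const ((1 - p : ℝ) ^ (K * (d * 2)))
  rw [zero_div] at hdiff
  refine squeeze_zero' (.of_forall fun _ => measureReal_nonneg) ?_ hdiff
  filter_upwards [Filter.eventually_ge_atTop m] with n hn
  exact (le_div_iff₀' hpow).2 (pow_mul_prob_few_hits_le p hn K)

lemma exists_prob_ncard_hitSet_le (p : unitInterval) (hp : (p : ℝ) < 1)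
    (hperc : bernoulliProd (fun _ : Fin d → ℤ => p) (Perc d) ≠ 0) {η : ℝ} (hη : 0 < η) :
    ∃ m : ℕ, ∀ K : ℕ, ∃ n₀ : ℕ, ∀ n ≥ n₀,
      ℙ[fun _ => p] {ξ : (Fin d → ℤ) → Bool | (hitSet m n ξ).ncard ≤ K} ≤ η := by
  obtain ⟨m, hm⟩ := exists_le_prob_annulusEvent _ hperc (half_pos hη)
  refine ⟨m, fun K => ?_⟩
  obtain ⟨n₀, hn₀⟩ := Filter.eventually_atTop.1
    ((tendsto_prob_few_hits (d := d) p hp m K).eventually (gt_mem_nhds (half_pos hη)))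
  refine ⟨max m n₀, fun n hn => ?_⟩
  have hsub : {ξ : (Fin d → ℤ) → Bool | (hitSet m n ξ).ncard ≤ K} ⊆ (annulusEvent d m n)ᶜ ∪
      {ξ | (hitSet m n ξ).Nonempty ∧ (hitSet m n ξ).ncard ≤ K} := fun ξ hξ =>
    or_iff_not_imp_left.2 fun h =>
      ⟨hitSet_nonempty_of_mem_annulusEvent (Set.notMem_compl_iff.1 h), hξ⟩
  have hannulus := hm n (le_of_max_le_left hn)
  have hfew := hn₀ n (le_of_max_le_right hn)
  have hunion := (measureReal_mono (μ := bernoulliProd fun _ => p) hsub).trans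
    (measureReal_union_le _ _)
  rw [probReal_compl_eq_one_sub ((determinedBy_annulusEvent m n).measurableSet
    ((finite_cube _ _).subset Set.sdiff_subset))] at hunion
  linarith

end Boundary

/-! ### Symmetries of the cube -/

section Symmetry

variable {d : ℕ}

lemma abs_coe_units_int (u : ℤˣ) : |(u : ℤ)| = 1 := Int.isUnit_iff_abs_eq.1 u.isUnit

/-- The symmetry of the lattice exchanging the coordinates `i` and `j` and then multiplying each
coordinate by a sign. -/
def signedSwap (i j : Fin d) (τ : Fin d → ℤˣ) : (Fin d → ℤ) ≃ (Fin d → ℤ) where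
  toFun x k := τ k * x (Equiv.swap i j k)
  invFun x k := τ (Equiv.swap i j k) * x (Equiv.swap i j k)
  left_inv x := by funext k; simp [← mul_assoc, ← Units.val_mul]
  right_inv x := by funext k; simp [← mul_assoc, ← Units.val_mul]

lemma signedSwap_apply (i j : Fin d) (τ : Fin d → ℤˣ) (x : Fin d → ℤ) (k : Fin d) :
    signedSwap i j τ x k = τ k * x (Equiv.swap i j k) := rfl

lemma adj_signedSwap (i j : Fin d) (τ : Fin d → ℤˣ) (x y : Fin d → ℤ) :
    Adj (signedSwap i j τ x) (signedSwap i j τ y) ↔ Adj x y := by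
  unfold Adj norm1
  rw [← Equiv.sum_comp (Equiv.swap i j) fun k => ((y - x) k).natAbs]
  simp only [Pi.sub_apply, signedSwap_apply, ← mul_sub, Int.natAbs_mul, Int.natAbs_of_isUnit,
    Units.isUnit, one_mul]

lemma signedSwap_mem_cube (i j : Fin d) (τ : Fin d → ℤˣ) (x : Fin d → ℤ) (r : ℤ) :
    signedSwap i j τ x ∈ cube 0 r ↔ x ∈ cube 0 r := by
  simp only [mem_cube, signedSwap_apply, Pi.zero_apply, sub_zero, abs_mul, abs_coe_units_int,
    one_mul]
  exact (Equiv.swap i j).forall_congr_left.trans (by simp)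

lemma conn_signedSwap (i j : Fin d) (τ : Fin d → ℤˣ) {P : Set (Fin d → ℤ)} {x y : Fin d → ℤ} :
    Conn Adj P (signedSwap i j τ x) (signedSwap i j τ y) ↔
      Conn Adj (signedSwap i j τ ⁻¹' P) x y := by
  refine ⟨fun h => ?_, Conn.map _ (fun _ _ => (adj_signedSwap ..).2) (Set.mapsTo_preimage _ _)⟩
  simpa using h.map (adj' := Adj) (Q := signedSwap i j τ ⁻¹' P) (signedSwap i j τ).symm
    (fun a b h => by rw [← adj_signedSwap i j τ]; simpa using h) fun a ha => by simpa using ha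

lemma mem_hitSet_comp_signedSwap (i j : Fin d) (τ : Fin d → ℤˣ) (m n : ℕ)
    (ξ : (Fin d → ℤ) → Bool) (x : Fin d → ℤ) :
    x ∈ hitSet m n (fun y => ξ (signedSwap i j τ y)) ↔ signedSwap i j τ x ∈ hitSet m n ξ := by
  have hset : openSites (fun y => ξ (signedSwap i j τ y)) ∩ cube 0 n =
      signedSwap i j τ ⁻¹' (openSites ξ ∩ cube 0 n) := by
    ext y; exact and_congr Iff.rfl (signedSwap_mem_cube ..).symm
  simp only [hitSet, Set.mem_ofPred_eq, signedSwap_mem_cube, hset]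
  refine and_congr Iff.rfl (and_congr ?_ ?_)
  · simp only [signedSwap_apply, abs_mul, abs_coe_units_int, one_mul]
    exact (Equiv.swap i j).exists_congr_left.trans (by simp)
  · refine Iff.trans ?_ (signedSwap i j τ).surjective.exists.symm
    simp only [signedSwap_mem_cube, conn_signedSwap]

/-- A piece of the boundary of `cube 0 n`: the face in direction `i` cut by an orthant. -/
def facePiece (i : Fin d) (τ : Fin d → ℤˣ) (n : ℕ) : Set (Fin d → ℤ) :=
  {x | τ i * x i = n ∧ ∀ k, 0 ≤ τ k * x k}

lemma signedSwap_mem_facePiece (i j : Fin d) (τ : Fin d → ℤˣ) (n : ℕ) (x : Fin d → ℤ) :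
    signedSwap i j τ x ∈ facePiece j τ n ↔ x ∈ facePiece i 1 n := by
  simp only [facePiece, Set.mem_ofPred_eq, signedSwap_apply, ← mul_assoc, ← Units.val_mul,
    Int.units_mul_self, Units.val_one, Pi.one_apply, one_mul, Equiv.swap_apply_right]
  exact and_congr Iff.rfl ((Equiv.swap i j).forall_congr_left.trans (by simp))

lemma exists_mem_facePiece {m n : ℕ} {ξ : (Fin d → ℤ) → Bool} {x : Fin d → ℤ}
    (hx : x ∈ hitSet m n ξ) : ∃ a : Fin d × (Fin d → ℤˣ), x ∈ facePiece a.1 a.2 n := by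
  obtain ⟨-, ⟨k, hk⟩, -⟩ := hx
  have hsign (k : Fin d) : ((if 0 ≤ x k then 1 else -1 : ℤˣ) : ℤ) * x k = |x k| := by
    split_ifs with h
    · simp [abs_of_nonneg h]
    · simp [abs_of_neg (not_le.1 h)]
  exact ⟨(k, fun k => if 0 ≤ x k then 1 else -1), by rw [hsign, hk],
    fun k => by rw [hsign]; exact abs_nonneg _⟩

/-- The event that at least `K` points of a given boundary piece are reached. -/
def facePieceEvent (m n K : ℕ) (i : Fin d) (τ : Fin d → ℤˣ) : Set ((Fin d → ℤ) → Bool) :=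
  {ξ | K ≤ (hitSet m n ξ ∩ facePiece i τ n).ncard}

lemma determinedBy_facePieceEvent (m n K : ℕ) (i : Fin d) (τ : Fin d → ℤˣ) :
    DeterminedBy (facePieceEvent m n K i τ) (cube 0 n) :=
  determinedBy_hitSet m n fun X => K ≤ (X ∩ facePiece i τ n).ncard

lemma measurableSet_facePieceEvent (m n K : ℕ) (i : Fin d) (τ : Fin d → ℤˣ) :
    MeasurableSet (facePieceEvent m n K i τ) :=
  (determinedBy_facePieceEvent m n K i τ).measurableSet (finite_cube _ _)

lemma isUpperSet_facePieceEvent (m n K : ℕ) (i : Fin d) (τ : Fin d → ℤˣ) :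
    IsUpperSet (facePieceEvent m n K i τ) :=
  fun _ ξ' h hK => hK.trans (Set.ncard_le_ncard (Set.inter_subset_inter_left _
    (hitSet_mono m n h)) ((finite_hitSet m n ξ').subset Set.inter_subset_left))

lemma prob_facePieceEvent_eq (p : unitInterval) (m n K : ℕ) (i j : Fin d) (τ : Fin d → ℤˣ) :
    ℙ[fun _ => p] (facePieceEvent m n K j τ) = ℙ[fun _ => p] (facePieceEvent m n K i 1) := by
  rw [← prob_preimage_comp (fun _ : Fin d → ℤ => p) (signedSwap i j τ).injective
    (measurableSet_facePieceEvent m n K i 1)]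
  congr 1
  ext ξ
  have : signedSwap i j τ '' (hitSet m n (fun y => ξ (signedSwap i j τ y)) ∩ facePiece i 1 n) =
      hitSet m n ξ ∩ facePiece j τ n := by
    ext x
    obtain ⟨x, rfl⟩ := (signedSwap i j τ).surjective x
    rw [(signedSwap i j τ).injective.mem_set_image]
    exact and_congr (mem_hitSet_comp_signedSwap ..) (signedSwap_mem_facePiece ..).symm
  simp only [facePieceEvent, Set.mem_ofPred_eq, ← this,
    Set.ncard_image_of_injective _ (signedSwap i j τ).injective]

lemma iInter_compl_facePieceEvent_subset (m n K : ℕ) :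
    ⋂ a : Fin d × (Fin d → ℤˣ), (facePieceEvent m n K a.1 a.2)ᶜ ⊆
      {ξ | (hitSet m n ξ).ncard ≤ Fintype.card (Fin d × (Fin d → ℤˣ)) * K} := by
  intro ξ hξ
  have hcover : hitSet m n ξ ⊆
      ⋃ a ∈ (Finset.univ : Finset (Fin d × (Fin d → ℤˣ))), hitSet m n ξ ∩ facePiece a.1 a.2 n :=
    fun x hx => (exists_mem_facePiece hx).elim fun a ha =>
      Set.mem_iUnion₂.2 ⟨a, Finset.mem_univ a, hx, ha⟩
  refine (Set.ncard_le_ncard hcover ((finite_hitSet m n ξ).subset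
    (Set.iUnion₂_subset fun _ _ => Set.inter_subset_left))).trans
    ((Finset.set_ncard_biUnion_le _ _).trans ?_)
  exact (Finset.sum_le_card_nsmul _ _ K fun a _ =>
    (Nat.lt_of_not_le (Set.mem_iInter.1 hξ a)).le).trans_eq (by simp)

/-- The square root trick: by symmetry and positive association, if few points were reached on
some piece with probability more than `η`, this would happen on all pieces simultaneously with
probability more than a power of `η`. -/
lemma exists_prob_compl_facePieceEvent_le (p : unitInterval) (hp : (p : ℝ) < 1)
    (hperc : bernoulliProd (fun _ : Fin d → ℤ => p) (Perc d) ≠ 0) {η : ℝ} (hη : 0 < η) :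
    ∃ m : ℕ, ∀ K : ℕ, ∃ n₀ : ℕ, ∀ n ≥ n₀, ∀ (i : Fin d) (τ : Fin d → ℤˣ),
      ℙ[fun _ => p] (facePieceEvent m n K i τ)ᶜ ≤ η := by
  let κ := Fin d × (Fin d → ℤˣ)
  obtain ⟨m, hm⟩ := exists_prob_ncard_hitSet_le p hp hperc (pow_pos hη (Fintype.card κ))
  refine ⟨m, fun K => (hm (Fintype.card κ * K)).imp fun n₀ hn₀ n hn i τ => ?_⟩
  have hsymm (a : κ) : ℙ[fun _ => p] (facePieceEvent m n K a.1 a.2)ᶜ =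
      ℙ[fun _ => p] (facePieceEvent m n K i τ)ᶜ := by
    simp only [probReal_compl_eq_one_sub (measurableSet_facePieceEvent ..),
      prob_facePieceEvent_eq p m n K i]
  have hpow : ℙ[fun _ => p] (facePieceEvent m n K i τ)ᶜ ^ Fintype.card κ ≤
      η ^ Fintype.card κ :=
    calc _ = ∏ a : κ, ℙ[fun _ => p] (facePieceEvent m n K a.1 a.2)ᶜ := by
          simp only [hsymm, Finset.prod_const, Finset.card_univ]
      _ ≤ ℙ[fun _ => p] (⋂ a ∈ Finset.univ, (facePieceEvent m n K (a : κ).1 a.2)ᶜ) :=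
          prod_prob_le_prob_biInter_of_isLowerSet _
            (fun a => (isUpperSet_facePieceEvent m n K a.1 a.2).compl)
            (fun a => (determinedBy_facePieceEvent m n K a.1 a.2).compl) (finite_cube _ _)
      _ ≤ _ := (measureReal_mono (by
          simpa only [Finset.mem_univ, Set.iInter_true] using
            iInter_compl_facePieceEvent_subset m n K)).trans (hn₀ n hn)
  have hcard : Fintype.card κ ≠ 0 := (Fintype.card_pos_iff.2 ⟨(i, τ)⟩).ne'
  exact (pow_le_pow_iff_left₀ measureReal_nonneg hη.le hcard).1 hpow

end Symmetry

/-! ### Exploring a layered configuration -/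

section Exploration

variable {V : Type*} (adj : V → V → Prop) (Λ Q D R R₀ : Set V) (r : ℕ) (β : V → ℕ)
  (ω : V × ℕ → Bool)

/-- The weights of a layered configuration: `p` on the bottom layer and `δ` on the others. -/
def layerWeight (p δ : unitInterval) : V × ℕ → unitInterval :=
  fun a => if a.2 = 0 then p else δ

/-- The sites of `Λ` which are open in a layer below `r` not yet used. Here and below `β z` is the
number of layers already used at the site `z`. -/
def availableSites : Set V := {z | z ∈ Λ ∧ ∃ l, β z ≤ l ∧ l < r ∧ ω (z, l) = true}

/-- The event that the target `Q` is reached from `R` using only unused layers. -/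
def reachEvent : Set (V × ℕ → Bool) :=
  {ω | ∃ x ∈ R, ∃ y ∈ Q, Conn adj (availableSites Λ r β ω) x y}

/-- The set reached from `R` inside `D` by looking at the first unused layer. -/
def explored : Set V :=
  {y | ∃ x ∈ R, Conn adj {z | z ∈ D ∧ z ∉ R ∧ ω (z, β z) = true} x y}

open Classical in
/-- The number of used layers after an exploration of `D` from `R` with outcome `R₀`. -/
noncomputable def layersAfter : V → ℕ :=
  fun y => if y ∈ D ∧ y ∉ R ∧ ∃ x ∈ R₀, adj x y then β y + 1 else β y

lemma le_layersAfter (y : V) : β y ≤ layersAfter adj D R R₀ β y := by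
  unfold layersAfter; split_ifs <;> omega

lemma layersAfter_le (y : V) : layersAfter adj D R R₀ β y ≤ β y + 1 := by
  unfold layersAfter; split_ifs <;> omega

variable {D R} in
lemma layersAfter_of_notMem {y : V} (hy : y ∉ D) : layersAfter adj D R R₀ β y = β y :=
  if_neg fun h => hy h.1

lemma subset_explored : R ⊆ explored adj D R β ω := fun x hx => ⟨x, hx, Conn.refl⟩

lemma explored_subset : explored adj D R β ω ⊆ R ∪ D := by
  rintro y ⟨x, hx, h⟩
  rcases h.eq_or_mem with rfl | h
  exacts [.inl hx, .inr h.1]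

variable {adj Λ Q D R R₀ r β ω}

lemma mem_explored_of_adj {a b : V} (ha : a ∈ explored adj D R β ω) (hab : adj a b) (hb : b ∈ D)
    (h : b ∈ R ∨ ω (b, β b) = true) : b ∈ explored adj D R β ω := by
  by_cases hR : b ∈ R
  · exact subset_explored _ _ _ _ _ hR
  · obtain ⟨x, hx, hxa⟩ := ha
    exact ⟨x, hx, hxa.tail hab ⟨hb, hR, h.resolve_left hR⟩⟩

lemma determinedBy_reachEvent : DeterminedBy (reachEvent adj Λ Q R r β)
    {a | a.1 ∈ Λ ∧ a.1 ∉ R ∧ β a.1 ≤ a.2 ∧ a.2 < r} := by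
  refine .of_imp fun ω ω' h => ?_
  rintro ⟨x, hx, y, hy, hxy⟩
  obtain ⟨z, hz, -, hzy⟩ := hxy.exists_last_exit hx
  refine ⟨z, hz, y, hy, hzy.mono ?_⟩
  rintro a ⟨⟨ha, l, hβ, hr, hopen⟩, haR⟩
  exact ⟨ha, l, hβ, hr, h (a, l) ⟨ha, haR, hβ, hr⟩ ▸ hopen⟩

lemma explored_eq_of_forall_eq {ω' : V × ℕ → Bool} (h : ∀ a : V × ℕ, a.1 ∈ D → a.1 ∉ R →
    (∃ x ∈ explored adj D R β ω, adj x a.1) → a.2 = β a.1 → ω a = ω' a) :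
    explored adj D R β ω' = explored adj D R β ω := by
  have hR {ω} : R ⊆ explored adj D R β ω := subset_explored _ _ _ _ _
  refine Set.Subset.antisymm ?_ ?_
  · rintro y ⟨x, hx, hxy⟩
    induction hxy with
    | refl => exact hR hx
    | @tail a b _ hab ih =>
      obtain ⟨hab, hb, hbR, hopen⟩ := hab
      exact mem_explored_of_adj ih hab hb (.inr (h (b, β b) hb hbR ⟨a, ih, hab⟩ rfl ▸ hopen))
  · rintro y ⟨x, hx, hxy⟩
    suffices y ∈ explored adj D R β ω ∧ y ∈ explored adj D R β ω' from this.2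
    induction hxy with
    | refl => exact ⟨hR hx, hR hx⟩
    | @tail a b _ hab ih =>
      obtain ⟨hab, hb, hbR, hopen⟩ := hab
      exact ⟨mem_explored_of_adj ih.1 hab hb (.inr hopen), mem_explored_of_adj ih.2 hab hb
        (.inr (h (b, β b) hb hbR ⟨a, ih.1, hab⟩ rfl ▸ hopen))⟩

lemma determinedBy_explored : DeterminedBy {ω | explored adj D R β ω = R₀}
    {a | a.1 ∈ D ∧ a.1 ∉ R ∧ (∃ x ∈ R₀, adj x a.1) ∧ a.2 = β a.1} := by
  refine .of_imp fun ω ω' h => ?_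
  rintro rfl
  exact explored_eq_of_forall_eq fun a hD hR hadj hβ => h a ⟨hD, hR, hadj, hβ⟩

lemma finite_range_explored (hD : D.Finite) : (Set.range (explored adj D R β)).Finite := by
  refine (hD.finite_subsets.image (R ∪ ·)).subset ?_
  rintro _ ⟨ω, rfl⟩
  refine ⟨explored adj D R β ω ∩ D, Set.inter_subset_right, ?_⟩
  change R ∪ explored adj D R β ω ∩ D = explored adj D R β ω
  rw [Set.union_inter_distrib_left, Set.union_eq_self_of_subset_left (subset_explored ..),
    Set.inter_eq_left]
  exact explored_subset ..

lemma disjointlyDetermined_explored_reachEvent (hΛ : Λ.Finite) (hD : D ⊆ Λ) :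
    DisjointlyDetermined {ω | explored adj D R β ω = R₀}
      (reachEvent adj Λ Q R₀ r (layersAfter adj D R R₀ β)) := by
  refine ⟨_, _, ?_, ?_, ?_, determinedBy_explored, determinedBy_reachEvent⟩
  · exact ((hΛ.subset hD).image fun y => (y, β y)).subset
      fun a h => ⟨a.1, h.1, Prod.ext rfl h.2.2.2.symm⟩
  · exact (hΛ.prod (Set.finite_Iio r)).subset fun _ h => ⟨h.1, h.2.2.2⟩
  · refine Set.disjoint_left.2 ?_
    rintro ⟨y, l⟩ ⟨hyD, hyR, hadj, hl⟩ ⟨-, -, hle, -⟩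
    rw [layersAfter, if_pos ⟨hyD, hyR, hadj⟩, hl] at hle
    exact Nat.not_succ_le_self _ hle

lemma reachEvent_of_explored (hD : D ⊆ Λ) (hβ : ∀ y ∈ D, β y < r)
    (h : ω ∈ reachEvent adj Λ Q (explored adj D R β ω) r
      (layersAfter adj D R (explored adj D R β ω) β)) : ω ∈ reachEvent adj Λ Q R r β := by
  obtain ⟨x, ⟨a, ha, hax⟩, y, hy, hxy⟩ := h
  refine ⟨a, ha, y, hy, (hax.mono ?_).trans (hxy.mono ?_)⟩
  · exact fun z ⟨hzD, _, hopen⟩ => ⟨hD hzD, β z, le_rfl, hβ z hzD, hopen⟩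
  · exact fun z ⟨hz, l, hl, hlr, hopen⟩ => ⟨hz, l, (le_layersAfter ..).trans hl, hlr, hopen⟩

/-- After an exploration step satisfying `G` with probability at least `1 - ε`, the probability of
reaching the target from the explored set is averaged. -/
lemma le_prob_reachEvent (w : V × ℕ → unitInterval) (hΛ : Λ.Finite) (hD : D ⊆ Λ)
    (hβ : ∀ y ∈ D, β y < r) (G : Set V → Prop) {q₀ q₁ ε : ℝ} (hq : q₀ ≤ q₁)
    (h₀ : ∀ ω, q₀ ≤ ℙ[w] (reachEvent adj Λ Q (explored adj D R β ω) r
      (layersAfter adj D R (explored adj D R β ω) β)))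
    (h₁ : ∀ ω, G (explored adj D R β ω) → q₁ ≤ ℙ[w] (reachEvent adj Λ Q (explored adj D R β ω) r
      (layersAfter adj D R (explored adj D R β ω) β)))
    (hG : ℙ[w] {ω | ¬ G (explored adj D R β ω)} ≤ ε) :
    (1 - ε) * q₁ + ε * q₀ ≤ ℙ[w] (reachEvent adj Λ Q R r β) := by
  let F := explored adj D R β
  let C (R₀ : Set V) := reachEvent adj Λ Q R₀ r (layersAfter adj D R R₀ β)
  have hF : (Set.range F).Finite := finite_range_explored (hΛ.subset hD)
  have hFC ω : DisjointlyDetermined {ω' | F ω' = F ω} (C (F ω)) :=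
    disjointlyDetermined_explored_reachEvent hΛ hD
  have hgood := mul_prob_le_prob_and_mem (w := w) (G := G) hF (fun ω _ => hFC ω) h₁
  have hbad := mul_prob_le_prob_and_mem (w := w) (G := (¬ G ·)) hF (fun ω _ => hFC ω)
    fun ω _ => h₀ ω
  have hmeas : MeasurableSet {ω | G (F ω)} := by
    simpa using measurableSet_setOf_and_mem (G := G) (C := fun _ => Set.univ) hF
      fun ω _ => (hFC ω).univ_right
  have hcompl : ℙ[w] {ω | ¬ G (F ω)} = 1 - ℙ[w] {ω | G (F ω)} := probReal_compl_eq_one_sub hmeas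
  have hadd : ℙ[w] {ω | G (F ω) ∧ ω ∈ C (F ω)} + ℙ[w] {ω | ¬ G (F ω) ∧ ω ∈ C (F ω)} ≤
      ℙ[w] (reachEvent adj Λ Q R r β) := by
    have hdisj : Disjoint {ω | G (F ω) ∧ ω ∈ C (F ω)} {ω | ¬ G (F ω) ∧ ω ∈ C (F ω)} :=
      Set.disjoint_left.2 fun ω h h' => h'.1 h.1
    rw [← measureReal_union hdisj
      (measurableSet_setOf_and_mem (G := (¬ G ·)) hF fun ω _ => hFC ω)]
    exact measureReal_mono (Set.union_subset (fun ω h => reachEvent_of_explored hD hβ h.2)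
      fun ω h => reachEvent_of_explored hD hβ h.2)
  have hε : ℙ[w] {ω | ¬ G (F ω)} * (q₁ - q₀) ≤ ε * (q₁ - q₀) :=
    mul_le_mul_of_nonneg_right hG (sub_nonneg.2 hq)
  have hgoal : ℙ[w] {ω | G (F ω)} = 1 - ℙ[w] {ω | ¬ G (F ω)} := by linarith
  rw [hgoal] at hgood
  linarith

end Exploration

/-! ### Seeds attached to the boundary of a cube -/

section Seed

variable {d : ℕ}

lemma add_mem_cube {c y : Fin d → ℤ} {r : ℤ} : y + c ∈ cube c r ↔ y ∈ cube 0 r := by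
  simp [mem_cube]

lemma cube_eq_image (c : Fin d → ℤ) (r : ℤ) : cube c r = (· + c) '' cube 0 r := by
  ext x
  exact ⟨fun h => ⟨x - c, add_mem_cube.1 ((sub_add_cancel x c).symm ▸ h), sub_add_cancel x c⟩,
    by rintro ⟨y, hy, rfl⟩; exact add_mem_cube.2 hy⟩

lemma ncard_cube (c : Fin d → ℤ) (r : ℤ) : (cube c r).ncard = (cube (0 : Fin d → ℤ) r).ncard := by
  rw [cube_eq_image, Set.ncard_image_of_injective _ (add_left_injective c)]

lemma exists_separated_subset {X : Set (Fin d → ℤ)} (hX : X.Finite) {m K : ℕ}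
    (hK : K * (2 * m + 1) ^ d ≤ X.ncard) :
    ∃ T : Finset (Fin d → ℤ), ↑T ⊆ X ∧ T.card = K ∧
      (T : Set (Fin d → ℤ)).Pairwise fun x x' => ∃ k, 2 * m < |x k - x' k| := by
  let residue (x : Fin d → ℤ) (k : Fin d) : ZMod (2 * m + 1) := x k
  classical
  obtain ⟨v, -, hv⟩ := Finset.exists_le_card_fiber_of_mul_le_card_of_maps_to
    (s := hX.toFinset) (t := Finset.univ) (f := residue) (n := K) (fun _ _ => Finset.mem_univ _)
    ⟨0, Finset.mem_univ _⟩ (by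
      rw [← Set.ncard_eq_toFinset_card X hX]
      simpa [ZMod.card, mul_comm] using hK)
  obtain ⟨T, hT, hcard⟩ := Finset.exists_subset_card_eq hv
  have hTv x (hx : x ∈ T) : x ∈ X ∧ residue x = v := by simpa using hT hx
  refine ⟨T, fun x hx => (hTv x hx).1, hcard, fun x hx x' hx' hne => ?_⟩
  obtain ⟨k, hk⟩ := Function.ne_iff.1 hne
  refine ⟨k, lt_of_not_ge fun hle => hk ?_⟩
  have hres : (x' k : ZMod (2 * m + 1)) = x k :=
    congrFun ((hTv x' hx').2.trans (hTv x hx).2.symm) k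
  have hdvd : (2 * m + 1 : ℤ) ∣ x k - x' k := by
    exact_mod_cast (ZMod.intCast_eq_intCast_iff_dvd_sub _ _ _).1 hres
  exact sub_eq_zero.1 (Int.eq_zero_of_abs_lt_dvd hdvd (by omega))

/-- The event that all sites of `S` outside `R` are open in their first unused layer. -/
def seedEvent {V : Type*} (S R : Set V) (β : V → ℕ) : Set (V × ℕ → Bool) :=
  {ω | ∀ y ∈ S, y ∈ R ∨ ω (y, β y) = true}

lemma determinedBy_seedEvent {V : Type*} (S R : Set V) (β : V → ℕ) :
    DeterminedBy (seedEvent S R β) ((fun y => (y, β y)) '' S) :=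
  .of_imp fun _ _ h hω y hy => (hω y hy).imp_right fun hy' => h _ ⟨y, hy, rfl⟩ ▸ hy'

lemma injective_prodMk {V W : Type*} (f : V → W) : Function.Injective fun y => (y, f y) :=
  fun _ _ h => congrArg Prod.fst h

lemma pow_ncard_le_prob_seedEvent {V : Type*} (w : V × ℕ → unitInterval) {ρ : ℝ} (hρ : 0 ≤ ρ)
    (hw : ∀ a, ρ ≤ w a) {S : Set V} (hS : S.Finite) (R : Set V) (β : V → ℕ) :
    ρ ^ S.ncard ≤ ℙ[w] (seedEvent S R β) :=
  (pow_ncard_le_prob_cylinder_image hS (injective_prodMk β).injOn hρ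
    fun y _ => by simpa [prob_coord] using hw (y, β y)).trans
    (measureReal_mono fun _ hω y hy => .inr (hω y hy))

/-- The centre of the seed attached from outside to the boundary point `c + x` of a cube around
`c`. -/
def seedCenter (c : Fin d → ℤ) (i : Fin d) (τ : Fin d → ℤˣ) (m : ℕ) (x : Fin d → ℤ) : Fin d → ℤ :=
  c + x + Pi.single i ((τ i : ℤ) * (m + 1))

variable {c : Fin d → ℤ} {i : Fin d} {τ : Fin d → ℤˣ} {m n : ℕ} {x y : Fin d → ℤ}

lemma seedCenter_apply_self : seedCenter c i τ m x i = c i + x i + τ i * (m + 1) := by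
  simp [seedCenter]

lemma seedCenter_apply_of_ne {k : Fin d} (h : k ≠ i) : seedCenter c i τ m x k = c k + x k := by
  simp [seedCenter, h]

lemma apply_eq_of_mem_facePiece (hx : x ∈ facePiece i τ n) : x i = τ i * n := by
  rw [← hx.1, ← mul_assoc, ← Units.val_mul, Int.units_mul_self, Units.val_one, one_mul]

lemma cube_seedCenter_subset (hx : x ∈ facePiece i τ n) (hx' : x ∈ cube 0 n) :
    cube (seedCenter c i τ m x) m ⊆ cube c (n + 2 * m + 1) := by
  intro y hy
  rw [mem_cube] at hy hx' ⊢
  intro k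
  have hyk := hy k
  have hxk := hx' k
  by_cases hk : k = i
  · subst hk
    rw [seedCenter_apply_self, apply_eq_of_mem_facePiece hx] at hyk
    rcases Int.units_eq_one_or (τ k) with h | h <;> rw [h] at hyk <;> push_cast at hyk <;>
      rw [abs_le] at hyk ⊢ <;> omega
  · rw [seedCenter_apply_of_ne hk] at hyk
    simp only [Pi.zero_apply] at hxk
    rw [abs_le] at *; omega

lemma disjoint_cube_seedCenter (hx : x ∈ facePiece i τ n) :
    Disjoint (cube (seedCenter c i τ m x) m) (cube c n) := by
  refine Set.disjoint_left.2 fun y hy hyn => ?_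
  have hyi := mem_cube.1 hy i
  have hyi' := mem_cube.1 hyn i
  rw [seedCenter_apply_self, apply_eq_of_mem_facePiece hx] at hyi
  rcases Int.units_eq_one_or (τ i) with h | h <;> rw [h] at hyi <;> push_cast at hyi <;>
    rw [abs_le] at hyi hyi' <;> omega

lemma disjoint_cube_seedCenter_of_lt {x' : Fin d → ℤ} {k : Fin d} (h : 2 * m < |x k - x' k|) :
    Disjoint (cube (seedCenter c i τ m x) m) (cube (seedCenter c i τ m x') m) := by
  refine Set.disjoint_left.2 fun y hy hy' => h.not_ge ?_
  have hyk := mem_cube.1 hy k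
  have hyk' := mem_cube.1 hy' k
  have hsub : seedCenter c i τ m x k - seedCenter c i τ m x' k = x k - x' k := by simp [seedCenter]
  rw [abs_le] at *
  omega

lemma prob_no_seed_le (w : (Fin d → ℤ) × ℕ → unitInterval) {ρ : ℝ} (hρ : 0 ≤ ρ)
    (hw : ∀ a, ρ ≤ w a) (R : Set (Fin d → ℤ)) (β : (Fin d → ℤ) → ℕ) {K : ℕ}
    {X : Set (Fin d → ℤ)} (hX : X.Finite) (hK : K * (2 * m + 1) ^ d ≤ X.ncard) :
    ℙ[w] {ω | ∀ x ∈ X, ω ∉ seedEvent (cube (seedCenter c i τ m x) m) R β} ≤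
      (1 - ρ ^ (cube (0 : Fin d → ℤ) m).ncard) ^ K := by
  obtain ⟨T, hTX, hcard, hsep⟩ := exists_separated_subset hX hK
  let S x := cube (seedCenter c i τ m x) m
  have hdet x := determinedBy_seedEvent (S x) R β
  have hfin x : ((fun y => (y, β y)) '' S x).Finite := (finite_cube _ _).image _
  calc ℙ[w] {ω | ∀ x ∈ X, ω ∉ seedEvent (S x) R β}
      ≤ ℙ[w] (⋂ x ∈ T, (seedEvent (S x) R β)ᶜ) :=
        measureReal_mono fun _ hω => Set.mem_iInter₂.2 fun x hx => hω x (hTX hx)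
    _ = ∏ x ∈ T, ℙ[w] (seedEvent (S x) R β)ᶜ :=
        prob_biInter_of_pairwiseDisjoint T (fun x _ => hfin x) (fun x _ => (hdet x).compl)
          fun x hx x' hx' hne => (Set.disjoint_image_iff (injective_prodMk β)).2
            ((hsep hx hx' hne).elim fun _ => disjoint_cube_seedCenter_of_lt)
    _ ≤ ∏ _x ∈ T, (1 - ρ ^ (cube (0 : Fin d → ℤ) m).ncard) := by
        refine Finset.prod_le_prod (fun _ _ => measureReal_nonneg) fun x _ => ?_
        rw [probReal_compl_eq_one_sub ((hdet x).measurableSet (hfin x)),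
          ← ncard_cube (seedCenter c i τ m x)]
        exact sub_le_sub_left (pow_ncard_le_prob_seedEvent w hρ hw (finite_cube _ _) R β) 1
    _ = (1 - ρ ^ (cube (0 : Fin d → ℤ) m).ncard) ^ K := by rw [Finset.prod_const, hcard]

/-- The bottom layer of a layered configuration, seen from `c`. -/
def bottomLayer (c : Fin d → ℤ) (ω : (Fin d → ℤ) × ℕ → Bool) : (Fin d → ℤ) → Bool :=
  fun y => ω (y + c, 0)

lemma prob_bottomLayer_mem (p δ : unitInterval) (c : Fin d → ℤ) {A : Set ((Fin d → ℤ) → Bool)}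
    (hA : MeasurableSet A) :
    ℙ[layerWeight p δ] {ω | bottomLayer c ω ∈ A} = ℙ[fun _ => p] A := by
  have hinj : Function.Injective fun y : Fin d → ℤ => (y + c, 0) :=
    fun _ _ h => add_left_injective c (congrArg Prod.fst h)
  exact prob_preimage_comp (layerWeight p δ) hinj hA

/-- The points of the prescribed piece of the boundary of a cube around `c` which are reached from
the inner cube in the bottom layer. -/
def faceHits (c : Fin d → ℤ) (i : Fin d) (τ : Fin d → ℤˣ) (m n : ℕ)
    (ω : (Fin d → ℤ) × ℕ → Bool) : Set (Fin d → ℤ) :=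
  hitSet m n (bottomLayer c ω) ∩ facePiece i τ n

lemma faceHits_subset_cube (ω : (Fin d → ℤ) × ℕ → Bool) : faceHits c i τ m n ω ⊆ cube 0 n :=
  Set.inter_subset_left.trans (hitSet_subset _ _ _)

lemma determinedBy_faceHits (P : Set (Fin d → ℤ) → Prop) :
    DeterminedBy {ω | P (faceHits c i τ m n ω)} ((fun y => (y, 0)) '' cube c n) :=
  .of_imp fun _ _ h hω => ((determinedBy_hitSet m n fun X => P (X ∩ facePiece i τ n)).mem_iff
    fun y hy => h _ ⟨y + c, add_mem_cube.2 hy, rfl⟩).1 hω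

lemma finite_range_faceHits : (Set.range (faceHits c i τ m n)).Finite :=
  (finite_cube 0 n).finite_subsets.subset (Set.range_subset_iff.2 faceHits_subset_cube)

lemma disjointlyDetermined_faceHits_seeds (R : Set (Fin d → ℤ)) (β : (Fin d → ℤ) → ℕ)
    (ω : (Fin d → ℤ) × ℕ → Bool) :
    DisjointlyDetermined {ω' | faceHits c i τ m n ω' = faceHits c i τ m n ω}
      {ω' | ∀ x ∈ faceHits c i τ m n ω,
        ω' ∉ seedEvent (cube (seedCenter c i τ m x) m) R β} := by
  refine ⟨_, (fun y => (y, β y)) '' (cube c (n + 2 * m + 1) \ cube c n),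
    (finite_cube c n).image _, ((finite_cube _ _).subset Set.sdiff_subset).image _, ?_,
    determinedBy_faceHits (· = faceHits c i τ m n ω), .of_imp fun ω' ω'' h hω' x hx => ?_⟩
  · rw [Set.disjoint_left]
    rintro _ ⟨y, hy, rfl⟩ ⟨_, hy', h⟩
    obtain rfl := congrArg Prod.fst h
    exact hy'.2 hy
  · have hsub : cube (seedCenter c i τ m x) m ⊆ cube c (n + 2 * m + 1) \ cube c n :=
      Set.subset_sdiff.2 ⟨cube_seedCenter_subset hx.2 (faceHits_subset_cube ω hx),
        disjoint_cube_seedCenter hx.2⟩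
    exact mt (((determinedBy_seedEvent _ R β).mono (Set.image_mono hsub)).mem_iff h).2 (hω' x hx)

lemma prob_no_hit_seed_le (p δ : unitInterval) (R : Set (Fin d → ℤ)) (β : (Fin d → ℤ) → ℕ)
    {η ρ : ℝ} {K K' : ℕ} (hρ : 0 ≤ ρ) (hρp : ρ ≤ p) (hρδ : ρ ≤ δ)
    (hface : ℙ[fun _ => p] (facePieceEvent m n K i τ)ᶜ ≤ η) (hK : K' * (2 * m + 1) ^ d ≤ K) :
    ℙ[layerWeight p δ] {ω | ∀ x ∈ faceHits c i τ m n ω,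
        ω ∉ seedEvent (cube (seedCenter c i τ m x) m) R β} ≤
      η + (1 - ρ ^ (cube (0 : Fin d → ℤ) m).ncard) ^ K' := by
  let w := layerWeight (V := Fin d → ℤ) p δ
  let C (X : Set (Fin d → ℤ)) : Set ((Fin d → ℤ) × ℕ → Bool) :=
    {ω | ∀ x ∈ X, ω ∉ seedEvent (cube (seedCenter c i τ m x) m) R β}
  have hw a : ρ ≤ w a := by simp only [w, layerWeight]; split_ifs <;> assumption
  have hmany : ℙ[w] {ω | K ≤ (faceHits c i τ m n ω).ncard ∧ ω ∈ C (faceHits c i τ m n ω)} ≤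
      (1 - ρ ^ (cube (0 : Fin d → ℤ) m).ncard) ^ K' :=
    (prob_and_mem_le_mul_prob (G := (K ≤ ·.ncard)) finite_range_faceHits
      (fun ω _ => disjointlyDetermined_faceHits_seeds R β ω)
      fun ω hω => prob_no_seed_le w hρ hw R β ((finite_cube _ _).subset (faceHits_subset_cube ω))
        (hK.trans hω)).trans
      (mul_le_of_le_one_right
        (pow_nonneg (sub_nonneg.2 (pow_le_one₀ hρ (hρp.trans p.2.2))) _) measureReal_le_one)
  have hfew : ℙ[w] {ω | bottomLayer c ω ∈ (facePieceEvent m n K i τ)ᶜ} ≤ η :=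
    (prob_bottomLayer_mem p δ c (measurableSet_facePieceEvent ..).compl).trans_le hface
  refine le_trans (measureReal_mono fun ω hω => ?_)
    ((measureReal_union_le _ _).trans (add_le_add hfew hmany))
  by_cases hc : K ≤ (faceHits c i τ m n ω).ncard
  exacts [.inr ⟨hc, hω⟩, .inl hc]

end Seed

/-! ### One step of the renormalization -/

section Step

variable {d : ℕ}

/-- The used sites (those in `R`, or with a used layer) in a cube around `c` from which a boundary
point carrying a good seed can be reached through unused sites of the cube. -/
def approachSites (c : Fin d → ℤ) (i : Fin d) (τ : Fin d → ℤˣ) (m n : ℕ) (R : Set (Fin d → ℤ))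
    (β : (Fin d → ℤ) → ℕ) (ω : (Fin d → ℤ) × ℕ → Bool) : Set (Fin d → ℤ) :=
  {z | z ∈ cube c n ∧ (z ∈ R ∨ 1 ≤ β z) ∧ ∃ x ∈ facePiece i τ n, x ∈ cube 0 n ∧
    ω ∈ seedEvent (cube (seedCenter c i τ m x) m) R β ∧
    Conn Adj {y | ω (y, 0) = true ∧ y ∈ cube c n ∧ y ∉ R ∧ β y = 0} z (c + x)}

/-- A step from `c` in the direction `i`, with the other coordinates moving as prescribed by the
signs `τ`, has reached a seed. -/
def StepSucceeds (c : Fin d → ℤ) (i : Fin d) (τ : Fin d → ℤˣ) (m n : ℕ) (R₀ : Set (Fin d → ℤ)) :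
    Prop :=
  ∃ c' : Fin d → ℤ, c' i = c i + τ i * (n + m + 1) ∧
    (∀ k, k ≠ i → 0 ≤ τ k * (c' k - c k) ∧ τ k * (c' k - c k) ≤ n) ∧ cube c' m ⊆ R₀

variable {c x : Fin d → ℤ} {i : Fin d} {τ : Fin d → ℤˣ} {m n : ℕ} {R : Set (Fin d → ℤ)}
  {β : (Fin d → ℤ) → ℕ} {ω : (Fin d → ℤ) × ℕ → Bool}

lemma approachSites_subset_cube : approachSites c i τ m n R β ω ⊆ cube c n := fun _ hz => hz.1

lemma finite_range_approachSites : (Set.range (approachSites c i τ m n R β)).Finite :=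
  (finite_cube c n).finite_subsets.subset
    (Set.range_subset_iff.2 fun _ => approachSites_subset_cube)

lemma determinedBy_approachSites (W : Set (Fin d → ℤ)) :
    DeterminedBy {ω | approachSites c i τ m n R β ω = W}
      ((fun y => (y, 0)) '' {y | y ∈ cube c n ∧ y ∉ R ∧ β y = 0} ∪
        (fun y => (y, β y)) '' (cube c (n + 2 * m + 1) \ cube c n)) := by
  refine .of_imp fun ω ω' h hω => ?_
  have hsites : {y | ω (y, 0) = true ∧ y ∈ cube c n ∧ y ∉ R ∧ β y = 0} =
      {y | ω' (y, 0) = true ∧ y ∈ cube c n ∧ y ∉ R ∧ β y = 0} :=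
    Set.ext fun y => and_congr_left fun hy => by rw [h (y, 0) (.inl ⟨y, hy, rfl⟩)]
  have hseed x (hx : x ∈ facePiece i τ n) (hx' : x ∈ cube 0 n) :
      ω ∈ seedEvent (cube (seedCenter c i τ m x) m) R β ↔
        ω' ∈ seedEvent (cube (seedCenter c i τ m x) m) R β := by
    refine (determinedBy_seedEvent _ R β).mem_iff ?_
    rintro _ ⟨y, hy, rfl⟩
    exact h _ (.inr ⟨y, ⟨cube_seedCenter_subset hx hx' hy,
      (disjoint_cube_seedCenter hx).notMem_of_mem_left hy⟩, rfl⟩)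
  suffices approachSites c i τ m n R β ω = approachSites c i τ m n R β ω' from this.symm.trans hω
  simp only [approachSites, hsites]
  exact Set.ext fun z => and_congr_right fun _ => and_congr_right fun _ => exists_congr fun x =>
    and_congr_right fun hx => and_congr_right fun hx' => and_congr_left fun _ => hseed x hx hx'

lemma add_single_mem_cube_seedCenter :
    c + x + Pi.single i (τ i : ℤ) ∈ cube (seedCenter c i τ m x) m := by
  rw [mem_cube]
  intro k
  by_cases hk : k = i
  · subst hk
    rw [seedCenter_apply_self, Pi.add_apply, Pi.add_apply, Pi.single_eq_same]
    rcases Int.units_eq_one_or (τ k) with h | h <;> rw [h, abs_le] <;> push_cast <;> omega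
  · simp [seedCenter_apply_of_ne hk, hk]

lemma cube_seedCenter_subset_explored (hx : x ∈ facePiece i τ n)
    (hx' : x ∈ cube 0 n) (hs : ω ∈ seedEvent (cube (seedCenter c i τ m x) m) R β)
    (h : c + x ∈ explored Adj (cube c (n + 2 * m + 1)) R β ω) :
    cube (seedCenter c i τ m x) m ⊆ explored Adj (cube c (n + 2 * m + 1)) R β ω := by
  have hstep {a b} (ha : a ∈ explored Adj (cube c (n + 2 * m + 1)) R β ω)
      (hb : b ∈ cube (seedCenter c i τ m x) m) (hab : Adj a b) :
      b ∈ explored Adj (cube c (n + 2 * m + 1)) R β ω :=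
    mem_explored_of_adj ha hab (cube_seedCenter_subset hx hx' hb) (hs b hb)
  have hentry := add_single_mem_cube_seedCenter (c := c) (i := i) (τ := τ) (m := m) (x := x)
  intro y hy
  have hconn : Conn Adj (cube (seedCenter c i τ m x) m) (c + x + Pi.single i (τ i : ℤ)) y :=
    conn_Icc hentry hy
  clear hy
  induction hconn with
  | refl => exact hstep h hentry (adj_add_single _ _ (by simpa using Int.isUnit_iff.1 (τ i).isUnit))
  | tail _ hab ih => exact hstep ih hab.2 hab.1

lemma stepSucceeds_of_cube_seedCenter_subset {R₀ : Set (Fin d → ℤ)}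
    (hx : x ∈ facePiece i τ n) (hx' : x ∈ cube 0 n) (h : cube (seedCenter c i τ m x) m ⊆ R₀) :
    StepSucceeds c i τ m n R₀ := by
  refine ⟨seedCenter c i τ m x, ?_, fun k hk => ?_, h⟩
  · rw [seedCenter_apply_self, apply_eq_of_mem_facePiece hx]; ring
  · rw [seedCenter_apply_of_ne hk, add_sub_cancel_left]
    refine ⟨hx.2 k, (le_abs_self _).trans ?_⟩
    simpa [abs_mul, abs_coe_units_int] using mem_cube.1 hx' k

lemma approachSites_of_not_stepSucceeds (hβ : ∀ y ∉ R, 1 ≤ β y → ∃ x ∈ R, Adj x y)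
    (hω : ¬ StepSucceeds c i τ m n (explored Adj (cube c (n + 2 * m + 1)) R β ω)) :
    ∀ z ∈ approachSites c i τ m n R β ω, z ∉ R ∧ 1 ≤ β z ∧ ω (z, β z) = false := by
  have hmono : cube c n ⊆ cube c (n + 2 * m + 1) := cube_mono c (by omega)
  have hR : R ⊆ explored Adj (cube c (n + 2 * m + 1)) R β ω := subset_explored ..
  intro z hz
  have hnot : z ∉ explored Adj (cube c (n + 2 * m + 1)) R β ω := by
    rintro ⟨a, ha, haz⟩
    obtain ⟨-, -, x, hx, hx', hs, hzx⟩ := hz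
    refine hω (stepSucceeds_of_cube_seedCenter_subset hx hx'
      (cube_seedCenter_subset_explored hx hx' hs ⟨a, ha, haz.trans (hzx.mono ?_)⟩))
    rintro y ⟨hopen, hyc, hyR, hy⟩
    exact ⟨hmono hyc, hyR, by rwa [hy]⟩
  have hzR : z ∉ R := fun h => hnot (hR h)
  have hzβ : 1 ≤ β z := hz.2.1.resolve_left hzR
  obtain ⟨a, ha, haz⟩ := hβ z hzR hzβ
  exact ⟨hzR, hzβ, Bool.eq_false_iff.2 fun hopen =>
    hnot (mem_explored_of_adj (hR ha) haz (hmono hz.1) (.inr hopen))⟩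

lemma notMem_seedEvent_of_approachSites_closed (hmn : m ≤ n) (hR : cube c m ⊆ R)
    (hω : ∀ z ∈ approachSites c i τ m n R β ω, z ∉ R ∧ ω (z, 0) = false) :
    ∀ x ∈ faceHits c i τ m n ω, ω ∉ seedEvent (cube (seedCenter c i τ m x) m) R β := by
  rintro x ⟨⟨hx', -, b, hb, hbx⟩, hx⟩ hs
  have hbx' : Conn Adj {y | ω (y, 0) = true ∧ y ∈ cube c n} (b + c) (c + x) := by
    rw [add_comm c x]
    exact hbx.map (· + c) (fun _ _ h => h.add_right c) fun y hy => ⟨hy.1, add_mem_cube.2 hy.2⟩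
  have hbR : b + c ∈ R := hR (add_mem_cube.2 hb)
  obtain ⟨z, hz, hz', hzx⟩ := hbx'.exists_last_exit (C := {y | y ∈ R ∨ 1 ≤ β y}) (.inl hbR)
  have hmem (hzc : z ∈ cube c n) : z ∈ approachSites c i τ m n R β ω := by
    refine ⟨hzc, hz, x, hx, hx', hs, hzx.mono ?_⟩
    rintro y ⟨⟨hopen, hyc⟩, hy⟩
    obtain ⟨hyR, hyβ⟩ := not_or.1 hy
    exact ⟨hopen, hyc, hyR, by omega⟩
  rcases hz' with rfl | ⟨hopen, hzc⟩
  · exact (hω _ (hmem (add_mem_cube.2 (cube_mono 0 (by exact_mod_cast hmn) hb)))).1 hbR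
  · exact Bool.false_ne_true ((hω z (hmem hzc)).2.symm.trans hopen)

lemma disjointlyDetermined_approachSites (l : (Fin d → ℤ) → ℕ)
    (h : ∀ z ∈ approachSites c i τ m n R β ω, z ∉ R ∧ 1 ≤ β z) :
    DisjointlyDetermined
      {ω' | approachSites c i τ m n R β ω' = approachSites c i τ m n R β ω}
      {ω' | ∀ z ∈ approachSites c i τ m n R β ω, ω' (z, l z) = false} := by
  refine ⟨_, _, ?_, ?_, ?_, determinedBy_approachSites _,
    determinedBy_cylinder_image _ (fun z => (z, l z)) _⟩
  · exact (((finite_cube c n).subset fun _ hy => hy.1).image _).union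
      (((finite_cube _ _).subset Set.sdiff_subset).image _)
  · exact ((finite_cube c n).subset approachSites_subset_cube).image _
  · rw [Set.disjoint_right]
    rintro _ ⟨z, hz, rfl⟩ (⟨y, hy, heq⟩ | ⟨y, hy, heq⟩) <;> obtain rfl := congrArg Prod.fst heq
    · exact (hy.2.2 ▸ (h _ hz).2).not_gt zero_lt_one
    · exact hy.2 (approachSites_subset_cube hz)

lemma prob_many_approachSites_le (p δ : unitInterval) (t : ℕ) :
    ℙ[layerWeight p δ] {ω | ((∀ z ∈ approachSites c i τ m n R β ω, z ∉ R ∧ 1 ≤ β z) ∧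
      t ≤ (approachSites c i τ m n R β ω).ncard) ∧
      ∀ z ∈ approachSites c i τ m n R β ω, ω (z, β z) = false} ≤ (1 - δ : ℝ) ^ t := by
  have hδ : (0 : ℝ) ≤ 1 - δ := sub_nonneg.2 δ.2.2
  refine (prob_and_mem_le_mul_prob (w := layerWeight p δ) (F := approachSites c i τ m n R β)
    (G := fun W => (∀ z ∈ W, z ∉ R ∧ 1 ≤ β z) ∧ t ≤ W.ncard)
    (C := fun W => {ω | ∀ z ∈ W, ω (z, β z) = false}) finite_range_approachSites
    (fun ω hω => disjointlyDetermined_approachSites β hω.1)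
    fun ω hω => ?_).trans (mul_le_of_le_one_right (pow_nonneg hδ t) measureReal_le_one)
  refine (prob_cylinder_image_le_pow_ncard ((finite_cube c n).subset approachSites_subset_cube)
    (injective_prodMk β).injOn fun z hz => ?_).trans
    (pow_le_pow_of_le_one hδ (sub_le_self 1 δ.2.1) hω.2)
  simp [prob_coord, layerWeight, Nat.one_le_iff_ne_zero.1 (hω.1 z hz).2]

lemma prob_few_approachSites_le (p δ : unitInterval) (hp : (p : ℝ) < 1) (t : ℕ) (hmn : m ≤ n)
    (hR : cube c m ⊆ R) :
    ℙ[layerWeight p δ] {ω | (∀ z ∈ approachSites c i τ m n R β ω, z ∉ R ∧ 1 ≤ β z) ∧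
      (approachSites c i τ m n R β ω).ncard ≤ t} ≤
    ℙ[layerWeight p δ] {ω | ∀ x ∈ faceHits c i τ m n ω,
      ω ∉ seedEvent (cube (seedCenter c i τ m x) m) R β} / (1 - p : ℝ) ^ t := by
  have hp' : (0 : ℝ) < 1 - p := sub_pos.2 hp
  rw [le_div_iff₀ (pow_pos hp' t), mul_comm]
  refine (mul_prob_le_prob_and_mem (w := layerWeight p δ) (F := approachSites c i τ m n R β)
    (G := fun W => (∀ z ∈ W, z ∉ R ∧ 1 ≤ β z) ∧ W.ncard ≤ t)
    (C := fun W => {ω | ∀ z ∈ W, ω (z, 0) = false}) finite_range_approachSites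
    (fun ω hω => disjointlyDetermined_approachSites (fun _ => 0) hω.1)
    fun ω hω => ?_).trans (measureReal_mono fun ω hω =>
      notMem_seedEvent_of_approachSites_closed hmn hR fun z hz => ⟨(hω.1.1 z hz).1, hω.2 z hz⟩)
  refine (pow_le_pow_of_le_one hp'.le (sub_le_self 1 p.2.1) hω.2).trans
    (pow_ncard_le_prob_cylinder_image ((finite_cube c n).subset approachSites_subset_cube)
    (injective_prodMk fun _ => 0).injOn hp'.le fun z _ => ?_)
  simp [prob_coord, layerWeight]

lemma prob_not_stepSucceeds_le (p δ : unitInterval) (hp : (p : ℝ) < 1) (t : ℕ) (hmn : m ≤ n)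
    (hR : cube c m ⊆ R) (hβ : ∀ y ∉ R, 1 ≤ β y → ∃ x ∈ R, Adj x y) :
    ℙ[layerWeight p δ]
      {ω | ¬ StepSucceeds c i τ m n (explored Adj (cube c (n + 2 * m + 1)) R β ω)} ≤
    (1 - δ : ℝ) ^ t + ℙ[layerWeight p δ] {ω | ∀ x ∈ faceHits c i τ m n ω,
      ω ∉ seedEvent (cube (seedCenter c i τ m x) m) R β} / (1 - p : ℝ) ^ t := by
  refine (measureReal_mono fun ω hω => ?_).trans ((measureReal_union_le _ _).trans
    (add_le_add (prob_many_approachSites_le (m := m) (n := n) p δ t)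
      (prob_few_approachSites_le p δ hp t hmn hR)))
  have hsites := approachSites_of_not_stepSucceeds hβ hω
  have hunused : ∀ z ∈ approachSites c i τ m n R β ω, z ∉ R ∧ 1 ≤ β z :=
    fun z hz => ⟨(hsites z hz).1, (hsites z hz).2.1⟩
  rcases le_total t (approachSites c i τ m n R β ω).ncard with h | h
  exacts [.inl ⟨⟨hunused, h⟩, fun z hz => (hsites z hz).2.2⟩, .inr ⟨hunused, h⟩]

end Step

/-! ### Connection events -/

section ConnEvent

variable {V : Type*} {adj : V → V → Prop} {S T : Set V} {a b c : V}

/-- The event that `a` is joined to `b` by a path whose steps land on open sites of `S`. -/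
def connEvent (adj : V → V → Prop) (S : Set V) (a b : V) : Set (V → Bool) :=
  {ξ | Conn adj {w | w ∈ S ∧ ξ w = true} a b}

lemma determinedBy_connEvent : DeterminedBy (connEvent adj S a b) S :=
  .of_imp fun _ _ h hξ => Conn.mono hξ fun w hw => ⟨hw.1, h w hw.1 ▸ hw.2⟩

lemma isUpperSet_connEvent : IsUpperSet (connEvent adj S a b) :=
  fun _ _ h hξ => Conn.mono hξ fun w hw => ⟨hw.1, h w hw.2⟩

lemma connEvent_mono (h : S ⊆ T) : connEvent adj S a b ⊆ connEvent adj T a b :=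
  fun _ hξ => Conn.mono hξ fun _ hw => ⟨h hw.1, hw.2⟩

lemma prob_connEvent_mul_le {w : V → unitInterval} (hS : S.Finite) :
    ℙ[w] (connEvent adj S a b) * ℙ[w] (connEvent adj S b c) ≤ ℙ[w] (connEvent adj S a c) :=
  (prob_mul_le_prob_inter_of_isUpperSet isUpperSet_connEvent isUpperSet_connEvent
    determinedBy_connEvent determinedBy_connEvent hS).trans
    (measureReal_mono fun _ h => Conn.trans h.1 h.2)

end ConnEvent

/-! ### The coarse lattice -/

section CoarseLattice

variable {d k : ℕ}

/-- The embedding of a coarse lattice of spacing `s` and origin `o` spanned by the coordinate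
directions `e`. -/
def coarseSite (o : Fin d → ℤ) (s : ℤ) (e : Fin k → Fin d) (z : Fin k → ℤ) : Fin d → ℤ :=
  o + ∑ a, Pi.single (e a) (s * z a)

lemma coarseSite_apply (o : Fin d → ℤ) (s : ℤ) {e : Fin k → Fin d} (he : e.Injective)
    (z : Fin k → ℤ) (a : Fin k) : coarseSite o s e z (e a) = o (e a) + s * z a := by
  simp [coarseSite, Finset.sum_apply, Pi.single_apply, he.eq_iff]

lemma coarseSite_apply_of_ne (o : Fin d → ℤ) (s : ℤ) {e : Fin k → Fin d} (z : Fin k → ℤ)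
    {j : Fin d} (h : ∀ a, j ≠ e a) : coarseSite o s e z j = o j := by
  simp [coarseSite, h]

lemma coarseSite_add_single (o : Fin d → ℤ) (s : ℤ) (e : Fin k → Fin d) (z : Fin k → ℤ) (a : Fin k)
    (t : ℤ) : coarseSite o s e (z + Pi.single a t) =
      coarseSite o s e z + Pi.single (e a) (s * t) := by
  have hsum : ∑ b, (Pi.single (e b) (s * (Pi.single a t : Fin k → ℤ) b) : Fin d → ℤ) =
      Pi.single (e a) (s * t) := by
    rw [Finset.sum_eq_single_of_mem a (Finset.mem_univ a) fun b _ hb => by simp [hb],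
      Pi.single_eq_same]
  simp [coarseSite, mul_add, Pi.single_add, Finset.sum_add_distrib, hsum, add_assoc]

variable (k) in
/-- A number of layers sufficient for the exploration driven by a `k`-dimensional coarse lattice. -/
noncomputable def numLayers : ℕ := (cube (0 : Fin k → ℤ) 4).ncard + 1

open Classical in
/-- The number of coarse sites in `T` whose exploration may look at `y`. -/
noncomputable def usage (o : Fin d → ℤ) (s : ℤ) (e : Fin k → Fin d) (T : Finset (Fin k → ℤ))
    (y : Fin d → ℤ) : ℕ :=
  (T.filter fun w => y ∈ cube (coarseSite o s e w) (4 * s)).card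

lemma usage_mono (o : Fin d → ℤ) (s : ℤ) (e : Fin k → Fin d) {T T' : Finset (Fin k → ℤ)}
    (h : T ⊆ T') (y : Fin d → ℤ) : usage o s e T y ≤ usage o s e T' y := by
  classical exact Finset.card_le_card (Finset.filter_subset_filter _ h)

lemma usage_insert {o : Fin d → ℤ} {s : ℤ} {e : Fin k → Fin d} {T : Finset (Fin k → ℤ)}
    {w : Fin k → ℤ} {y : Fin d → ℤ} (hw : w ∉ T) (hy : y ∈ cube (coarseSite o s e w) (4 * s)) :
    usage o s e (insert w T) y = usage o s e T y + 1 := by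
  classical
  rw [usage, Finset.filter_insert, if_pos hy,
    Finset.card_insert_of_notMem fun h => hw (Finset.mem_filter.1 h).1, usage]

lemma usage_lt_numLayers (o : Fin d → ℤ) {s : ℤ} (hs : 0 < s) {e : Fin k → Fin d}
    (he : e.Injective) (T : Finset (Fin k → ℤ)) (y : Fin d → ℤ) :
    usage o s e T y < numLayers k := by
  classical
  refine Nat.lt_succ_of_le ?_
  rw [usage, ← ncard_cube fun a => (y (e a) - o (e a)) / s, ← Set.ncard_coe_finset]
  refine Set.ncard_le_ncard (fun w hw => mem_cube.2 fun a => ?_) (finite_cube _ _)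
  have hy := mem_cube.1 (Finset.mem_filter.1 hw).2 (e a)
  rw [coarseSite_apply o s he, abs_le] at hy
  have hlower : w a - 4 ≤ (y (e a) - o (e a)) / s := by
    rw [Int.le_ediv_iff_mul_le hs]; linarith
  have hupper : (y (e a) - o (e a)) / s ≤ w a + 4 := by
    refine Int.ediv_le_of_le_mul hs ?_; linarith
  rw [abs_le]
  omega

end CoarseLattice

/-! ### Revealing the sites of a coarse percolation one by one -/

section RevealedConnection

variable {V : Type*} {adj : V → V → Prop} {Γ S X : Finset V} {b w : V}

/-- The event that `b` can be reached from `S` inside `Γ`, given that the sites of `S` are open and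
those of `X` are closed. -/
def revealedConnEvent (adj : V → V → Prop) (Γ S X : Finset V) (b : V) : Set (V → Bool) :=
  {ζ | ∃ a ∈ S, Conn adj {z | z ∈ Γ ∧ z ∉ X ∧ (z ∈ S ∨ ζ z = true)} a b}

lemma determinedBy_revealedConnEvent :
    DeterminedBy (revealedConnEvent adj Γ S X b) (Γ : Set V) := by
  refine .of_imp fun ζ ζ' h => ?_
  rintro ⟨a, ha, hab⟩
  exact ⟨a, ha, hab.mono fun z hz => ⟨hz.1, hz.2.1, hz.2.2.imp_right (h z hz.1 ▸ ·)⟩⟩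

lemma mem_of_mem_revealedConnEvent {ζ : V → Bool} (hζ : ζ ∈ revealedConnEvent adj Γ S X b)
    (h : ∀ z ∈ Γ, z ∉ S → z ∉ X → ∀ v ∈ S, ¬ adj v z) : b ∈ S := by
  obtain ⟨a, ha, hab⟩ := hζ
  induction hab with
  | refl => exact ha
  | @tail y z _ hyz ih => exact by_contra fun hz => h z hyz.2.1 hz hyz.2.2.1 y ih hyz.1

variable [DecidableEq V]

lemma slice_true_revealedConnEvent_subset :
    slice (revealedConnEvent adj Γ S X b) w true ⊆ revealedConnEvent adj Γ (insert w S) X b := by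
  rintro ζ ⟨a, ha, hab⟩
  refine ⟨a, Finset.mem_insert_of_mem ha, hab.mono ?_⟩
  rintro z ⟨hzΓ, hzX, hz⟩
  refine ⟨hzΓ, hzX, ?_⟩
  rcases eq_or_ne z w with rfl | hzw
  · exact .inl (Finset.mem_insert_self z S)
  · simp only [Function.update_of_ne hzw] at hz
    exact hz.imp_left Finset.mem_insert_of_mem

lemma slice_false_revealedConnEvent_subset (hw : w ∉ S) :
    slice (revealedConnEvent adj Γ S X b) w false ⊆ revealedConnEvent adj Γ S (insert w X) b := by
  rintro ζ ⟨a, ha, hab⟩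
  refine ⟨a, ha, hab.mono ?_⟩
  rintro z ⟨hzΓ, hzX, hz⟩
  have hzw : z ≠ w := by
    rintro rfl
    simp [hw] at hz
  simp only [Function.update_of_ne hzw] at hz
  exact ⟨hzΓ, by simp [hzw, hzX], hz⟩

lemma revealedConnEvent_closed_subset_open :
    revealedConnEvent adj Γ S (insert w X) b ⊆ revealedConnEvent adj Γ (insert w S) X b := by
  rintro ζ ⟨a, ha, hab⟩
  exact ⟨a, Finset.mem_insert_of_mem ha, hab.mono fun z hz => ⟨hz.1,
    fun h => hz.2.1 (Finset.mem_insert_of_mem h), hz.2.2.imp_left Finset.mem_insert_of_mem⟩⟩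

lemma prob_revealedConnEvent_le (q : unitInterval) (hw : w ∉ S) :
    ℙ[fun _ => q] (revealedConnEvent adj Γ S X b) ≤
      q * ℙ[fun _ => q] (revealedConnEvent adj Γ (insert w S) X b) +
        (1 - q) * ℙ[fun _ => q] (revealedConnEvent adj Γ S (insert w X) b) := by
  rw [prob_eq_slice determinedBy_revealedConnEvent Γ.finite_toSet w]
  have hq : (0 : ℝ) ≤ 1 - q := sub_nonneg.2 q.2.2
  have hq₀ : (0 : ℝ) ≤ q := q.2.1
  exact add_le_add
    (mul_le_mul_of_nonneg_left (measureReal_mono slice_true_revealedConnEvent_subset) hq₀)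
    (mul_le_mul_of_nonneg_left (measureReal_mono (slice_false_revealedConnEvent_subset hw)) hq)

end RevealedConnection

/-! ### The coarse exploration dominates a percolation -/

section CoarseExploration

variable {d k : ℕ}

/-- At the scales `m` and `n`, a renormalization step fails with probability at most `ε`, whatever
has been explored before. -/
def StepFailureProbLE (d : ℕ) (p δ : unitInterval) (m n : ℕ) (ε : ℝ) : Prop :=
  ∀ (c : Fin d → ℤ) (i : Fin d) (τ : Fin d → ℤˣ) (R : Set (Fin d → ℤ)) (β : (Fin d → ℤ) → ℕ),
    cube c m ⊆ R → (∀ y ∉ R, 1 ≤ β y → ∃ x ∈ R, Adj x y) →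
    ℙ[layerWeight p δ]
      {ω | ¬ StepSucceeds c i τ m n (explored Adj (cube c (n + 2 * m + 1)) R β ω)} ≤ ε

/- Of the failure probability `(1 - δ) ^ t + η' / (1 - p) ^ t` of a step, the first term is made
small by `t`, and then `η'` by the choice of the scales. -/
lemma exists_stepFailureProbLE (p δ : unitInterval) (hp₀ : 0 < (p : ℝ)) (hp : (p : ℝ) < 1)
    (hδ : 0 < (δ : ℝ)) (hperc : bernoulliProd (fun _ : Fin d → ℤ => p) (Perc d) ≠ 0)
    {ε : ℝ} (hε : 0 < ε) : ∃ m n : ℕ, StepFailureProbLE d p δ m n ε := by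
  obtain ⟨t, ht⟩ := exists_pow_lt_of_lt_one (half_pos hε) (sub_lt_self 1 hδ)
  have hp' : 0 < (1 - p : ℝ) ^ t := pow_pos (sub_pos.2 hp) t
  have hη : 0 < ε / 4 * (1 - p : ℝ) ^ t := by positivity
  obtain ⟨m, hm⟩ := exists_prob_compl_facePieceEvent_le p hp hperc hη
  have hρ : 0 < min (p : ℝ) δ := lt_min hp₀ hδ
  obtain ⟨K', hK'⟩ := exists_pow_lt_of_lt_one hη
    (sub_lt_self 1 (pow_pos hρ (cube (0 : Fin d → ℤ) m).ncard))
  obtain ⟨n₀, hn₀⟩ := hm (K' * (2 * m + 1) ^ d)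
  refine ⟨m, max m n₀, fun c i τ R β hR hβ => ?_⟩
  refine (prob_not_stepSucceeds_le p δ hp t (le_max_left _ _) hR hβ).trans ?_
  have hhit := prob_no_hit_seed_le (c := c) p δ R β hρ.le (min_le_left _ _) (min_le_right _ _)
    (hn₀ _ (le_max_right m n₀) i τ) le_rfl
  calc _ ≤ ε / 2 + (ε / 4 * (1 - p : ℝ) ^ t + ε / 4 * (1 - p : ℝ) ^ t) / (1 - p : ℝ) ^ t := by
        gcongr
        exact hhit.trans (by gcongr)
    _ = ε := by field_simp; ring

/-- The signs of a step in the direction `u` of the coordinate `i` from `c` which steers the other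
coordinates towards those of `x`. -/
def steeringSigns (x c : Fin d → ℤ) (i : Fin d) (u : ℤˣ) : Fin d → ℤˣ :=
  fun j => if j = i then u else if c j ≤ x j then 1 else -1

section Step

variable {x c : Fin d → ℤ} {i : Fin d} {u : ℤˣ} {m n : ℕ}

lemma exists_seed_of_stepSucceeds {R₀ : Set (Fin d → ℤ)} (hc : c ∈ cube x (n + m + 1))
    (h : StepSucceeds c i (steeringSigns x c i u) m n R₀) :
    ∃ c' ∈ cube (x + Pi.single i ((n + m + 1) * (u : ℤ))) (n + m + 1), cube c' m ⊆ R₀ := by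
  obtain ⟨c', hi, hne, hsub⟩ := h
  refine ⟨c', mem_cube.2 fun j => ?_, hsub⟩
  have hcj := mem_cube.1 hc j
  rcases eq_or_ne j i with rfl | hj
  · rw [hi, steeringSigns, if_pos rfl, Pi.add_apply, Pi.single_eq_same, mul_comm,
      add_sub_add_right_eq_sub]
    exact hcj
  · have hstep := hne j hj
    rw [steeringSigns, if_neg hj] at hstep
    rw [Pi.add_apply, Pi.single_eq_of_ne hj, add_zero]
    rw [abs_le] at hcj ⊢
    split_ifs at hstep <;> push_cast at hstep <;> omega

lemma cube_subset_cube_add_single (hc : c ∈ cube x (n + m + 1)) :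
    cube c (n + 2 * m + 1) ⊆
      cube (x + Pi.single i ((n + m + 1) * (u : ℤ))) (4 * (n + m + 1)) := by
  intro y hy
  rw [mem_cube] at hc hy ⊢
  intro j
  have hshift : |(Pi.single i ((n + m + 1) * (u : ℤ)) : Fin d → ℤ) j| ≤ n + m + 1 := by
    rcases eq_or_ne j i with rfl | hj
    · rw [Pi.single_eq_same, abs_mul, abs_coe_units_int, mul_one, abs_of_nonneg (by positivity)]
    · rw [Pi.single_eq_of_ne hj, abs_zero]; positivity
  have hcj := hc j
  have hyj := hy j
  rw [Pi.add_apply]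
  rw [abs_le] at *
  omega

end Step

/-- The state `(R, β)` of the exploration matches a set `S` of open and a set `X` of closed sites
revealed on the coarse lattice: each site of `S` has a seed in `R`, used layers occur next to `R`
only, and the layers used at a site are accounted for by the revealed sites. -/
structure Consistent (m n : ℕ) (o : Fin d → ℤ) (e : Fin k → Fin d) (S X : Finset (Fin k → ℤ))
    (R : Set (Fin d → ℤ)) (β : (Fin d → ℤ) → ℕ) : Prop where
  exists_seed : ∀ v ∈ S, ∃ c ∈ cube (coarseSite o (n + m + 1) e v) (n + m + 1), cube c m ⊆ R
  exists_adj : ∀ y ∉ R, 1 ≤ β y → ∃ x ∈ R, Adj x y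
  le_usage : ∀ y, β y ≤ usage o (n + m + 1) e (S ∪ X) y

variable {p δ : unitInterval} {m n : ℕ} {o : Fin d → ℤ} {e : Fin k → Fin d}
  {S X S' X' : Finset (Fin k → ℤ)} {R R₀ D Λ : Set (Fin d → ℤ)} {β : (Fin d → ℤ) → ℕ}
  {Γ : Finset (Fin k → ℤ)} {b w : Fin k → ℤ}

lemma layersAfter_le_usage {s : ℤ} {T : Finset (Fin k → ℤ)} (h : ∀ y, β y ≤ usage o s e T y)
    (hw : w ∉ T) (hD : D ⊆ cube (coarseSite o s e w) (4 * s)) (y : Fin d → ℤ) :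
    layersAfter Adj D R R₀ β y ≤ usage o s e (insert w T) y := by
  by_cases hy : y ∈ D
  · rw [usage_insert hw (hD hy)]
    exact (layersAfter_le ..).trans (Nat.succ_le_succ (h y))
  · rw [layersAfter_of_notMem _ _ _ hy]
    exact (h y).trans (usage_mono o s e (Finset.subset_insert _ _) y)

lemma Consistent.step (h : Consistent m n o e S X R β) (hR : R ⊆ R₀) (hw : w ∉ S ∪ X)
    (hD : D ⊆ cube (coarseSite o (n + m + 1) e w) (4 * (n + m + 1)))
    (hunion : S' ∪ X' = insert w (S ∪ X))
    (hS' : ∀ v ∈ S', v ∈ S ∨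
      ∃ c ∈ cube (coarseSite o (n + m + 1) e v) (n + m + 1), cube c m ⊆ R₀) :
    Consistent m n o e S' X' R₀ (layersAfter Adj D R R₀ β) where
  exists_seed v hv := (hS' v hv).elim
    (fun hv => (h.exists_seed v hv).imp fun _ hc => ⟨hc.1, hc.2.trans hR⟩) id
  exists_adj y hy hβ := by
    unfold layersAfter at hβ
    split_ifs at hβ with hadj
    · exact hadj.2.2
    · exact (h.exists_adj y (fun hyR => hy (hR hyR)) hβ).imp fun _ hx => ⟨hR hx.1, hx.2⟩
  le_usage := by
    rw [hunion]
    exact layersAfter_le_usage h.le_usage hw hD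

lemma Consistent.exists_direction (h : Consistent m n o e S X R β) {v : Fin k → ℤ} (hv : v ∈ S)
    (hvw : Adj v w) :
    ∃ c i τ, cube c m ⊆ R ∧
      cube c (n + 2 * m + 1) ⊆ cube (coarseSite o (n + m + 1) e w) (4 * (n + m + 1)) ∧
      ∀ R₀, StepSucceeds c i τ m n R₀ →
        ∃ c' ∈ cube (coarseSite o (n + m + 1) e w) (n + m + 1), cube c' m ⊆ R₀ := by
  obtain ⟨c, hc, hcR⟩ := h.exists_seed v hv
  obtain ⟨a, σ, hσ, rfl⟩ := hvw.exists_eq_add_single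
  obtain ⟨u, rfl⟩ := Int.isUnit_iff.2 hσ
  rw [coarseSite_add_single]
  exact ⟨c, e a, steeringSigns _ c (e a) u, hcR, cube_subset_cube_add_single hc,
    fun R₀ => exists_seed_of_stepSucceeds hc⟩

lemma Consistent.reachEvent_eq_univ (h : Consistent m n o e S X R β) (hb : b ∈ S) (r : ℕ) :
    reachEvent Adj Λ (cube (coarseSite o (n + m + 1) e b) (n + m + 1)) R r β = Set.univ := by
  obtain ⟨c, hc, hcR⟩ := h.exists_seed b hb
  exact Set.eq_univ_of_forall fun ω => ⟨c, hcR (self_mem_cube _ (by positivity)), c, hc, Conn.refl⟩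

lemma prob_revealedConnEvent_le_prob_reachEvent {q : unitInterval}
    (hstep : StepFailureProbLE d p δ m n (1 - q)) (he : e.Injective) (hΛ : Λ.Finite)
    (hΓ : ∀ w ∈ Γ, cube (coarseSite o (n + m + 1) e w) (4 * (n + m + 1)) ⊆ Λ)
    (h : Consistent m n o e S X R β) :
    ℙ[fun _ => q] (revealedConnEvent Adj Γ S X b) ≤ ℙ[layerWeight p δ]
      (reachEvent Adj Λ (cube (coarseSite o (n + m + 1) e b) (n + m + 1)) R (numLayers k) β) := by
  induction hN : (Γ \ (S ∪ X)).card using Nat.strong_induction_on generalizing S X R β with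
  | _ N ih
  subst hN
  by_cases hfrontier : ∃ w ∈ Γ, w ∉ S ∧ w ∉ X ∧ ∃ v ∈ S, Adj v w
  · obtain ⟨w, hwΓ, hwS, hwX, v, hv, hvw⟩ := hfrontier
    have hw : w ∉ S ∪ X := by simp [hwS, hwX]
    have hcard {T} (hT : T = insert w (S ∪ X)) : (Γ \ T).card < (Γ \ (S ∪ X)).card := by
      rw [hT, Finset.sdiff_insert]
      exact Finset.card_erase_lt_of_mem (Finset.mem_sdiff.2 ⟨hwΓ, hw⟩)
    obtain ⟨c, i, τ, hcR, hD, hsucc⟩ := h.exists_direction hv hvw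
    have hclosed := Finset.union_insert w S X
    have hopen := Finset.insert_union w S X
    refine (prob_revealedConnEvent_le q hwS).trans ?_
    have hreach := le_prob_reachEvent (layerWeight p δ) hΛ (hD.trans (hΓ w hwΓ))
      (fun y _ => (h.le_usage y).trans_lt (usage_lt_numLayers o (by positivity) he _ _))
      (StepSucceeds c i τ m n) (measureReal_mono revealedConnEvent_closed_subset_open)
      (fun ω => ih _ (hcard hclosed) (h.step (subset_explored ..) hw hD hclosed
        fun _ => .inl) rfl)
      (fun ω hω => ih _ (hcard hopen) (h.step (subset_explored ..) hw hD hopen fun v hv =>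
        (Finset.mem_insert.1 hv).symm.imp_right fun (h : v = w) => h ▸ hsucc _ hω) rfl)
      (hstep c i τ R β hcR h.exists_adj)
    rwa [sub_sub_cancel] at hreach
  · rcases (revealedConnEvent Adj Γ S X b).eq_empty_or_nonempty with hempty | ⟨ζ, hζ⟩
    · rw [hempty, measureReal_empty]
      exact measureReal_nonneg
    · push Not at hfrontier
      rw [h.reachEvent_eq_univ (mem_of_mem_revealedConnEvent hζ hfrontier), probReal_univ]
      exact measureReal_le_one

lemma prob_connEvent_le_prob_reachEvent {q : unitInterval}
    (hstep : StepFailureProbLE d p δ m n (1 - q)) (he : e.Injective) (hΛ : Λ.Finite)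
    (hΓ : ∀ w ∈ Γ, cube (coarseSite o (n + m + 1) e w) (4 * (n + m + 1)) ⊆ Λ) (a b : Fin k → ℤ) :
    ℙ[fun _ => q] (connEvent Adj (Γ : Set (Fin k → ℤ)) a b) ≤ ℙ[layerWeight p δ]
      (reachEvent Adj Λ (cube (coarseSite o (n + m + 1) e b) (n + m + 1))
        (cube (coarseSite o (n + m + 1) e a) m) (numLayers k) fun _ => 0) := by
  have hinit : Consistent m n o e {a} ∅ (cube (coarseSite o (n + m + 1) e a) m) fun _ => 0 := by
    refine ⟨fun v hv => ?_, fun _ _ h => absurd h (by simp), fun _ => Nat.zero_le _⟩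
    rw [Finset.mem_singleton.1 hv]
    exact ⟨_, self_mem_cube _ (by positivity), le_rfl⟩
  refine le_trans (measureReal_mono fun ζ h => ?_)
    (prob_revealedConnEvent_le_prob_reachEvent hstep he hΛ hΓ hinit)
  exact ⟨a, Finset.mem_singleton_self a, Conn.mono h fun z hz =>
    ⟨hz.1, Finset.notMem_empty z, .inr hz.2⟩⟩

end CoarseExploration

/-! ### Hierarchically good blocks -/

section Blocks

variable {d : ℕ} {L : ℤ} {j : ℕ} {u v x y w₀ : Fin d → ℤ} {ζ ζ' : (Fin d → ℤ) → Bool}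

/-- The block of side length `L` with index `u` in the partition of `ℤ^d` into such blocks. -/
def block (L : ℤ) (u : Fin d → ℤ) : Set (Fin d → ℤ) :=
  Set.Icc (fun i => L * u i) fun i => L * u i + (L - 1)

lemma mem_block (hL : 0 < L) : x ∈ block L u ↔ ∀ i, x i / L = u i := by
  simp only [block, Set.mem_Icc, Pi.le_def, ← forall_and]
  refine forall_congr' fun i => ?_
  rw [Int.ediv_eq_iff_of_pos hL, mul_comm]
  omega

lemma finite_block (L : ℤ) (u : Fin d → ℤ) : (block L u).Finite := Set.finite_Icc _ _

lemma block_one (u : Fin d → ℤ) : block 1 u = {u} := by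
  simp [block]

lemma disjoint_block (hL : 0 < L) (h : u ≠ v) : Disjoint (block L u) (block L v) :=
  Set.disjoint_left.2 fun _ hu hv =>
    h (funext fun i => ((mem_block hL).1 hu i).symm.trans ((mem_block hL).1 hv i))

lemma block_subset_block_mul {K : ℤ} (hL : 0 < L) (hK : 0 < K) (hx : x ∈ block K u) :
    block L x ⊆ block (L * K) u := by
  intro z hz
  rw [mem_block (mul_pos hL hK)]
  intro i
  rw [← Int.ediv_ediv_of_nonneg hL.le, (mem_block hL).1 hz i, (mem_block hK).1 hx i]

lemma block_three_pow_subset (hx : x ∈ block 3 u) : block (3 ^ j) x ⊆ block (3 ^ (j + 1)) u := by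
  rw [pow_succ]
  exact block_subset_block_mul (by positivity) three_pos hx

lemma conn_block_sdiff_of_apply_eq {i : Fin d} (hx : x ∈ block L u) (hy : y ∈ block L u)
    (hxy : x i = y i) (hi : x i ≠ w₀ i) : Conn Adj (block L u \ {w₀}) x y := by
  refine (conn_Icc ⟨inf_le_left, le_sup_left⟩ ⟨inf_le_right, le_sup_right⟩).mono
    fun z hz => ⟨⟨(le_inf hx.1 hy.1).trans hz.1, hz.2.trans (sup_le hx.2 hy.2)⟩, ?_⟩
  rintro rfl
  have hlower := hz.1 i
  have hupper := hz.2 i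
  simp only [Pi.inf_apply, Pi.sup_apply, ← hxy, min_self, max_self] at hlower hupper
  exact hi (le_antisymm hlower hupper)

/- Every site of the block other than `w₀` is joined, through two segments avoiding `w₀`, to a fixed
site `h` none of whose coordinates agrees with that of `w₀`. -/
lemma conn_block_sdiff_singleton [Nontrivial (Fin d)] (hL : 1 < L) (hx : x ∈ block L u \ {w₀})
    (hy : y ∈ block L u \ {w₀}) : Conn Adj (block L u \ {w₀}) x y := by
  have hexists i : ∃ t, L * u i ≤ t ∧ t ≤ L * u i + (L - 1) ∧ t ≠ w₀ i := by
    by_cases hi : L * u i = w₀ i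
    · exact ⟨L * u i + 1, by omega, by omega, by omega⟩
    · exact ⟨L * u i, le_rfl, by omega, hi⟩
  choose h hlower hupper hne using hexists
  have hhub x (hx : x ∈ block L u \ {w₀}) : Conn Adj (block L u \ {w₀}) x h := by
    obtain ⟨i, hi⟩ := Function.ne_iff.1 hx.2
    obtain ⟨i', hi'⟩ := exists_ne i
    have hcorner : Function.update h i (x i) ∈ block L u :=
      ⟨le_update_iff.2 ⟨hx.1.1 i, fun l _ => hlower l⟩,
        update_le_iff.2 ⟨hx.1.2 i, fun l _ => hupper l⟩⟩
    have hi'h : Function.update h i (x i) i' = h i' := Function.update_of_ne hi' _ _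
    exact (conn_block_sdiff_of_apply_eq hx.1 hcorner (Function.update_self _ _ h).symm hi).trans
      (conn_block_sdiff_of_apply_eq hcorner ⟨hlower, hupper⟩ hi'h (hi'h ▸ hne i'))
  exact (hhub x hx).trans ((hhub y hy).symm hy)

/-- A block of side length `3 ^ j` is good if at most one of its subblocks of side length
`3 ^ (j - 1)` is bad, where the good blocks of side length one are the open sites. -/
def IsGood (ζ : (Fin d → ℤ) → Bool) : ℕ → (Fin d → ℤ) → Prop
  | 0, u => ζ u = true
  | j + 1, u => ∃ w₀, ∀ w ∈ block 3 u, w ≠ w₀ → IsGood ζ j w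

/-- The sites of a block of side length `3 ^ j` which lie in good blocks of all smaller side
lengths. -/
def core (ζ : (Fin d → ℤ) → Bool) : ℕ → (Fin d → ℤ) → Set (Fin d → ℤ)
  | 0, u => {u}
  | j + 1, u => {z | ∃ w ∈ block 3 u, IsGood ζ j w ∧ z ∈ core ζ j w}

lemma isGood_congr (h : ∀ z ∈ block (3 ^ j) u, ζ z = ζ' z) : IsGood ζ j u ↔ IsGood ζ' j u := by
  induction j generalizing u with
  | zero => simp only [IsGood, h u (by simp [block_one])]
  | succ j ih =>
    exact exists_congr fun w₀ => forall₂_congr fun w hw => imp_congr_right fun _ =>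
      ih fun z hz => h z (block_three_pow_subset hw hz)

lemma determinedBy_isGood (j : ℕ) (u : Fin d → ℤ) :
    DeterminedBy {ζ | IsGood ζ j u} (block (3 ^ j) u) :=
  .of_imp fun _ _ h hζ => (isGood_congr h).1 hζ

lemma core_subset (hu : IsGood ζ j u) : core ζ j u ⊆ {z | z ∈ block (3 ^ j) u ∧ ζ z = true} := by
  induction j generalizing u with
  | zero =>
    rintro z rfl
    exact ⟨by simp [block_one], hu⟩
  | succ j ih =>
    rintro z ⟨w, hw, hgood, hz⟩
    exact ⟨block_three_pow_subset hw (ih hgood hz).1, (ih hgood hz).2⟩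

lemma core_subset_core_succ (hx : x ∈ block 3 u) (hgood : IsGood ζ j x) :
    core ζ j x ⊆ core ζ (j + 1) u :=
  fun _ hz => ⟨x, hx, hgood, hz⟩

/- A facet of a block of side length three has three rows of subblocks; two of them suffice to avoid
the bad subblocks on both sides. -/
lemma exists_adj_isGood [Nontrivial (Fin d)] (hu : IsGood ζ (j + 1) u) (hv : IsGood ζ (j + 1) v)
    (huv : Adj u v) :
    ∃ x ∈ block 3 u, ∃ y ∈ block 3 v, Adj x y ∧ IsGood ζ j x ∧ IsGood ζ j y := by
  obtain ⟨i, σ, hσ, rfl⟩ := huv.exists_eq_add_single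
  obtain ⟨a, ha⟩ := hu
  obtain ⟨b, hb⟩ := hv
  obtain ⟨i', hi'⟩ := exists_ne i
  obtain ⟨t, ht₀, ht₂, hta, htb⟩ : ∃ t : ℤ, 0 ≤ t ∧ t ≤ 2 ∧ 3 * u i' + t ≠ a i' ∧
      3 * u i' + t ≠ b i' := by
    by_contra! h
    have := h 0
    have := h 1
    have := h 2
    omega
  let x : Fin d → ℤ := fun l => 3 * u l + if l = i then 1 + σ else t
  have hxi' : x i' = 3 * u i' + t := by simp [x, hi']
  have hxu : x ∈ block 3 u := by
    refine (mem_block three_pos).2 fun l => ?_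
    dsimp only [x]
    split_ifs <;> omega
  have hyv : x + Pi.single i σ ∈ block 3 (u + Pi.single i σ) := by
    refine (mem_block three_pos).2 fun l => ?_
    rcases eq_or_ne l i with rfl | hl
    · simp only [x, Pi.add_apply, Pi.single_eq_same, if_true]
      omega
    · simp only [x, Pi.add_apply, Pi.single_eq_of_ne hl, if_neg hl, add_zero]
      omega
  refine ⟨x, hxu, _, hyv, adj_add_single x i hσ, ha x hxu ?_, hb _ hyv ?_⟩
  · rintro rfl
    exact hta hxi'.symm
  · rintro rfl
    exact htb (by simp [hi', hxi'])

lemma exists_adj_core [Nontrivial (Fin d)] (hu : IsGood ζ j u) (hv : IsGood ζ j v)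
    (huv : Adj u v) : ∃ x ∈ core ζ j u, ∃ y ∈ core ζ j v, Adj x y := by
  induction j generalizing u v with
  | zero => exact ⟨u, rfl, v, rfl, huv⟩
  | succ j ih =>
    obtain ⟨a, ha, b, hb, hab, hga, hgb⟩ := exists_adj_isGood hu hv huv
    obtain ⟨x, hx, y, hy, hxy⟩ := ih hga hgb hab
    exact ⟨x, core_subset_core_succ ha hga hx, y, core_subset_core_succ hb hgb hy, hxy⟩

lemma conn_isGood_of_isGood_succ [Nontrivial (Fin d)] (hu : IsGood ζ (j + 1) u)
    (hx : x ∈ block 3 u) (hgx : IsGood ζ j x) (hy : y ∈ block 3 u) (hgy : IsGood ζ j y) :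
    Conn Adj {w | w ∈ block 3 u ∧ IsGood ζ j w} x y := by
  obtain ⟨w₀, hw₀⟩ := hu
  by_cases hgood : IsGood ζ j w₀
  · exact (conn_Icc hx hy : Conn Adj (block 3 u) x y).mono fun w hw => ⟨hw, by
      rcases eq_or_ne w w₀ with rfl | h
      exacts [hgood, hw₀ w hw h]⟩
  · have hne {z} (hgz : IsGood ζ j z) : z ≠ w₀ := fun h => hgood (h ▸ hgz)
    exact (conn_block_sdiff_singleton (by norm_num) ⟨hx, hne hgx⟩ ⟨hy, hne hgy⟩).mono
      fun w hw => ⟨hw.1, hw₀ w hw.1 hw.2⟩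

lemma conn_core [Nontrivial (Fin d)] (hu : IsGood ζ j u) (hx : x ∈ core ζ j u)
    (hy : y ∈ core ζ j u) : Conn Adj (core ζ j u) x y := by
  induction j generalizing u x y with
  | zero =>
    obtain rfl : x = u := hx
    obtain rfl : y = x := hy
    exact Conn.refl
  | succ j ih =>
    obtain ⟨a, ha, hga, hxa⟩ := hx
    obtain ⟨b, hb, hgb, hyb⟩ := hy
    have hab := conn_isGood_of_isGood_succ hu ha hga hb hgb
    clear hb hgb
    induction hab generalizing y with
    | refl => exact (ih hga hxa hyb).mono (core_subset_core_succ ha hga)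
    | @tail c b hac hcb ihc =>
      obtain ⟨hb, hgb⟩ := hcb.2
      obtain ⟨q, hq, q', hq', hqq'⟩ := exists_adj_core (Conn.mem hac ⟨ha, hga⟩).2 hgb hcb.1
      exact ((ihc hq).tail hqq' (core_subset_core_succ hb hgb hq')).trans
        ((ih hgb hq' hyb).mono (core_subset_core_succ hb hgb))

end Blocks

/-! ### Planar connections at high density -/

section HighDensity

variable {d : ℕ} {q : unitInterval} {j J : ℕ} {u z z' : Fin d → ℤ}

lemma ncard_block (L : ℤ) (u : Fin d → ℤ) : (block L u).ncard = L.toNat ^ d := by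
  have hside (x : ℤ) : (x + (L - 1) + 1 - x).toNat = L.toNat := by omega
  rw [block, ← Finset.coe_Icc, Set.ncard_coe_finset, Pi.card_Icc]
  simp only [Int.card_Icc, hside, Finset.prod_const, Finset.card_univ, Fintype.card_fin]

/- A bad block contains two distinct bad subblocks, and these are independent. -/
lemma prob_not_isGood_succ_le {ρ : ℝ} (h : ∀ v : Fin d → ℤ, ℙ[fun _ => q] {ζ | ¬ IsGood ζ j v} ≤ ρ)
    (u : Fin d → ℤ) : ℙ[fun _ => q] {ζ | ¬ IsGood ζ (j + 1) u} ≤ 9 ^ d * (ρ * ρ) := by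
  set T := (finite_block 3 u).toFinset with hT
  have hsub : {ζ | ¬ IsGood ζ (j + 1) u} ⊆
      ⋃ v ∈ T.offDiag, {ζ | IsGood ζ j v.1}ᶜ ∩ {ζ | IsGood ζ j v.2}ᶜ := by
    intro ζ hζ
    simp only [IsGood, Set.mem_ofPred_eq, not_exists, not_forall] at hζ
    obtain ⟨v, hv, -, hbad⟩ := hζ 0
    obtain ⟨v', hv', hne, hbad'⟩ := hζ v
    exact Set.mem_biUnion (x := (v, v')) (by simpa [hT, hv, hv'] using Ne.symm hne) ⟨hbad, hbad'⟩
  have hcard : T.offDiag.card ≤ 9 ^ d := by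
    rw [Finset.offDiag_card, hT, ← Set.ncard_eq_toFinset_card _ (finite_block 3 u), ncard_block,
      ← mul_pow]
    exact Nat.sub_le _ _
  have hpair v (hv : v ∈ T.offDiag) :
      ℙ[fun _ => q] ({ζ | IsGood ζ j v.1}ᶜ ∩ {ζ | IsGood ζ j v.2}ᶜ) ≤ ρ * ρ := by
    rw [prob_inter_of_disjoint (determinedBy_isGood j v.1).compl (determinedBy_isGood j v.2).compl
      (finite_block _ _) (finite_block _ _)
      (disjoint_block (by positivity) (Finset.mem_offDiag.1 hv).2.2)]
    exact mul_le_mul (h _) (h _) measureReal_nonneg (measureReal_nonneg.trans (h u))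
  calc ℙ[fun _ => q] {ζ | ¬ IsGood ζ (j + 1) u}
      ≤ ∑ v ∈ T.offDiag, ℙ[fun _ => q] ({ζ | IsGood ζ j v.1}ᶜ ∩ {ζ | IsGood ζ j v.2}ᶜ) :=
        (measureReal_mono hsub (measure_ne_top _ _)).trans (measureReal_biUnion_finset_le _ _)
    _ ≤ T.offDiag.card • (ρ * ρ) := Finset.sum_le_card_nsmul _ _ _ hpair
    _ ≤ 9 ^ d * (ρ * ρ) := by
        rw [nsmul_eq_mul]
        exact mul_le_mul_of_nonneg_right (mod_cast hcard) (mul_self_nonneg ρ)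

lemma prob_not_isGood_le (hq : 1 - (q : ℝ) ≤ 1 / (2 * 9 ^ d)) (j : ℕ) (u : Fin d → ℤ) :
    ℙ[fun _ => q] {ζ | ¬ IsGood ζ j u} ≤ 1 / (2 * 9 ^ d) / 2 ^ j := by
  induction j generalizing u with
  | zero =>
    have hclosed : {ζ : (Fin d → ℤ) → Bool | ¬ IsGood ζ 0 u} = {ζ | ζ u = false} := by
      simp [IsGood]
    rw [hclosed, prob_coord]
    simpa using hq
  | succ j ih =>
    calc ℙ[fun _ => q] {ζ | ¬ IsGood ζ (j + 1) u}
        ≤ 9 ^ d * (1 / (2 * 9 ^ d) / 2 ^ j * (1 / (2 * 9 ^ d) / 2 ^ j)) :=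
          prob_not_isGood_succ_le ih u
      _ = 1 / (2 * 9 ^ d) / 2 ^ (j + 1) / 2 ^ j := by
          rw [pow_succ]
          field_simp
      _ ≤ 1 / (2 * 9 ^ d) / 2 ^ (j + 1) :=
          div_le_self (by positivity) (one_le_pow₀ one_le_two)

/-- The index of the block of side length `3 ^ j` containing `z`. -/
def ancestor (j : ℕ) (z : Fin d → ℤ) : Fin d → ℤ := fun i => z i / 3 ^ j

lemma mem_core_ancestor {ζ : (Fin d → ℤ) → Bool} (h : ∀ j < J, IsGood ζ j (ancestor j z)) :
    z ∈ core ζ J (ancestor J z) := by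
  induction J with
  | zero => exact funext fun i => (Int.ediv_one (z i)).symm
  | succ J ih =>
    refine ⟨ancestor J z, (mem_block three_pos).2 fun i => ?_, h J J.lt_succ_self,
      ih fun j hj => h j (hj.trans J.lt_succ_self)⟩
    rw [ancestor, ancestor, pow_succ, Int.ediv_ediv_of_nonneg (by positivity)]

lemma prob_exists_not_isGood_le (hq : 1 - (q : ℝ) ≤ 1 / (2 * 9 ^ d)) (J : ℕ) (z : Fin d → ℤ) :
    ℙ[fun _ => q] {ζ | ∃ j < J, ¬ IsGood ζ j (ancestor j z)} ≤ 1 / 9 ^ d := by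
  have hunion : {ζ : (Fin d → ℤ) → Bool | ∃ j < J, ¬ IsGood ζ j (ancestor j z)} =
      ⋃ j ∈ Finset.range J, {ζ | ¬ IsGood ζ j (ancestor j z)} := by
    ext ζ
    simp
  calc ℙ[fun _ => q] {ζ | ∃ j < J, ¬ IsGood ζ j (ancestor j z)}
      ≤ ∑ j ∈ Finset.range J, 1 / (2 * 9 ^ d) * (1 / 2 : ℝ) ^ j := by
        rw [hunion]
        refine (measureReal_biUnion_finset_le _ _).trans (Finset.sum_le_sum fun j _ => ?_)
        rw [one_div_pow, mul_one_div]
        exact prob_not_isGood_le hq j _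
    _ ≤ 1 / (2 * 9 ^ d) * 2 := by
        rw [← Finset.mul_sum]
        gcongr
        exact sum_geometric_two_le J
    _ = 1 / 9 ^ d := by field_simp

/-- The cube `[0, N) ^ d`. -/
noncomputable def cornerCube (d : ℕ) (N : ℤ) : Finset (Fin d → ℤ) := Finset.Icc 0 fun _ => N - 1

lemma mem_cornerCube {N : ℤ} : z ∈ cornerCube d N ↔ ∀ i, 0 ≤ z i ∧ z i ≤ N - 1 := by
  simp only [cornerCube, Finset.mem_Icc, Pi.le_def, forall_and, Pi.zero_apply]

/- Connect both endpoints to their midpoint. -/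
lemma sq_le_prob_connEvent_cornerCube {N D : ℤ} {ρ : ℝ} (hρ : 0 ≤ ρ)
    (h : ∀ z ∈ cornerCube d N, ∀ z' ∈ cornerCube d N, (∀ i, |z' i - z i| ≤ D) →
      ρ ≤ ℙ[fun _ => q] (connEvent Adj (cornerCube d N) z z'))
    (hz : z ∈ cornerCube d N) (hz' : z' ∈ cornerCube d N) (hD : ∀ i, |z' i - z i| ≤ 2 * D) :
    ρ * ρ ≤ ℙ[fun _ => q] (connEvent Adj (cornerCube d N) z z') := by
  let m : Fin d → ℤ := fun i => (z i + z' i) / 2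
  have hm : m ∈ cornerCube d N := by
    rw [mem_cornerCube] at hz hz' ⊢
    intro i
    dsimp only [m]
    have := hz i
    have := hz' i
    omega
  have hzm i : |m i - z i| ≤ D := by
    have := abs_le.1 (hD i)
    rw [abs_le]
    dsimp only [m]
    omega
  have hmz' i : |z' i - m i| ≤ D := by
    have := abs_le.1 (hD i)
    rw [abs_le]
    dsimp only [m]
    omega
  exact (mul_le_mul (h z hz m hm hzm) (h m hm z' hz' hmz') hρ measureReal_nonneg).trans
    (prob_connEvent_mul_le (Finset.finite_toSet _))

variable [Nontrivial (Fin d)]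

lemma half_le_prob_connEvent_block (hq : 1 - (q : ℝ) ≤ 1 / (2 * 9 ^ d))
    (hz : z ∈ block (3 ^ J) u) (hz' : z' ∈ block (3 ^ J) u) :
    1 / 2 ≤ ℙ[fun _ => q] (connEvent Adj (block (3 ^ J) u) z z') := by
  have hsub : (connEvent Adj (block (3 ^ J) u) z z')ᶜ ⊆
      {ζ | ∃ j < J + 1, ¬ IsGood ζ j (ancestor j z)} ∪
        {ζ | ∃ j < J + 1, ¬ IsGood ζ j (ancestor j z')} := by
    intro ζ hζ
    by_contra! h
    simp only [Set.mem_union, Set.mem_ofPred_eq, not_or, not_exists, not_and, not_not] at h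
    have hancestor {y} (hy : y ∈ block (3 ^ J) u) : ancestor J y = u :=
      funext ((mem_block (by positivity)).1 hy)
    have hcore {y} (hy : y ∈ block (3 ^ J) u) (hgood : ∀ j < J + 1, IsGood ζ j (ancestor j y)) :
        y ∈ core ζ J u :=
      hancestor hy ▸ mem_core_ancestor fun j hj => hgood j (hj.trans J.lt_succ_self)
    have hu : IsGood ζ J u := hancestor hz ▸ h.1 J J.lt_succ_self
    exact hζ ((conn_core hu (hcore hz h.1) (hcore hz' h.2)).mono (core_subset hu))
  have hbad : ℙ[fun _ => q] (connEvent Adj (block (3 ^ J) u) z z')ᶜ ≤ 1 / 9 ^ d + 1 / 9 ^ d :=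
    (measureReal_mono hsub).trans <| (measureReal_union_le _ _).trans <|
      add_le_add (prob_exists_not_isGood_le hq _ z) (prob_exists_not_isGood_le hq _ z')
  have hd : (1 : ℝ) / 9 ^ d ≤ 1 / 9 := by
    have : d ≠ 0 := by
      rintro rfl
      exact not_nontrivial _ ‹Nontrivial (Fin 0)›
    gcongr
    exact le_self_pow₀ (by norm_num) this
  have := one_le_prob_add_prob_compl (w := fun _ => q) (connEvent Adj (block (3 ^ J) u) z z')
  linarith

lemma half_le_prob_connEvent_Icc (hq : 1 - (q : ℝ) ≤ 1 / (2 * 9 ^ d)) {o : Fin d → ℤ}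
    (hz : z ∈ Set.Icc o fun i => o i + (3 ^ J - 1))
    (hz' : z' ∈ Set.Icc o fun i => o i + (3 ^ J - 1)) :
    1 / 2 ≤ ℙ[fun _ => q] (connEvent Adj (Set.Icc o fun i => o i + (3 ^ J - 1)) z z') := by
  have hblock {x : Fin d → ℤ} :
      x ∈ block (3 ^ J) 0 ↔ x + o ∈ Set.Icc o fun i => o i + (3 ^ J - 1) := by
    simp only [block, Set.mem_Icc, Pi.le_def, Pi.add_apply, Pi.zero_apply, mul_zero, zero_add]
    exact and_congr (forall_congr' fun i => by omega) (forall_congr' fun i => by omega)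
  refine (half_le_prob_connEvent_block (u := 0) hq (z := z - o) (z' := z' - o)
    (hblock.2 (by rwa [sub_add_cancel])) (hblock.2 (by rwa [sub_add_cancel]))).trans ?_
  rw [← prob_preimage_comp (fun _ => q) (add_left_injective o)
    ((determinedBy_connEvent ..).measurableSet (finite_block _ _))]
  refine measureReal_mono fun ξ hξ => ?_
  have hconn := Conn.map (adj' := Adj) (· + o) (fun _ _ h => h.add_right o)
    (Q := {x | x ∈ Set.Icc o (fun i => o i + (3 ^ J - 1)) ∧ ξ x = true})
    (fun _ hx => ⟨hblock.1 hx.1, hx.2⟩) hξ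
  rwa [sub_add_cancel, sub_add_cancel] at hconn

lemma half_le_prob_connEvent_cornerCube (hq : 1 - (q : ℝ) ≤ 1 / (2 * 9 ^ d)) {N : ℤ}
    (hN : 3 ^ J ≤ N) (hz : z ∈ cornerCube d N) (hz' : z' ∈ cornerCube d N)
    (hD : ∀ i, |z' i - z i| ≤ 3 ^ J - 1) :
    1 / 2 ≤ ℙ[fun _ => q] (connEvent Adj (cornerCube d N) z z') := by
  rw [mem_cornerCube] at hz hz'
  let o : Fin d → ℤ := fun i => min (min (z i) (z' i)) (N - 3 ^ J)
  refine (half_le_prob_connEvent_Icc (J := J) hq (o := o) ?_ ?_).trans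
    (measureReal_mono (connEvent_mono fun x hx => mem_cornerCube.2 fun i => ?_))
  · exact ⟨fun i => by grind, fun i => by grind⟩
  · exact ⟨fun i => by grind, fun i => by grind⟩
  · have := hx.1 i
    have := hx.2 i
    grind

lemma le_prob_connEvent_cornerCube (hq : 1 - (q : ℝ) ≤ 1 / (2 * 9 ^ d)) {N : ℕ} (hN : 3 ≤ N)
    (hz : z ∈ cornerCube d N) (hz' : z' ∈ cornerCube d N) :
    1 / 16 ≤ ℙ[fun _ => q] (connEvent Adj (cornerCube d N) z z') := by
  set J := Nat.log 3 N
  have hle : (3 : ℤ) ^ J ≤ N := mod_cast Nat.pow_log_le_self 3 (by omega)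
  have hlt : (N : ℤ) < 3 ^ J * 3 := by
    rw [← pow_succ]
    exact_mod_cast Nat.lt_pow_succ_log_self (b := 3) (by norm_num) N
  have hbase {z z' : Fin d → ℤ} := half_le_prob_connEvent_cornerCube (z := z) (z' := z') hq hle
  have hdouble {z z' : Fin d → ℤ} := sq_le_prob_connEvent_cornerCube (z := z) (z' := z')
    (by norm_num) fun _ hz _ hz' => hbase hz hz'
  refine le_trans (by norm_num) (sq_le_prob_connEvent_cornerCube (by norm_num)
    (fun _ hz _ hz' => hdouble hz hz') hz hz' fun i => ?_)
  have := mem_cornerCube.1 hz i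
  have := mem_cornerCube.1 hz' i
  rw [abs_le]
  omega

end HighDensity

/-! ### Flattening the layers -/

section Flatten

variable {V : Type*} {p δ α : unitInterval} {r : ℕ}

/-- The configuration in which a site is open when it is open in one of the first `r` layers. -/
def flatten (r : ℕ) (ω : V × ℕ → Bool) (y : V) : Bool :=
  decide (∃ l < r, ω (y, l) = true)

lemma determinedBy_flatten (r : ℕ) (y : V) (b : Bool) :
    DeterminedBy {ω | flatten r ω y = b} (Prod.mk y '' Set.Iio r) := by
  refine .of_imp fun ω ω' h hω => (decide_eq_decide.2 (exists_congr fun l =>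
    and_congr_right fun hl => ?_)).trans hω
  rw [h (y, l) ⟨l, hl, rfl⟩]

lemma finite_image_prodMk_Iio (r : ℕ) (y : V) : (Prod.mk y '' Set.Iio r).Finite :=
  (Set.finite_Iio r).image _

lemma measurable_flatten (r : ℕ) : Measurable (flatten r : (V × ℕ → Bool) → V → Bool) :=
  measurable_pi_lambda _ fun y => measurable_to_bool
    ((determinedBy_flatten r y true).measurableSet (finite_image_prodMk_Iio r y))

lemma prob_flatten (h : 1 - (α : ℝ) = (1 - p) * (1 - δ) ^ r) (y : V) (b : Bool) :
    ℙ[layerWeight p δ] {ω | flatten (r + 1) ω y = b} = if b then (α : ℝ) else 1 - α := by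
  classical
  have hfalse : ℙ[layerWeight p δ] {ω | flatten (r + 1) ω y = false} = 1 - α := by
    have hcylinder : {ω : V × ℕ → Bool | flatten (r + 1) ω y = false} =
        {ω | ∀ x ∈ (Finset.range (r + 1)).image (Prod.mk y), ω x = false} := by
      ext ω
      simp [flatten, -Order.lt_add_one_iff]
    rw [hcylinder, prob_cylinder _ _ fun _ => false,
      Finset.prod_image (Prod.mk_right_injective y).injOn, Finset.prod_range_succ']
    simp [layerWeight, h, mul_comm]
  cases b with
  | false => simpa using hfalse
  | true =>
    have htrue : {ω : V × ℕ → Bool | flatten (r + 1) ω y = true} =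
        {ω | flatten (r + 1) ω y = false}ᶜ := by
      ext ω
      simp
    rw [htrue, probReal_compl_eq_one_sub ((determinedBy_flatten (r + 1) y false).measurableSet
      (finite_image_prodMk_Iio _ y)), hfalse, sub_sub_cancel, if_pos rfl]

lemma map_flatten (h : 1 - (α : ℝ) = (1 - p) * (1 - δ) ^ r) :
    (bernoulliProd (layerWeight p δ)).map (flatten (r + 1) : (V × ℕ → Bool) → V → Bool) =
      bernoulliProd fun _ => α := by
  have hmeas := measurable_flatten (V := V) (r + 1)
  have := Measure.isProbabilityMeasure_map (μ := bernoulliProd (layerWeight p δ)) hmeas.aemeasurable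
  refine eq_bernoulliProd_of_cylinder fun F e => ?_
  have hpreimage : flatten (r + 1) ⁻¹' {ξ : V → Bool | ∀ x ∈ F, ξ x = e x} =
      ⋂ x ∈ F, {ω | flatten (r + 1) ω x = e x} := by
    ext ω
    simp
  have hdisjoint : (F : Set V).PairwiseDisjoint fun x => Prod.mk x '' Set.Iio (r + 1) := by
    refine fun x _ y _ hxy => Set.disjoint_left.2 ?_
    rintro _ ⟨l, _, rfl⟩ ⟨l', _, h⟩
    exact hxy (Prod.mk.inj h).1.symm
  have hcylinder : DeterminedBy {ξ : V → Bool | ∀ x ∈ F, ξ x = e x} F :=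
    .of_imp fun _ _ h hξ x hx => (h x hx).symm.trans (hξ x hx)
  rw [Measure.map_apply hmeas (hcylinder.measurableSet F.finite_toSet), hpreimage,
    ← ofReal_measureReal, prob_biInter_of_pairwiseDisjoint F
      (fun x _ => finite_image_prodMk_Iio (r + 1) x) (fun x _ => determinedBy_flatten _ _ _)
      hdisjoint,
    ENNReal.ofReal_prod_of_nonneg fun _ _ => measureReal_nonneg]
  exact Finset.prod_congr rfl fun x _ => by rw [prob_flatten h, apply_ite ENNReal.ofReal]

lemma prob_flatten_mem (h : 1 - (α : ℝ) = (1 - p) * (1 - δ) ^ r) {A : Set (V → Bool)}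
    (hA : MeasurableSet A) :
    ℙ[layerWeight p δ] {ω | flatten (r + 1) ω ∈ A} = ℙ[fun _ => α] A := by
  rw [← map_flatten h, map_measureReal_apply (measurable_flatten _) hA]
  rfl

/-- The event that the set `A` is joined to the set `B` inside `Λ`. -/
def joinEvent (adj : V → V → Prop) (Λ A B : Set V) : Set (V → Bool) :=
  {ξ | ∃ x ∈ A, ∃ y ∈ B, ξ ∈ connEvent adj Λ x y}

variable {adj : V → V → Prop} {Λ A B : Set V}

lemma determinedBy_joinEvent : DeterminedBy (joinEvent adj Λ A B) Λ :=
  .of_imp fun _ _ h ⟨x, hx, y, hy, hc⟩ => ⟨x, hx, y, hy, (determinedBy_connEvent.mem_iff h).1 hc⟩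

lemma isUpperSet_joinEvent : IsUpperSet (joinEvent adj Λ A B) :=
  fun _ _ h ⟨x, hx, y, hy, hc⟩ => ⟨x, hx, y, hy, isUpperSet_connEvent h hc⟩

lemma joinEvent_mono_left {A' : Set V} (h : A ⊆ A') :
    joinEvent adj Λ A B ⊆ joinEvent adj Λ A' B :=
  fun _ ⟨x, hx, hxy⟩ => ⟨x, h hx, hxy⟩

lemma prob_reachEvent_eq_prob_joinEvent (h : 1 - (α : ℝ) = (1 - p) * (1 - δ) ^ r)
    (hΛ : Λ.Finite) : ℙ[layerWeight p δ] (reachEvent adj Λ B A (r + 1) fun _ => 0) =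
      ℙ[fun _ => α] (joinEvent adj Λ A B) := by
  rw [← prob_flatten_mem h (determinedBy_joinEvent.measurableSet hΛ)]
  congr 1
  ext ω
  have havailable : availableSites Λ (r + 1) (fun _ => 0) ω =
      {w | w ∈ Λ ∧ flatten (r + 1) ω w = true} := by
    simp [availableSites, flatten]
  simp only [reachEvent, joinEvent, connEvent, Set.mem_ofPred_eq, havailable]

lemma exists_layerWeight (hpα : (p : ℝ) < α) (hα : (α : ℝ) < 1) (hr : r ≠ 0) :
    ∃ δ : unitInterval, 0 < (δ : ℝ) ∧ 1 - (α : ℝ) = (1 - p) * (1 - δ) ^ r := by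
  have hp : 0 < 1 - (p : ℝ) := by linarith
  set c := (1 - (α : ℝ)) / (1 - p) with hc
  have hc₀ : 0 ≤ c := div_nonneg (by linarith) hp.le
  have hc₁ : c < 1 := (div_lt_one hp).2 (by linarith)
  have hroot₀ : 0 ≤ c ^ (r : ℝ)⁻¹ := Real.rpow_nonneg hc₀ _
  have hroot₁ : c ^ (r : ℝ)⁻¹ < 1 := Real.rpow_lt_one hc₀ hc₁ (by positivity)
  refine ⟨⟨1 - c ^ (r : ℝ)⁻¹, by linarith, by linarith⟩, sub_pos.2 hroot₁, ?_⟩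
  rw [sub_sub_cancel, Real.rpow_inv_natCast_pow hc₀ hr, hc, mul_div_cancel₀ _ hp.ne']

end Flatten

section Supercritical

variable {d : ℕ} {α : unitInterval}

lemma bernoulliProd_perc_ne_zero {p : unitInterval} (hp : pcrit d < p) :
    bernoulliProd (fun _ : Fin d → ℤ => p) (Perc d) ≠ 0 := by
  intro hzero
  refine hp.not_ge (le_csSup ⟨1, fun x hx => hx.1.2⟩ ⟨p.2, fun μ hμ => ?_⟩)
  have := hμ.1
  rwa [eq_bernoulliProd_of_cylinder (w := fun _ => p) hμ.2]

/- The difference between `α` and some `p ∈ (p_c, α)` is spread over the upper layers. -/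
lemma exists_le_prob_joinEvent (hα₀ : 0 < (α : ℝ)) (hα₁ : (α : ℝ) < 1) (hα : pcrit d < α) (k : ℕ)
    [Nontrivial (Fin k)] :
    ∃ s : ℕ, 0 < s ∧ ∀ (o : Fin d → ℤ) (e : Fin k → Fin d) (Λ : Set (Fin d → ℤ)) (N : ℕ),
      e.Injective → Λ.Finite → 3 ≤ N →
      (∀ w ∈ cornerCube k N, cube (coarseSite o s e w) (4 * s) ⊆ Λ) →
      ∀ a ∈ cornerCube k N, ∀ b ∈ cornerCube k N, 1 / 16 ≤ ℙ[fun _ => α]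
        (joinEvent Adj Λ (cube (coarseSite o s e a) s) (cube (coarseSite o s e b) s)) := by
  obtain ⟨p, hp, hpα⟩ := exists_between (max_lt hα hα₀)
  obtain ⟨hpc, hp₀⟩ := max_lt_iff.1 hp
  lift p to unitInterval using ⟨hp₀.le, hpα.le.trans α.2.2⟩
  have hr : (cube (0 : Fin k → ℤ) 4).ncard ≠ 0 :=
    Set.ncard_ne_zero_of_mem (self_mem_cube 0 (by norm_num)) (finite_cube _ _)
  obtain ⟨δ, hδ₀, hδ⟩ := exists_layerWeight hpα hα₁ hr
  have hε : 0 < 1 / (2 * 9 ^ k : ℝ) := by positivity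
  have hε₁ : 1 / (2 * 9 ^ k : ℝ) ≤ 1 := by
    rw [div_le_one (by positivity)]
    linarith [one_le_pow₀ (show (1 : ℝ) ≤ 9 by norm_num) (n := k)]
  let q : unitInterval := ⟨1 - 1 / (2 * 9 ^ k), sub_nonneg.2 hε₁, sub_le_self _ hε.le⟩
  obtain ⟨m, n, hstep⟩ := exists_stepFailureProbLE p δ hp₀ (hpα.trans hα₁) hδ₀
    (bernoulliProd_perc_ne_zero hpc) hε
  refine ⟨n + m + 1, by omega, fun o e Λ N he hΛ hN hsub a ha b hb => ?_⟩
  push_cast at hsub ⊢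
  calc (1 / 16 : ℝ) ≤ ℙ[fun _ => q] (connEvent Adj (cornerCube k N : Set (Fin k → ℤ)) a b) :=
        le_prob_connEvent_cornerCube (sub_sub_cancel _ _).le hN ha hb
    _ ≤ ℙ[layerWeight p δ] (reachEvent Adj Λ (cube (coarseSite o (n + m + 1) e b) (n + m + 1))
          (cube (coarseSite o (n + m + 1) e a) m) (numLayers k) fun _ => 0) :=
        prob_connEvent_le_prob_reachEvent (by simpa [q] using hstep) he hΛ hsub a b
    _ = ℙ[fun _ => α] (joinEvent Adj Λ (cube (coarseSite o (n + m + 1) e a) m)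
          (cube (coarseSite o (n + m + 1) e b) (n + m + 1))) :=
        prob_reachEvent_eq_prob_joinEvent hδ hΛ
    _ ≤ _ := measureReal_mono (joinEvent_mono_left (cube_mono _ (by omega)))

end Supercritical

/-! ### Connections in slabs -/

section OpenEvent

variable {d : ℕ} {α : unitInterval} {a b x y z : Fin d → ℤ} {r : ℤ} {Q : Set (Fin d → ℤ)}

/-- The event that every site of `Q` is open. -/
def openEvent (Q : Set (Fin d → ℤ)) : Set ((Fin d → ℤ) → Bool) := {ξ | ∀ x ∈ Q, ξ x = true}

lemma determinedBy_openEvent : DeterminedBy (openEvent Q) Q :=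
  .of_imp fun _ _ h hξ x hx => (h x hx).symm.trans (hξ x hx)

lemma isUpperSet_openEvent : IsUpperSet (openEvent Q) := fun _ _ h hξ x hx => h x (hξ x hx)

lemma pow_ncard_cube_le_prob_openEvent (α : unitInterval) (hQ : Q ⊆ cube x r) :
    (α : ℝ) ^ (cube (0 : Fin d → ℤ) r).ncard ≤ ℙ[fun _ => α] (openEvent Q) := by
  have hfinite := (finite_cube x r).subset hQ
  have hcylinder : openEvent Q = {ξ | ∀ y ∈ hfinite.toFinset, ξ y = true} := by
    ext ξ
    simp [openEvent]
  rw [hcylinder, prob_cylinder _ _ fun _ => true]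
  simp only [if_true, Finset.prod_const, ← Set.ncard_eq_toFinset_card Q hfinite]
  refine pow_le_pow_of_le_one α.2.1 α.2.2 ?_
  rw [ncard_cube, ← ncard_cube x]
  exact Set.ncard_le_ncard hQ (finite_cube _ _)

lemma mem_connEvent_of_mem_openEvent {ξ : (Fin d → ℤ) → Bool}
    (h : ξ ∈ openEvent (Set.Icc a b ∩ cube x r)) (hy : y ∈ Set.Icc a b ∩ cube x r)
    (hz : z ∈ Set.Icc a b ∩ cube x r) : ξ ∈ connEvent Adj (Set.Icc a b) y z := by
  have hconn : Conn Adj (Set.Icc a b ∩ cube x r) y z := by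
    rw [cube, Set.Icc_inter_Icc] at *
    exact conn_Icc hy hz
  exact hconn.mono fun w hw => ⟨hw.1, h w hw⟩

lemma sq_mul_prob_joinEvent_le_prob_connEvent {A B : Set (Fin d → ℤ)} (hr : 0 ≤ r)
    (hx : x ∈ Set.Icc a b) (hy : y ∈ Set.Icc a b) (hA : A ⊆ Set.Icc a b ∩ cube x r)
    (hB : B ⊆ Set.Icc a b ∩ cube y r) :
    ((α : ℝ) ^ (cube (0 : Fin d → ℤ) r).ncard) ^ 2 *
        ℙ[fun _ => α] (joinEvent Adj (Set.Icc a b) A B) ≤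
      ℙ[fun _ => α] (connEvent Adj (Set.Icc a b) x y) := by
  set Qx := Set.Icc a b ∩ cube x r
  set Qy := Set.Icc a b ∩ cube y r
  have hdx : DeterminedBy (openEvent Qx) (Set.Icc a b) :=
    determinedBy_openEvent.mono Set.inter_subset_left
  have hdy : DeterminedBy (openEvent Qy) (Set.Icc a b) :=
    determinedBy_openEvent.mono Set.inter_subset_left
  have hopen : ((α : ℝ) ^ (cube (0 : Fin d → ℤ) r).ncard) ^ 2 ≤
      ℙ[fun _ => α] (openEvent Qx ∩ openEvent Qy) := by
    rw [sq]
    exact (mul_le_mul (pow_ncard_cube_le_prob_openEvent α Set.inter_subset_right)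
      (pow_ncard_cube_le_prob_openEvent α Set.inter_subset_right) (pow_nonneg α.2.1 _)
      measureReal_nonneg).trans (prob_mul_le_prob_inter_of_isUpperSet isUpperSet_openEvent
        isUpperSet_openEvent hdx hdy (Set.finite_Icc a b))
  refine (mul_le_mul_of_nonneg_right hopen measureReal_nonneg).trans
    ((prob_mul_le_prob_inter_of_isUpperSet (isUpperSet_openEvent.inter isUpperSet_openEvent)
      isUpperSet_joinEvent (hdx.inter hdy) determinedBy_joinEvent (Set.finite_Icc a b)).trans
      (measureReal_mono ?_))
  rintro ξ ⟨⟨hξx, hξy⟩, x', hx', y', hy', hconn⟩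
  exact ((mem_connEvent_of_mem_openEvent hξx ⟨hx, self_mem_cube x hr⟩ (hA hx')).trans hconn).trans
    (mem_connEvent_of_mem_openEvent hξy (hB hy') ⟨hy, self_mem_cube y hr⟩)

end OpenEvent

section CoarseSlab

variable {k : ℕ} {N : ℕ} {s : ℤ} {j : Fin (k + 1)} {a b o x : Fin (k + 1) → ℤ}

lemma cube_coarseSite_subset_Icc (hs : 0 ≤ s)
    (ho : ∀ i, o (j.succAbove i) = a (j.succAbove i) + 4 * s)
    (hj : o j ∈ Set.Icc (a j + 4 * s) (b j - 4 * s))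
    (hN : ∀ i, s * (N - 1) ≤ b (j.succAbove i) - a (j.succAbove i) - 8 * s)
    {w : Fin k → ℤ} (hw : w ∈ cornerCube k N) :
    cube (coarseSite o s j.succAbove w) (4 * s) ⊆ Set.Icc a b := by
  rintro z hz
  have hbetween (l : Fin (k + 1)) : a l ≤ z l ∧ z l ≤ b l := by
    have hzl := abs_le.1 (mem_cube.1 hz l)
    obtain rfl | ⟨i, rfl⟩ := Fin.eq_self_or_eq_succAbove j l
    · rw [coarseSite_apply_of_ne o s w fun i => (Fin.succAbove_ne l i).symm] at hzl
      exact ⟨by linarith [hj.1], by linarith [hj.2]⟩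
    · rw [coarseSite_apply o s Fin.succAbove_right_injective, ho] at hzl
      obtain ⟨hw₀, hw₁⟩ := mem_cornerCube.1 hw i
      have := mul_nonneg hs hw₀
      have := mul_le_mul_of_nonneg_left hw₁ hs
      exact ⟨by linarith, by linarith [hN i]⟩
  exact ⟨fun l => (hbetween l).1, fun l => (hbetween l).2⟩

lemma exists_abs_mul_sub_le {u : ℤ} (hs : 0 < s) (hN : 1 ≤ N) (hu₀ : -(4 * s) ≤ u)
    (hu₁ : u ≤ s * N + 4 * s) : ∃ z : ℤ, (0 ≤ z ∧ z ≤ N - 1) ∧ |s * z - u| ≤ 5 * s := by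
  rcases lt_or_ge u 0 with hu | hu
  · exact ⟨0, ⟨le_rfl, by omega⟩, abs_le.2 ⟨by linarith, by linarith⟩⟩
  rcases lt_or_ge (u / s) N with hlt | hge
  · have hle : s * (u / s) ≤ u := Int.mul_ediv_self_le hs.ne'
    have hlt' : u < s * (u / s) + s := Int.lt_mul_ediv_self_add hs
    exact ⟨u / s, ⟨Int.ediv_nonneg hu hs.le, by omega⟩, abs_le.2 ⟨by linarith, by linarith⟩⟩
  · have hle : N * s ≤ u := (Int.le_ediv_iff_mul_le hs).1 hge
    exact ⟨N - 1, ⟨by omega, le_rfl⟩, abs_le.2 ⟨by linarith, by linarith⟩⟩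

lemma exists_cube_coarseSite_subset_cube (hs : 0 < s) (hN₀ : 1 ≤ N)
    (ho : ∀ i, o (j.succAbove i) = a (j.succAbove i) + 4 * s)
    (hN : ∀ i, b (j.succAbove i) - a (j.succAbove i) - 8 * s ≤ s * N)
    (hx : x ∈ Set.Icc a b) (hj : |o j - x j| ≤ 5 * s) :
    ∃ z ∈ cornerCube k N, cube (coarseSite o s j.succAbove z) s ⊆ cube x (6 * s) := by
  choose z hz hzx using fun i : Fin k =>
    exists_abs_mul_sub_le (u := x (j.succAbove i) - a (j.succAbove i) - 4 * s) hs hN₀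
      (by linarith [hx.1 (j.succAbove i)]) (by linarith [hx.2 (j.succAbove i), hN i])
  refine ⟨z, mem_cornerCube.2 hz, fun w hw => mem_cube.2 fun l => ?_⟩
  have hclose : |coarseSite o s j.succAbove z l - x l| ≤ 5 * s := by
    obtain rfl | ⟨i, rfl⟩ := Fin.eq_self_or_eq_succAbove j l
    · rwa [coarseSite_apply_of_ne o s z fun i => (Fin.succAbove_ne l i).symm]
    · rw [coarseSite_apply o s Fin.succAbove_right_injective, ho]
      convert hzx i using 2
      ring
  linarith [abs_sub_le (w l) (coarseSite o s j.succAbove z l) (x l), mem_cube.1 hw l]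

lemma exists_slab_origin (a b : Fin (k + 1) → ℤ) (j : Fin (k + 1)) {t : ℤ} (hs : 0 ≤ s)
    (hj : 8 * s ≤ b j - a j) (ht : t ∈ Set.Icc (a j) (b j)) :
    ∃ o : Fin (k + 1) → ℤ, (∀ i, o (j.succAbove i) = a (j.succAbove i) + 4 * s) ∧
      o j ∈ Set.Icc (a j + 4 * s) (b j - 4 * s) ∧ |o j - t| ≤ 5 * s := by
  obtain ⟨ht₀, ht₁⟩ := ht
  refine ⟨j.insertNth (max (a j + 4 * s) (min t (b j - 4 * s)))
    fun i => a (j.succAbove i) + 4 * s, fun i => by simp, ?_, ?_⟩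
  · rw [Fin.insertNth_apply_same, Set.mem_Icc]
    omega
  · rw [Fin.insertNth_apply_same, abs_le]
    omega

lemma exists_tile_count {W : ℤ} (hs : 0 < s) (hW : 10 * s ≤ W) :
    ∃ N : ℕ, 3 ≤ N ∧ s * ((N : ℤ) - 1) ≤ W - 8 * s ∧ W - 8 * s ≤ s * N := by
  have htwo : 2 ≤ (W - 8 * s) / s := (Int.le_ediv_iff_mul_le hs).2 (by linarith)
  refine ⟨((W - 8 * s) / s + 1).toNat, by omega, ?_⟩
  rw [Int.toNat_of_nonneg (by omega), add_sub_cancel_right, mul_add, mul_one]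
  exact ⟨Int.mul_ediv_self_le hs.ne', (Int.lt_mul_ediv_self_add hs).le⟩

end CoarseSlab

/-- Any two sites of a box at the same height in direction `j` are connected inside the box with
probability at least `c`, provided the box has height at least `k₀` in direction `j` and a common
width at least `2 * k₀` in all the others. -/
def SlabConnProbGE (d : ℕ) (α : unitInterval) (k₀ : ℕ) (c : ℝ) : Prop :=
  ∀ (a b x y : Fin d → ℤ) (j : Fin d) (W : ℤ), 2 * k₀ ≤ W → (∀ l ≠ j, b l - a l = W) →
    k₀ ≤ b j - a j → x ∈ Set.Icc a b → y ∈ Set.Icc a b → x j = y j →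
    c ≤ ℙ[fun _ => α] (connEvent Adj (Set.Icc a b) x y)

lemma exists_slabConnProbGE {k : ℕ} [Nontrivial (Fin k)] {α : unitInterval}
    (hα₀ : 0 < (α : ℝ)) (hα₁ : (α : ℝ) < 1) (hα : pcrit (k + 1) < α) :
    ∃ (k₀ : ℕ) (c : ℝ), 0 < c ∧ c ≤ 1 ∧ SlabConnProbGE (k + 1) α k₀ c := by
  obtain ⟨s, hs, hjoin⟩ := exists_le_prob_joinEvent hα₀ hα₁ hα k
  set ρ := (α : ℝ) ^ (cube (0 : Fin (k + 1) → ℤ) (6 * s)).ncard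
  have hρ₀ : 0 < ρ := pow_pos hα₀ _
  have hρ₁ : ρ ≤ 1 := pow_le_one₀ hα₀.le hα₁.le
  refine ⟨8 * s, ρ ^ 2 * (1 / 16), by positivity, by nlinarith,
    fun a b x y j W hW hab hj hx hy hxy => ?_⟩
  push_cast at hW hj
  have hs' : (0 : ℤ) < s := mod_cast hs
  have hwidth (i : Fin k) : b (j.succAbove i) - a (j.succAbove i) = W := hab _ (j.succAbove_ne i)
  obtain ⟨N, hN₃, hN₀, hN₁⟩ := exists_tile_count (W := W) hs' (by omega)
  obtain ⟨o, ho, hoj, hox⟩ := exists_slab_origin a b j hs'.le hj ⟨hx.1 j, hx.2 j⟩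
  have hsub (w : Fin k → ℤ) (hw : w ∈ cornerCube k N) :
      cube (coarseSite o s j.succAbove w) (4 * s) ⊆ Set.Icc a b :=
    cube_coarseSite_subset_Icc hs'.le ho hoj (fun i => (hwidth i).symm ▸ hN₀) hw
  have hnear (v : Fin (k + 1) → ℤ) (hv : v ∈ Set.Icc a b) (hvj : |o j - v j| ≤ 5 * s) :
      ∃ z ∈ cornerCube k N,
        cube (coarseSite o s j.succAbove z) s ⊆ Set.Icc a b ∩ cube v (6 * s) := by
    obtain ⟨z, hz, hzv⟩ := exists_cube_coarseSite_subset_cube hs' (by omega) ho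
      (fun i => (hwidth i).symm ▸ hN₁) hv hvj
    exact ⟨z, hz, Set.subset_inter ((cube_mono _ (by omega)).trans (hsub z hz)) hzv⟩
  obtain ⟨z, hz, hzx⟩ := hnear x hx hox
  obtain ⟨z', hz', hzy⟩ := hnear y hy (hxy ▸ hox)
  refine le_trans ?_ (sq_mul_prob_joinEvent_le_prob_connEvent (by positivity) hx hy hzx hzy)
  exact mul_le_mul_of_nonneg_left (hjoin o _ _ N Fin.succAbove_right_injective (Set.finite_Icc a b)
    hN₃ hsub z hz z' hz') (sq_nonneg ρ)

/-! ### Unmerged clusters die out while climbing -/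

section Slab

variable {d : ℕ} {M l l' m m' : ℤ} {j : Fin d} {x : Fin d → ℤ}

/-- The sites of `cube 0 M`, without the restriction on the coordinate `j`, whose height in
direction `j` lies between `l` and `l'`. -/
def slab (M : ℤ) (j : Fin d) (l l' : ℤ) : Set (Fin d → ℤ) :=
  Set.Icc (Function.update (fun _ => -M) j l) (Function.update (fun _ => M) j l')

lemma mem_slab : x ∈ slab M j l l' ↔ (∀ i ≠ j, |x i| ≤ M) ∧ l ≤ x j ∧ x j ≤ l' := by
  rw [slab, Set.mem_Icc, update_le_iff, le_update_iff]
  simp only [abs_le, forall_and]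
  tauto

lemma finite_slab : (slab M j l l').Finite := Set.finite_Icc _ _

lemma slab_subset_slab (hl : m ≤ l) (hl' : l' ≤ m') : slab M j l l' ⊆ slab M j m m' :=
  Set.Icc_subset_Icc (update_le_update_iff.2 ⟨hl, fun _ _ => le_rfl⟩)
    (update_le_update_iff.2 ⟨hl', fun _ _ => le_rfl⟩)

lemma cube_zero_eq_slab (M : ℤ) (j : Fin d) : cube 0 M = slab M j (-M) M := by
  simp only [cube, slab, Pi.zero_apply, zero_sub, zero_add, Function.update_eq_self]

lemma disjoint_slab (h : l' < m) : Disjoint (slab M j l l') (slab M j m m') := by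
  refine Set.disjoint_left.2 fun x hx hx' => ?_
  linarith [(mem_slab.1 hx).2.2, (mem_slab.1 hx').2.1]

end Slab

section LinkEvent

variable {d : ℕ} {S : Set (Fin d → ℤ)} {x y : Fin d → ℤ}

/-- The event that `x` and `y` lie in the same open cluster of `S`. -/
def linkEvent (S : Set (Fin d → ℤ)) (x y : Fin d → ℤ) : Set ((Fin d → ℤ) → Bool) :=
  openEvent {x} ∩ connEvent Adj S x y

lemma determinedBy_linkEvent (hx : x ∈ S) : DeterminedBy (linkEvent S x y) S :=
  (determinedBy_openEvent.mono (Set.singleton_subset_iff.2 hx)).inter determinedBy_connEvent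

variable {M l : ℤ} {j : Fin d} {α : unitInterval} {k₀ : ℕ} {c : ℝ}

lemma prob_compl_linkEvent_slab_le (h : SlabConnProbGE d α k₀ c) (hM : k₀ ≤ M)
    (hx : x ∈ slab M j l (l + k₀)) (hy : y ∈ slab M j l (l + k₀)) (hxy : x j = y j) :
    ℙ[fun _ => α] (linkEvent (slab M j l (l + k₀)) x y)ᶜ ≤ 1 - α * c := by
  have hconn : c ≤ ℙ[fun _ => α] (connEvent Adj (slab M j l (l + k₀)) x y) :=
    h _ _ x y j (2 * M) (by omega)
      (fun i hi => by rw [Function.update_of_ne hi, Function.update_of_ne hi]; ring)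
      (by rw [Function.update_self, Function.update_self]; omega) hx hy hxy
  have hlink : α * c ≤ ℙ[fun _ => α] (linkEvent (slab M j l (l + k₀)) x y) := by
    refine le_trans ?_ (prob_mul_le_prob_inter_of_isUpperSet isUpperSet_openEvent
      isUpperSet_connEvent (determinedBy_openEvent.mono (Set.singleton_subset_iff.2 hx))
      determinedBy_connEvent finite_slab)
    have hopen : openEvent {x} = {ξ | ξ x = true} := by simp [openEvent]
    rw [hopen, prob_coord, if_pos rfl]
    exact mul_le_mul_of_nonneg_left hconn α.2.1
  rw [probReal_compl_eq_one_sub ((determinedBy_linkEvent hx).measurableSet finite_slab)]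
  linarith

end LinkEvent

section Split

variable {d : ℕ} {M l l' : ℤ} {j : Fin d} {u v : Fin d → ℤ} {ξ : (Fin d → ℤ) → Bool}

/-- The sites of height `l` in direction `j` which are reached from `u` through open sites of
`cube 0 M` of height at most `l`. -/
def topReach (M : ℤ) (j : Fin d) (l : ℤ) (u : Fin d → ℤ) (ξ : (Fin d → ℤ) → Bool) :
    Set (Fin d → ℤ) :=
  {z ∈ slab M j (-M) l | z j = l ∧ ξ ∈ connEvent Adj (slab M j (-M) l) u z}

/-- The event that the clusters of `u` and `v` in the part of `cube 0 M` of height at most `l` in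
direction `j` both reach height `l`, but are different. -/
def splitEvent (M : ℤ) (j : Fin d) (u v : Fin d → ℤ) (l : ℤ) : Set ((Fin d → ℤ) → Bool) :=
  {ξ | (ξ u = true ∧ ξ v = true) ∧
    ((topReach M j l u ξ).Nonempty ∧ (topReach M j l v ξ).Nonempty) ∧
    ξ ∉ connEvent Adj (slab M j (-M) l) u v}

lemma topReach_congr {ξ' : (Fin d → ℤ) → Bool} (h : ∀ x ∈ slab M j (-M) l, ξ x = ξ' x) :
    topReach M j l u ξ = topReach M j l u ξ' :=
  Set.ext fun _ => and_congr_right fun _ => and_congr_right fun _ =>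
    determinedBy_connEvent.mem_iff h

lemma determinedBy_splitEvent (hu : u ∈ slab M j (-M) l) (hv : v ∈ slab M j (-M) l) :
    DeterminedBy (splitEvent M j u v l) (slab M j (-M) l) :=
  .of_imp fun ξ ξ' h ⟨⟨hξu, hξv⟩, hreach, hconn⟩ =>
    ⟨⟨(h u hu).symm.trans hξu, (h v hv).symm.trans hξv⟩,
      by simpa only [topReach_congr h] using hreach,
      fun hconn' => hconn ((determinedBy_connEvent.mem_iff h).2 hconn')⟩

lemma topReach_nonempty {y : Fin d → ℤ} (hu : u ∈ slab M j (-M) l) (hy : l ≤ y j)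
    (h : ξ ∈ connEvent Adj (slab M j (-M) l') u y) : (topReach M j l u ξ).Nonempty := by
  obtain hul | hul := (mem_slab.1 hu).2.2.eq_or_lt
  · exact ⟨u, hu, hul, Conn.refl⟩
  obtain ⟨w, hw, w', hw', huw, hadj, hw'S, hξw'⟩ :=
    Conn.exists_first_exit (C := {x | x j < l}) hul (not_lt.2 hy) h
  simp only [Set.mem_ofPred_eq, not_lt] at hw hw'
  have hw'l : w' j = l := by
    have := (abs_le.1 (hadj.abs_sub_le j)).2
    omega
  have hlower {x : Fin d → ℤ} (hx : x ∈ slab M j (-M) l') (hxl : x j ≤ l) :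
      x ∈ slab M j (-M) l := by
    rw [mem_slab] at hx ⊢
    exact ⟨hx.1, hx.2.1, hxl⟩
  refine ⟨w', hlower hw'S hw'l.le, hw'l, Conn.tail (huw.mono ?_) hadj ⟨hlower hw'S hw'l.le, hξw'⟩⟩
  exact fun x hx => ⟨hlower hx.1.1 (le_of_lt hx.2), hx.1.2⟩

lemma splitEvent_anti (hu : u ∈ slab M j (-M) l) (hv : v ∈ slab M j (-M) l) (h : l ≤ l') :
    splitEvent M j u v l' ⊆ splitEvent M j u v l := by
  rintro ξ ⟨hopen, ⟨⟨u', -, hu', huu'⟩, v', -, hv', hvv'⟩, hconn⟩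
  exact ⟨hopen,
    ⟨topReach_nonempty hu (h.trans_eq hu'.symm) huu',
      topReach_nonempty hv (h.trans_eq hv'.symm) hvv'⟩,
    fun huv => hconn (connEvent_mono (slab_subset_slab le_rfl h) huv)⟩

lemma add_single_mem_slab (hu : u ∈ topReach M j l v ξ) (hl : l < l') :
    u + Pi.single j 1 ∈ slab M j (l + 1) l' := by
  refine mem_slab.2 ⟨fun i hi => by simpa [hi] using (mem_slab.1 hu.1).1 i hi, ?_⟩
  simpa [hu.2.1] using hl

lemma notMem_linkEvent_of_mem_splitEvent (hv : v ∈ slab M j (-M) l) (hl : l < l')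
    (h : ξ ∈ splitEvent M j u v l') {u' v' : Fin d → ℤ} (hu' : u' ∈ topReach M j l u ξ)
    (hv' : v' ∈ topReach M j l v ξ) :
    ξ ∉ linkEvent (slab M j (l + 1) l') (u' + Pi.single j 1) (v' + Pi.single j 1) := by
  rintro ⟨hopen, hconn⟩
  have hlow : -M ≤ l := (mem_slab.1 hv).2.1.trans (mem_slab.1 hv).2.2
  have hlower : slab M j (-M) l ⊆ slab M j (-M) l' := slab_subset_slab le_rfl hl.le
  have hupper : slab M j (l + 1) l' ⊆ slab M j (-M) l' := slab_subset_slab (by omega) le_rfl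
  have hstep {z w : Fin d → ℤ} (hz : z ∈ topReach M j l w ξ)
      (hξ : ξ (z + Pi.single j 1) = true) :
      ξ ∈ connEvent Adj (slab M j (-M) l') w (z + Pi.single j 1) :=
    Conn.tail (connEvent_mono hlower hz.2.2) (adj_add_single z j (.inl rfl))
      ⟨hupper (add_single_mem_slab hz hl), hξ⟩
  have hopen' : ξ (v' + Pi.single j 1) = true := by
    rcases hconn.eq_or_mem with heq | hmem
    exacts [heq ▸ hopen _ rfl, hmem.2]
  exact h.2.2 (((hstep hu' (hopen _ rfl)).trans (connEvent_mono hupper hconn)).trans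
    (Conn.symm ⟨hlower hv, h.1.2⟩ (hstep hv' hopen')))

variable {α : unitInterval} {k₀ : ℕ} {c : ℝ}

/- Given the part of the configuration of height at most `l`, the two clusters fail to merge within
the next `k₀ + 1` layers only if the sites above their tops are not linked in these layers. -/
lemma prob_splitEvent_add_le (h : SlabConnProbGE d α k₀ c) (hM : k₀ ≤ M)
    (hu : u ∈ slab M j (-M) l) (hv : v ∈ slab M j (-M) l) :
    ℙ[fun _ => α] (splitEvent M j u v (l + 1 + k₀)) ≤
      (1 - α * c) * ℙ[fun _ => α] (splitEvent M j u v l) := by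
  let F (ξ : (Fin d → ℤ) → Bool) :=
    (ξ ∈ splitEvent M j u v l, topReach M j l u ξ, topReach M j l v ξ)
  let L (u' v' : Fin d → ℤ) : Set ((Fin d → ℤ) → Bool) :=
    linkEvent (slab M j (l + 1) (l + 1 + k₀)) (u' + Pi.single j 1) (v' + Pi.single j 1)
  let C (q : Prop × Set (Fin d → ℤ) × Set (Fin d → ℤ)) : Set ((Fin d → ℤ) → Bool) :=
    {ξ | ∀ u' ∈ q.2.1, ∀ v' ∈ q.2.2, ξ ∉ L u' v'}
  have hF : (Set.range F).Finite :=
    (Set.finite_univ.prod ((finite_slab.finite_subsets).prod finite_slab.finite_subsets)).subset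
      (Set.range_subset_iff.2 fun ξ => ⟨trivial, Set.sep_subset _ _, Set.sep_subset _ _⟩)
  have hup {z w : Fin d → ℤ} {ξ} (hz : z ∈ topReach M j l w ξ) :
      z + Pi.single j 1 ∈ slab M j (l + 1) (l + 1 + k₀) := add_single_mem_slab hz (by omega)
  have hsub : splitEvent M j u v (l + 1 + k₀) ⊆ {ξ | (F ξ).1 ∧ ξ ∈ C (F ξ)} := fun ξ hξ =>
    ⟨splitEvent_anti hu hv (by omega) hξ, fun _ hu' _ hv' =>
      notMem_linkEvent_of_mem_splitEvent hv (by omega) hξ hu' hv'⟩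
  have hdetermined (ξ) : DisjointlyDetermined {ξ' | F ξ' = F ξ} (C (F ξ)) := by
    refine ⟨slab M j (-M) l, slab M j (l + 1) (l + 1 + k₀), finite_slab, finite_slab,
      disjoint_slab (by omega),
      .of_imp fun ξ₁ ξ₂ h₁₂ hξ₁ => ?_, .of_imp fun ξ₁ ξ₂ h₁₂ hξ₁ u' hu' v' hv' hlink => ?_⟩
    · refine Eq.trans ?_ hξ₁
      simp only [F, topReach_congr h₁₂, (determinedBy_splitEvent hu hv).mem_iff h₁₂]
    · exact hξ₁ u' hu' v' hv' (((determinedBy_linkEvent (hup hu')).mem_iff h₁₂).2 hlink)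
  refine (measureReal_mono hsub).trans
    (prob_and_mem_le_mul_prob (G := (·.1)) hF (fun ξ _ => hdetermined ξ) fun ξ hξ => ?_)
  obtain ⟨-, ⟨⟨u', hu'⟩, v', hv'⟩, -⟩ := hξ
  have hsub' : C (F ξ) ⊆ (L u' v')ᶜ := fun ξ' hξ' => hξ' u' hu' v' hv'
  refine (measureReal_mono hsub').trans (prob_compl_linkEvent_slab_le h hM (hup hu') (hup hv') ?_)
  simp [hu'.2.1, hv'.2.1]

lemma prob_splitEvent_le (h : SlabConnProbGE d α k₀ c) (hc : c ≤ 1) (hM : k₀ ≤ M)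
    (hu : u ∈ slab M j (-M) l) (hv : v ∈ slab M j (-M) l) (n : ℕ) :
    ℙ[fun _ => α] (splitEvent M j u v (l + n * (k₀ + 1))) ≤ (1 - α * c) ^ n := by
  have hr : 0 ≤ 1 - α * c := sub_nonneg.2 ((mul_le_of_le_one_right α.2.1 hc).trans α.2.2)
  induction n with
  | zero => simp [measureReal_le_one]
  | succ n ih =>
    have hsub : slab M j (-M) l ⊆ slab M j (-M) (l + n * (k₀ + 1)) :=
      slab_subset_slab le_rfl (le_add_of_nonneg_right (by positivity))
    have heq : l + (n + 1 : ℕ) * (k₀ + 1) = l + n * (k₀ + 1) + 1 + k₀ := by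
      push_cast
      ring
    rw [heq, pow_succ']
    exact (prob_splitEvent_add_le h hM (hsub hu) (hsub hv)).trans
      (mul_le_mul_of_nonneg_left ih hr)

end Split

/-! ### The unique crossing cluster -/

section OpenConnIn

variable {d : ℕ} {S : Set (Fin d → ℤ)} {ξ : (Fin d → ℤ) → Bool} {x y : Fin d → ℤ} {M : ℕ}

lemma le_normInf_sub_iff (hM : 0 < M) : M ≤ normInf (x - y) ↔ ∃ i, (M : ℤ) ≤ |x i - y i| := by
  rw [normInf, Finset.le_sup_iff hM]
  simp only [Finset.mem_univ, true_and, Pi.sub_apply, Int.abs_eq_natAbs, Nat.cast_le]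

lemma box_zero_eq_cube (M : ℕ) : box (0 : Fin d → ℤ) M = cube 0 M := by
  ext y
  simp only [box, normInf, Set.mem_ofPred_eq, Finset.sup_le_iff, mem_cube, sub_zero,
    Finset.mem_univ, true_imp_iff, Pi.zero_apply, Int.abs_eq_natAbs, Nat.cast_le]

lemma mem_connEvent_of_openConnIn (h : openConnIn d S ξ x y) : ξ ∈ connEvent Adj S x y := by
  obtain ⟨n, γ, rfl, rfl, hmem, hadj⟩ := h
  have hconn : ∀ i ≤ n, ξ ∈ connEvent Adj S (γ 0) (γ i) := by
    intro i
    induction i with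
    | zero => exact fun _ => Conn.refl
    | succ i ih => exact fun hi => Conn.tail (ih (by omega)) (hadj i (by omega)) (hmem _ hi)
  exact hconn n le_rfl

lemma openConnIn_of_mem_connEvent (hx : x ∈ S ∧ ξ x = true) (h : ξ ∈ connEvent Adj S x y) :
    openConnIn d S ξ x y := by
  induction h with
  | refl =>
    exact ⟨0, fun _ => x, rfl, rfl, fun _ _ => hx, fun _ hi => absurd hi (Nat.not_lt_zero _)⟩
  | @tail b c _ hbc ih =>
    obtain ⟨n, γ, rfl, rfl, hmem, hadj⟩ := ih
    refine ⟨n + 1, fun i => if i ≤ n then γ i else c, by simp, by simp, fun i _ => ?_,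
      fun i hi => ?_⟩
    · by_cases hin : i ≤ n
      · simpa only [if_pos hin] using hmem i hin
      · simp only [if_neg hin]
        exact hbc.2
    · obtain hin | rfl : i + 1 ≤ n ∨ i = n := by omega
      · simpa only [if_pos hin, if_pos (Nat.le_of_succ_le hin)] using hadj i hin
      · simp only [le_rfl, if_true, if_neg (Nat.not_succ_le_self i)]
        exact hbc.1

lemma openConnIn_iff (hx : x ∈ S ∧ ξ x = true) :
    openConnIn d S ξ x y ↔ ξ ∈ connEvent Adj S x y :=
  ⟨mem_connEvent_of_openConnIn, openConnIn_of_mem_connEvent hx⟩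

lemma mem_of_mem_connEvent (hx : x ∈ S ∧ ξ x = true) (h : ξ ∈ connEvent Adj S x y) :
    y ∈ S ∧ ξ y = true :=
  Conn.mem (P := {w | w ∈ S ∧ ξ w = true}) h hx

lemma mem_connEvent_symm (hx : x ∈ S ∧ ξ x = true) (h : ξ ∈ connEvent Adj S x y) :
    ξ ∈ connEvent Adj S y x :=
  Conn.symm (P := {w | w ∈ S ∧ ξ w = true}) hx h

end OpenConnIn

section Crossing

variable {d M : ℕ} {ξ : (Fin d → ℤ) → Bool} {a b x y : Fin d → ℤ} {i j k : Fin d}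

/-- The event that, for some direction, two different clusters of a bottom part of `cube 0 M` climb
`M` levels above the higher of two of their sites without merging. -/
def unmergedEvent (d M : ℕ) : Set ((Fin d → ℤ) → Bool) :=
  {ξ | ∃ j, ∃ u ∈ cube 0 M, ∃ v ∈ cube 0 M, (v j ≤ u j ∧ u j ≤ 0) ∧
    ξ ∈ splitEvent M j u v (u j + M)}

/-- The event that a single open path crosses `cube 0 M` between the opposite faces of every
direction other than `k`. -/
def crossEvent (M : ℕ) (k : Fin d) : Set ((Fin d → ℤ) → Bool) :=
  {ξ | ∃ x y, (x ∈ cube 0 M ∧ ξ x = true) ∧ ξ ∈ connEvent Adj (cube 0 M) x y ∧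
    ∀ l ≠ k, x l = -M ∧ y l = M}

/- Both clusters climb to the height `a j + M`, so they have merged by then. -/
lemma mem_connEvent_of_crossing (hξ : ξ ∉ unmergedEvent d M) (hx : x ∈ cube 0 M ∧ ξ x = true)
    (hxy : ξ ∈ connEvent Adj (cube 0 M) x y) (hxj : x j = -M) (hyj : y j = M)
    (ha : a ∈ cube 0 M ∧ ξ a = true) (hab : ξ ∈ connEvent Adj (cube 0 M) a b)
    (hj : a j + M ≤ b j) : ξ ∈ connEvent Adj (cube 0 M) a x := by
  have haj := abs_le.1 (mem_cube.1 ha.1 j)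
  have hbj := abs_le.1 (mem_cube.1 (mem_of_mem_connEvent ha hab).1 j)
  simp only [Pi.zero_apply, sub_zero] at haj hbj
  by_contra hax
  have hlower {z : Fin d → ℤ} (hz : z ∈ cube 0 M) (hzj : z j ≤ a j + M) :
      z ∈ slab M j (-M) (a j + M) := by
    rw [cube_zero_eq_slab _ j, mem_slab] at hz
    exact mem_slab.2 ⟨hz.1, hz.2.1, hzj⟩
  have hsub : slab M j (-M) (a j + M) ⊆ cube 0 M := by
    rw [cube_zero_eq_slab _ j]
    exact slab_subset_slab le_rfl (by omega)
  have hreach {z w : Fin d → ℤ} (hz : z ∈ cube 0 M) (hzj : z j ≤ a j) (hw : a j + M ≤ w j)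
      (hzw : ξ ∈ connEvent Adj (cube 0 M) z w) : (topReach M j (a j + M) z ξ).Nonempty :=
    topReach_nonempty (hlower hz (by omega)) hw (cube_zero_eq_slab M j ▸ hzw)
  exact hξ ⟨j, a, ha.1, x, hx.1, ⟨by omega, by omega⟩, ⟨ha.2, hx.2⟩,
    ⟨hreach ha.1 le_rfl hj hab, hreach hx.1 (by omega) (by omega) hxy⟩,
    fun h => hax (connEvent_mono hsub h)⟩

lemma specialEvent_of_conn (hd : 0 < d) (hM : 0 < M) (hx : x ∈ cube 0 M ∧ ξ x = true)
    (hface : ∀ i, ∀ ε : ℤ, (ε = 1 ∨ ε = -1) →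
      ∃ w, ξ ∈ connEvent Adj (cube 0 M) x w ∧ w i = ε * M)
    (hunique : ∀ a b i, (a ∈ cube 0 M ∧ ξ a = true) → ξ ∈ connEvent Adj (cube 0 M) a b →
      a i + M ≤ b i → ξ ∈ connEvent Adj (cube 0 M) a x) :
    SpecialEvent d 0 M ξ := by
  have hiff {z w : Fin d → ℤ} (hz : z ∈ cube 0 M ∧ ξ z = true) :
      openConnIn d (box 0 M) ξ z w ↔ ξ ∈ connEvent Adj (cube 0 M) z w := by
    rw [box_zero_eq_cube, openConnIn_iff hz]
  refine ⟨{w | openConnIn d (box 0 M) ξ x w}, ⟨x, box_zero_eq_cube M ▸ hx.1, hx.2, rfl⟩,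
    ?_, ?_, ?_⟩
  · obtain ⟨u, hu, hui⟩ := hface ⟨0, hd⟩ 1 (.inl rfl)
    obtain ⟨v, hv, hvi⟩ := hface ⟨0, hd⟩ (-1) (.inr rfl)
    refine ⟨u, (hiff hx).2 hu, v, (hiff hx).2 hv, (le_normInf_sub_iff hM).2 ⟨⟨0, hd⟩, ?_⟩⟩
    rw [hui, hvi]
    exact le_abs.2 (.inl (by omega))
  · intro i ε hε
    obtain ⟨w, hw, hwi⟩ := hface i ε hε
    exact ⟨w, (hiff hx).2 hw, by simpa using hwi⟩
  · rintro C' ⟨z, hz, hξz, rfl⟩ ⟨u, hu, v, hv, huv⟩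
    have hz' : z ∈ cube 0 M ∧ ξ z = true := ⟨box_zero_eq_cube M ▸ hz, hξz⟩
    have hzu : ξ ∈ connEvent Adj (cube 0 M) z u := (hiff hz').1 hu
    have hzv : ξ ∈ connEvent Adj (cube 0 M) z v := (hiff hz').1 hv
    have hzx : ξ ∈ connEvent Adj (cube 0 M) z x := by
      obtain ⟨i, hi⟩ := (le_normInf_sub_iff hM).1 huv
      rcases le_abs'.1 hi with hle | hle
      · exact Conn.trans hzu
          (hunique u v i (mem_of_mem_connEvent hz' hzu) ((mem_connEvent_symm hz' hzu).trans hzv)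
            (by omega))
      · exact Conn.trans hzv
          (hunique v u i (mem_of_mem_connEvent hz' hzv) ((mem_connEvent_symm hz' hzv).trans hzu)
            (by omega))
    ext w
    simp only [Set.mem_ofPred_eq, hiff hz', hiff hx]
    exact ⟨(mem_connEvent_symm hz' hzx).trans, hzx.trans⟩

/- Two crossings cross in a common direction, because `d ≥ 3`, and every cluster of large diameter
meets a crossing in the direction in which it is large. -/
lemma specialEvent_of_crossEvent (hd : 2 < d) (hM : 0 < M) (hξ : ξ ∉ unmergedEvent d M)
    (hcross : ∀ k, ξ ∈ crossEvent M k) : SpecialEvent d 0 M ξ := by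
  choose X Y hX hXY hface using hcross
  let k₀ : Fin d := ⟨0, by omega⟩
  have hmerge {a b : Fin d → ℤ} {j : Fin d} (k : Fin d) (hjk : j ≠ k)
      (ha : a ∈ cube 0 M ∧ ξ a = true) (hab : ξ ∈ connEvent Adj (cube 0 M) a b)
      (hj : a j + M ≤ b j) : ξ ∈ connEvent Adj (cube 0 M) a (X k) :=
    mem_connEvent_of_crossing hξ (hX k) (hXY k) (hface k j hjk).1 (hface k j hjk).2 ha hab hj
  have hXX (k k' : Fin d) : ξ ∈ connEvent Adj (cube 0 M) (X k) (X k') := by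
    obtain ⟨j, hjk, hjk'⟩ := Fin.exists_ne_and_ne_of_two_lt k k' hd
    refine hmerge k' hjk' (hX k) (hXY k) ?_
    have := hface k j hjk
    omega
  refine specialEvent_of_conn (by omega) hM (hX k₀) (fun i ε hε => ?_) fun a b i ha hab hi => ?_
  all_goals obtain ⟨k, hk, -⟩ := Fin.exists_ne_and_ne_of_two_lt i i hd
  · rcases hε with rfl | rfl
    · exact ⟨Y k, Conn.trans (hXX k₀ k) (hXY k), by simp [(hface k i hk.symm).2]⟩
    · exact ⟨X k, hXX k₀ k, by simp [(hface k i hk.symm).1]⟩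
  · exact Conn.trans (hmerge k hk.symm ha hab hi) (hXX k k₀)

end Crossing

/-! ### The probability of the special event -/

section Limit

variable {d M : ℕ} {α : unitInterval} {k₀ : ℕ} {c : ℝ}

lemma ncard_cube_zero (d M : ℕ) : (cube (0 : Fin d → ℤ) M).ncard = (2 * M + 1) ^ d := by
  have hside : ((M : ℤ) + 1 - -M).toNat = 2 * M + 1 := by omega
  simp only [cube, ← Finset.coe_Icc, Set.ncard_coe_finset, Pi.card_Icc, Int.card_Icc,
    Pi.zero_apply, zero_sub, zero_add, hside, Finset.prod_const, Finset.card_univ, Fintype.card_fin]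

lemma prob_splitEvent_add_self_le (h : SlabConnProbGE d α k₀ c) (hc : c ≤ 1) (hM : k₀ ≤ M)
    {j : Fin d} {u v : Fin d → ℤ} (hu : u ∈ cube 0 M) (hv : v ∈ cube 0 M) (hvu : v j ≤ u j) :
    ℙ[fun _ => α] (splitEvent M j u v (u j + M)) ≤ (1 - α * c) ^ (M / (k₀ + 1)) := by
  set n := M / (k₀ + 1)
  rw [cube_zero_eq_slab _ j, mem_slab] at hu hv
  have hn : (n : ℤ) * (k₀ + 1) ≤ M := mod_cast Nat.div_mul_le_self M (k₀ + 1)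
  have hu' : u ∈ slab M j (-M) (u j) := mem_slab.2 ⟨hu.1, hu.2.1, le_rfl⟩
  have hv' : v ∈ slab M j (-M) (u j) := mem_slab.2 ⟨hv.1, hv.2.1, hvu⟩
  have hsub : slab M j (-M) (u j) ⊆ slab M j (-M) (u j + n * (k₀ + 1)) :=
    slab_subset_slab le_rfl (le_add_of_nonneg_right (by positivity))
  exact (measureReal_mono (splitEvent_anti (hsub hu') (hsub hv') (by omega))).trans
    (prob_splitEvent_le h hc (mod_cast hM) hu' hv' n)

lemma prob_unmergedEvent_le (h : SlabConnProbGE d α k₀ c) (hc : c ≤ 1) (hM : k₀ ≤ M) :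
    ℙ[fun _ => α] (unmergedEvent d M) ≤
      d * (2 * M + 1) ^ (2 * d) * (1 - α * c) ^ (M / (k₀ + 1)) := by
  classical
  set r := (1 - α * c) ^ (M / (k₀ + 1))
  let B : Finset (Fin d → ℤ) := (finite_cube 0 (M : ℤ)).toFinset
  let T : Finset (Fin d × (Fin d → ℤ) × (Fin d → ℤ)) :=
    {q ∈ Finset.univ ×ˢ B ×ˢ B | q.2.2 q.1 ≤ q.2.1 q.1 ∧ q.2.1 q.1 ≤ 0}
  have hr : 0 ≤ r := pow_nonneg (sub_nonneg.2 ((mul_le_of_le_one_right α.2.1 hc).trans α.2.2)) _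
  have hB : B.card = (2 * M + 1) ^ d := by
    rw [← Set.ncard_eq_toFinset_card _ (finite_cube 0 (M : ℤ)), ncard_cube_zero]
  have hT : (T.card : ℝ) ≤ d * (2 * M + 1) ^ (2 * d) := by
    refine (Nat.cast_le.2 (Finset.card_filter_le _ _)).trans_eq ?_
    simp only [Finset.card_product, Finset.card_univ, Fintype.card_fin, hB]
    push_cast
    ring
  have hsplit (q) (hq : q ∈ T) :
      ℙ[fun _ => α] (splitEvent M q.1 q.2.1 q.2.2 (q.2.1 q.1 + M)) ≤ r := by
    simp only [T, B, Finset.mem_filter, Finset.mem_product, Set.Finite.mem_toFinset] at hq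
    exact prob_splitEvent_add_self_le h hc hM hq.1.2.1 hq.1.2.2 hq.2.1
  have hunion : unmergedEvent d M ⊆
      ⋃ q ∈ T, splitEvent M q.1 q.2.1 q.2.2 (q.2.1 q.1 + M) := by
    rintro ξ ⟨j, u, hu, v, hv, hle, hξ⟩
    refine Set.mem_biUnion (x := (j, u, v)) ?_ hξ
    simpa [T, B, hu, hv] using hle
  calc ℙ[fun _ => α] (unmergedEvent d M)
      ≤ ∑ q ∈ T, ℙ[fun _ => α] (splitEvent M q.1 q.2.1 q.2.2 (q.2.1 q.1 + M)) :=
        (measureReal_mono hunion (measure_ne_top _ _)).trans (measureReal_biUnion_finset_le _ _)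
    _ ≤ T.card * r := (Finset.sum_le_card_nsmul _ _ r hsplit).trans_eq (nsmul_eq_mul _ _)
    _ ≤ d * (2 * M + 1) ^ (2 * d) * r := mul_le_mul_of_nonneg_right hT hr

/- Each of the disjoint slabs of height `k₀` stacked along direction `k` contributes an independent
chance of joining two opposite corners. -/
lemma prob_compl_crossEvent_le (h : SlabConnProbGE d α k₀ c) (hM : k₀ ≤ M) (k : Fin d) :
    ℙ[fun _ => α] (crossEvent M k)ᶜ ≤ (1 - α * c) ^ (M / (k₀ + 1)) := by
  set n := M / (k₀ + 1)
  let lev (i : ℕ) : ℤ := -M + i * (k₀ + 1)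
  let S (i : ℕ) : Set (Fin d → ℤ) := slab M k (lev i) (lev i + k₀)
  let x (i : ℕ) : Fin d → ℤ := Function.update (fun _ => -M) k (lev i)
  let y (i : ℕ) : Fin d → ℤ := Function.update (fun _ => M) k (lev i)
  let E (i : ℕ) : Set ((Fin d → ℤ) → Bool) := (linkEvent (S i) (x i) (y i))ᶜ
  have hxS (i : ℕ) : x i ∈ S i := mem_slab.2
    ⟨fun l hl => by simp [x, hl], by simp [x], by simp [x]⟩
  have hyS (i : ℕ) : y i ∈ S i := mem_slab.2
    ⟨fun l hl => by simp [y, hl], by simp [y], by simp [y]⟩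
  have hlev {i i' : ℕ} (hi : i < i') : lev i + k₀ < lev i' := by
    have : ((i : ℤ) + 1) * (k₀ + 1) ≤ i' * (k₀ + 1) :=
      mul_le_mul_of_nonneg_right (mod_cast hi) (by positivity)
    simp only [lev]
    linarith
  have hcube {i : ℕ} (hi : i < n) : S i ⊆ cube 0 M := by
    have htop : ((i + 1 : ℕ) : ℤ) * (k₀ + 1) ≤ M := mod_cast
      (Nat.mul_le_mul_right _ hi).trans (Nat.div_mul_le_self M (k₀ + 1))
    push_cast at htop
    rw [cube_zero_eq_slab _ k]
    exact slab_subset_slab (le_add_of_nonneg_right (by positivity)) (by simp only [lev]; linarith)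
  have hsub : (crossEvent M k)ᶜ ⊆
      ⋂ i ∈ Finset.range n, E i := by
    refine fun ξ hξ => Set.mem_iInter₂.2 fun i hi ⟨hopen, hconn⟩ => hξ ?_
    have hS := hcube (Finset.mem_range.1 hi)
    exact ⟨x i, y i, ⟨hS (hxS i), hopen _ rfl⟩, connEvent_mono hS hconn,
      fun l hl => ⟨Function.update_of_ne hl .., Function.update_of_ne hl ..⟩⟩
  calc ℙ[fun _ => α] (crossEvent M k)ᶜ
      ≤ ℙ[fun _ => α] (⋂ i ∈ Finset.range n, E i) :=
        measureReal_mono hsub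
    _ = ∏ i ∈ Finset.range n, ℙ[fun _ => α] (E i) :=
        prob_biInter_of_pairwiseDisjoint _ (fun _ _ => finite_slab)
          (fun i _ => (determinedBy_linkEvent (hxS i)).compl) fun i _ i' _ hne =>
            (lt_or_gt_of_ne hne).elim (fun hi => disjoint_slab (hlev hi))
              fun hi => (disjoint_slab (hlev hi)).symm
    _ ≤ ∏ _i ∈ Finset.range n, (1 - (α : ℝ) * c) :=
        Finset.prod_le_prod (fun _ _ => measureReal_nonneg) fun i _ =>
          prob_compl_linkEvent_slab_le h (mod_cast hM) (hxS i) (hyS i) (by simp [x, y])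
    _ = (1 - α * c) ^ n := by rw [Finset.prod_const, Finset.card_range]

lemma one_sub_le_prob_specialEvent (h : SlabConnProbGE d α k₀ c) (hd : 2 < d) (hc : c ≤ 1)
    (hM : k₀ ≤ M) (hM₀ : 0 < M) :
    1 - 2 * d * ((2 * M + 1) ^ (2 * d) * (1 - (α : ℝ) * c) ^ (M / (k₀ + 1))) ≤
      ℙ[fun _ => α] {ξ | SpecialEvent d 0 M ξ} := by
  set r := (1 - α * c) ^ (M / (k₀ + 1))
  have hr : 0 ≤ r := pow_nonneg (sub_nonneg.2 ((mul_le_of_le_one_right α.2.1 hc).trans α.2.2)) _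
  let bad := unmergedEvent d M ∪ ⋃ k, (crossEvent M k)ᶜ
  have hgood : badᶜ ⊆ {ξ | SpecialEvent d 0 M ξ} := fun ξ hξ => by
    simp only [bad, Set.compl_union, Set.compl_iUnion, compl_compl] at hξ
    exact specialEvent_of_crossEvent hd hM₀ hξ.1 (Set.mem_iInter.1 hξ.2)
  have hcross : ℙ[fun _ => α] (⋃ k : Fin d, (crossEvent M k)ᶜ) ≤ d * r := by
    refine (measureReal_iUnion_fintype_le _).trans
      ((Finset.sum_le_card_nsmul _ _ r fun k _ => prob_compl_crossEvent_le h hM k).trans_eq ?_)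
    rw [Finset.card_univ, Fintype.card_fin, nsmul_eq_mul]
  have hbad : ℙ[fun _ => α] bad ≤ 2 * d * ((2 * M + 1) ^ (2 * d) * r) := calc
    ℙ[fun _ => α] bad ≤ d * (2 * M + 1) ^ (2 * d) * r + d * r :=
      (measureReal_union_le _ _).trans (add_le_add (prob_unmergedEvent_le h hc hM) hcross)
    _ ≤ d * (2 * M + 1) ^ (2 * d) * r + d * ((2 * M + 1) ^ (2 * d) * r) := by
      gcongr
      exact le_mul_of_one_le_left hr (one_le_pow₀ (by linarith [M.cast_nonneg (α := ℝ)]))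
    _ = 2 * d * ((2 * M + 1) ^ (2 * d) * r) := by ring
  have hcompl : 1 ≤ ℙ[fun _ => α] bad + ℙ[fun _ => α] badᶜ := one_le_prob_add_prob_compl bad
  have hmono : ℙ[fun _ => α] badᶜ ≤ ℙ[fun _ => α] {ξ | SpecialEvent d 0 M ξ} :=
    measureReal_mono hgood
  linarith

open Filter Topology in
lemma tendsto_pow_mul_pow_div (n K : ℕ) {r : ℝ} (hr₀ : 0 < r) (hr₁ : r < 1) :
    Tendsto (fun M : ℕ => (2 * M + 1 : ℝ) ^ n * r ^ (M / (K + 1))) atTop (𝓝 0) := by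
  have hlim : Tendsto (fun t : ℕ => (2 * (K + 1) : ℝ) ^ n * r⁻¹ *
      (((t + 1 : ℕ) : ℝ) ^ n * r ^ (t + 1))) atTop (𝓝 0) := by
    have := tendsto_pow_const_mul_const_pow_of_abs_lt_one n
      (show |r| < 1 by rwa [abs_of_pos hr₀])
    simpa only [mul_zero] using ((tendsto_add_atTop_iff_nat 1).2 this).const_mul _
  refine squeeze_zero (fun M => by positivity) (fun M => ?_)
    (hlim.comp (Nat.tendsto_div_const_atTop K.succ_ne_zero))
  have hM : (2 * M + 1 : ℝ) ≤ 2 * (K + 1) * (M / (K + 1) + 1 : ℕ) := by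
    have hlt : M + 1 ≤ (K + 1) * (M / (K + 1) + 1) := Nat.lt_mul_div_succ M K.succ_pos
    norm_cast
    rw [mul_assoc]
    omega
  calc (2 * M + 1 : ℝ) ^ n * r ^ (M / (K + 1))
      ≤ (2 * (K + 1) * (M / (K + 1) + 1 : ℕ)) ^ n * r ^ (M / (K + 1)) := by gcongr
    _ = (2 * (K + 1)) ^ n * r⁻¹ * ((M / (K + 1) + 1 : ℕ) ^ n * r ^ (M / (K + 1) + 1)) := by
      rw [mul_pow, pow_succ]
      field_simp

end Limit

end Percolation

theorem tendsto_special_event_prob_one (d : ℕ) (hd : 3 ≤ d)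
    (α : ℝ) (hα : α ∈ Set.Ioo (0 : ℝ) 1) (hpc : pcrit d < α)
    (μ : Measure ((Fin d → ℤ) → Bool)) (hμ : IsBernoulliProduct d α μ) :
    Filter.Tendsto (fun M : ℕ => μ {ξ | SpecialEvent d 0 M ξ})
      Filter.atTop (nhds 1) := by
  obtain ⟨k, rfl⟩ : ∃ k, d = k + 1 := ⟨d - 1, by omega⟩
  have : Nontrivial (Fin k) := Fin.nontrivial_iff_two_le.2 (by omega)
  have := hμ.1
  let a : unitInterval := ⟨α, hα.1.le, hα.2.le⟩
  obtain rfl : μ = Percolation.bernoulliProd fun _ => a :=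
    Percolation.eq_bernoulliProd_of_cylinder hμ.2
  obtain ⟨k₀, c, hc₀, hc₁, hslab⟩ :=
    Percolation.exists_slabConnProbGE (α := a) hα.1 hα.2 hpc
  have hr₀ : 0 < 1 - α * c := sub_pos.2 (by nlinarith [hα.1, hα.2])
  have hr₁ : 1 - α * c < 1 := sub_lt_self 1 (mul_pos hα.1 hc₀)
  have hlim := (ENNReal.continuous_ofReal.tendsto _).comp <|
    ((Percolation.tendsto_pow_mul_pow_div (2 * (k + 1)) k₀ hr₀ hr₁).const_mul
      (2 * (k + 1 : ℕ) : ℝ)).const_sub 1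
  rw [mul_zero, sub_zero, ENNReal.ofReal_one] at hlim
  refine tendsto_of_tendsto_of_tendsto_of_le_of_le' hlim tendsto_const_nhds ?_
    (.of_forall fun _ => prob_le_one)
  filter_upwards [Filter.eventually_ge_atTop (k₀ + 1)] with M hM
  exact ENNReal.ofReal_le_of_le_toReal
    (Percolation.one_sub_le_prob_specialEvent hslab (by omega) hc₁ (by omega) (by omega))
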